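/- arXiv:1308.5373 — 12 statements merged into one kernel-verified Lean document; each statement's English description precedes it below -/
import Mathlib

section
/- Let p be an odd prime, let m be odd, and let h be a positive integer with gcd(m,h) = 1. Set q = p^m and for (a,b) ∈ GF(q)² define R(a,b) = Σ_{x∈GF(q)} χ(a x^{p^h+1} + b x²). Then, as (a,b) runs through GF(q)², the sum S(a,b) = Σ_{y∈GF(p)*} ( R(ya, yb) + R(−ya, yb) ) takes the value 2(p−1)p^m for exactly 1 pair (a,b); the value (p−1)p^{(m+1)/2} for exactly (p^{m−1}+p^{(m−1)/2})(p^m−1) pairs; the value 0 for exactly (p^m−2p^{m−1}+1)(p^m−1) pairs; and the value −(p−1)p^{(m+1)/2} for exactly (p^{m−1}−p^{(m−1)/2})(p^m−1) pairs; and S(a,b) takes no other values. -/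
/-- The canonical additive character of a finite field `F` of characteristic `p`:
`χ(x) = exp(2π√(-1)·Tr(x)/p)`, where `Tr` is the absolute trace `F → GF(p)`. -/
noncomputable def canChar (p : ℕ) (F : Type*) [Field F] [Algebra (ZMod p) F] (x : F) : ℂ :=
  Complex.exp (2 * Real.pi * Complex.I * ((Algebra.trace (ZMod p) F x).val : ℂ) / (p : ℂ))

section helpers
open Finset

section part1
variable {p : ℕ} [Fact p.Prime]

noncomputable def gS (p : ℕ) [Fact p.Prime] (c : ZMod p) : ℂ := ∑ t : ZMod p, ZMod.stdAddChar (c * (t * t))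

noncomputable def qc (p : ℕ) [Fact p.Prime] : MulChar (ZMod p) ℂ := (quadraticChar (ZMod p)).ringHomComp (Int.castRingHom ℂ)

lemma rc_ne (hp : Odd p) : ringChar (ZMod p) ≠ 2 := by
  rw [ZMod.ringChar_zmod_n]; rintro rfl; exact absurd hp (by decide)

lemma qc_ne (hp : Odd p) : qc p ≠ 1 := by
  have := quadraticChar_ne_one (rc_ne hp)
  intro h
  apply this
  apply MulChar.ext
  intro a
  have h2 := congrArg (fun f => f (a : ZMod p)) h
  simp only [qc, MulChar.ringHomComp_apply, MulChar.one_apply_coe, eq_intCast] at h2 ⊢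
  exact_mod_cast h2

lemma qc_quad : (qc p).IsQuadratic := (quadraticChar_isQuadratic (ZMod p)).comp _

lemma gS_zero : gS p 0 = p := by
  simp [gS]

lemma qc_sq {c : ZMod p} (hc : c ≠ 0) : qc p c ^ 2 = 1 := by
  have := quadraticChar_sq_one hc
  simp only [qc, MulChar.ringHomComp_apply, eq_intCast]
  exact_mod_cast this

lemma gS_eq (hp : Odd p) {c : ZMod p} (hc : c ≠ 0) :
    gS p c = qc p c * gaussSum (qc p) ZMod.stdAddChar := by
  have h1 : gS p c = ∑ s : ZMod p, (1 + qc p s) * ZMod.stdAddChar (c * s) := by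
    unfold gS
    rw [← Finset.sum_fiberwise (s := univ) (g := fun t : ZMod p => t * t)]
    refine Finset.sum_congr rfl fun s _ => ?_
    have h2 := quadraticChar_card_sqrts (rc_ne hp) s
    have h3 : ∑ i with i * i = s, (ZMod.stdAddChar (c * (i * i)) : ℂ) = ∑ i : ZMod p with i * i = s, ZMod.stdAddChar (c * s) := by
      refine Finset.sum_congr rfl fun i hi => ?_
      rw [(Finset.mem_filter.1 hi).2]
    rw [h3, Finset.sum_const, nsmul_eq_mul]
    congr 1
    have h4 : (filter (fun i : ZMod p => i * i = s) univ) = {x : ZMod p | x ^ 2 = s}.toFinset := by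
      ext; simp [sq]
    rw [h4]
    have h5 := congrArg (Int.cast : ℤ → ℂ) h2
    push_cast at h5
    rw [h5, add_comm]
    simp [qc]
  rw [h1]
  simp only [add_mul, one_mul, Finset.sum_add_distrib]
  have h6 : ∑ s : ZMod p, (ZMod.stdAddChar (c * s) : ℂ) = 0 := by
    have := AddChar.sum_mulShift c (ZMod.isPrimitive_stdAddChar p)
    simp only [if_neg hc, Nat.cast_zero] at this
    simpa only [mul_comm c] using this
  rw [h6, zero_add]
  have h7 := gaussSum_mulShift (qc p) ZMod.stdAddChar (Units.mk0 c hc)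
  rw [← h7]
  simp only [gaussSum, Units.val_mk0, AddChar.mulShift_apply]
  rw [← mul_assoc, ← sq, qc_sq hc, one_mul]

lemma g_sq (hp : Odd p) : (gaussSum (qc p) ZMod.stdAddChar)^2 = qc p (-1) * p := by
  have := gaussSum_sq (qc_ne hp) qc_quad (ZMod.isPrimitive_stdAddChar p)
  rwa [ZMod.card] at this

lemma sum_qc_pow_odd (hp : Odd p) {r : ℕ} (hr : Odd r) : ∑ y ∈ ({0}ᶜ : Finset (ZMod p)), qc p y ^ r = 0 := by
  have h1 : ∑ y : ZMod p, qc p y = 0 := MulChar.sum_eq_zero_of_ne_one (qc_ne hp)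
  rw [← h1, ← Finset.sum_compl_add_sum {0}]
  simp only [Finset.sum_singleton, MulChar.map_zero, add_zero]
  refine Finset.sum_congr rfl fun y hy => ?_
  obtain ⟨k, rfl⟩ := hr
  rw [pow_succ, pow_mul, qc_sq (by simpa using hy)]; simp

lemma sum_qc_pow_even  {r : ℕ} (hr : Even r) : ∑ y ∈ ({0}ᶜ : Finset (ZMod p)), qc p y ^ r = (p : ℂ) - 1 := by
  have : ∀ y ∈ ({0}ᶜ : Finset (ZMod p)), qc p y ^ r = 1 := by
    intro y hy
    obtain ⟨k, rfl⟩ := hr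
    rw [← two_mul, pow_mul, qc_sq (by simpa using hy), one_pow]
  rw [Finset.sum_congr rfl this]
  simp only [sum_const, card_compl, ZMod.card, card_singleton, nsmul_eq_mul, mul_one]
  rw [Nat.cast_sub (Fact.out : p.Prime).one_le]; simp

lemma quad_T (hp : Odd p) {n : ℕ} (w : Fin n → ZMod p) (d r : ℕ) (hd : #{i | w i = 0} = d)
    (hr : #{i | ¬ w i = 0} = r) (T : ℂ) (hT : T = ∑ y ∈ ({0}ᶜ : Finset (ZMod p)), ∏ i, gS p (y * w i)) :
    T = 0 ∨ (Even r ∧ T ^ 2 = ((p : ℂ) - 1) ^ 2 * (p : ℂ) ^ (2 * d + r)) := by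
  set G := gaussSum (qc p) ZMod.stdAddChar with hG
  set W := ∏ i with ¬ w i = 0, qc p (w i) with hW
  have hW2 : W ^ 2 = 1 := by
    rw [hW, ← Finset.prod_pow]
    apply Finset.prod_eq_one
    intro i hi
    exact qc_sq (Finset.mem_filter.1 hi).2
  have key : T = (∑ y ∈ ({0}ᶜ : Finset (ZMod p)), qc p y ^ r) * ((p : ℂ) ^ d * W * G ^ r) := by
    rw [hT, Finset.sum_mul]
    refine Finset.sum_congr rfl fun y hy => ?_
    have hy : y ≠ 0 := by simpa using hy
    rw [← Finset.prod_filter_mul_prod_filter_not univ (fun i => w i = 0)]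
    have e1 : ∏ i with w i = 0, gS p (y * w i) = (p : ℂ) ^ d := by
      rw [← hd, ← Finset.prod_const]
      refine Finset.prod_congr rfl fun i hi => ?_
      rw [(Finset.mem_filter.1 hi).2, mul_zero, gS_zero]
    have e2 : ∏ i with ¬ w i = 0, gS p (y * w i) = qc p y ^ r * W * G ^ r := by
      rw [← hr, hW, ← Finset.prod_const, ← Finset.prod_const, ← Finset.prod_mul_distrib, ← Finset.prod_mul_distrib]
      refine Finset.prod_congr rfl fun i hi => ?_
      rw [gS_eq hp (mul_ne_zero hy (Finset.mem_filter.1 hi).2), map_mul]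
    rw [e1, e2]; ring
  rcases Nat.even_or_odd r with h | h
  · right
    refine ⟨h, ?_⟩
    rw [key, sum_qc_pow_even h]
    have : (G ^ r) ^ 2 = (p : ℂ) ^ r := by
      rw [← pow_mul, mul_comm, pow_mul, hG, g_sq hp, mul_pow]
      obtain ⟨k, rfl⟩ := h
      rw [← two_mul, pow_mul, qc_sq (by simp), one_pow, one_mul]
    calc _ = ((p : ℂ) - 1) ^ 2 * (((p : ℂ) ^ d) ^ 2 * W ^ 2 * (G ^ r) ^ 2) := by ring
      _ = _ := by rw [hW2, this]; ring
  · left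
    rw [key, sum_qc_pow_odd hp h, zero_mul]

lemma std_sum {ι : Type*} (s : Finset ι) (f : ι → ZMod p) :
    (ZMod.stdAddChar (∑ i ∈ s, f i) : ℂ) = ∏ i ∈ s, ZMod.stdAddChar (f i) := by
  classical
  induction s using Finset.induction_on with
  | empty => simp
  | insert a s ha ih => rw [Finset.sum_insert ha, Finset.prod_insert ha, AddChar.map_add_eq_mul, ih]

lemma quad_sum {V : Type*} [AddCommGroup V] [Module (ZMod p) V] [Fintype V] {n : ℕ}
    (Q : QuadraticForm (ZMod p) V) (w : Fin n → ZMod p)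
    (e : Q.IsometryEquiv (QuadraticMap.weightedSumSquares (ZMod p) w)) (y : ZMod p) :
    ∑ x : V, (ZMod.stdAddChar (y * Q x) : ℂ) = ∏ i, gS p (y * w i) := by
  unfold gS
  rw [Fintype.prod_sum, ← e.toLinearEquiv.toEquiv.sum_comp]
  refine Finset.sum_congr rfl fun x _ => ?_
  have : Q x = ∑ i, w i * (e x i * e x i) := by
    rw [← e.map_app x, QuadraticMap.weightedSumSquares_apply]; rfl
  rw [this, Finset.mul_sum, std_sum]
  refine Finset.prod_congr rfl fun i _ => ?_
  rw [mul_assoc]; rfl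

end part1

set_option linter.unusedSectionVars false
section part2
variable {p : ℕ} [Fact p.Prime] {F : Type*} [Field F] [Fintype F] [Algebra (ZMod p) F]

noncomputable def Bf (σ : F ≃ₐ[ZMod p] F) (a b : F) : LinearMap.BilinMap (ZMod p) F (ZMod p) :=
  LinearMap.mk₂ (ZMod p) (fun x z => Algebra.trace (ZMod p) F (a * (σ x * z) + b * (x * z)))
    (by intro x y z; rw [← map_add]; congr 1; rw [map_add]; ring)
    (by intro c x z; rw [← map_smul]; congr 1; rw [map_smul]; simp only [Algebra.smul_def]; ring)
    (by intro x y z; rw [← map_add]; congr 1; ring)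
    (by intro c x z; rw [← map_smul]; congr 1; simp only [Algebra.smul_def]; ring)

noncomputable def Qf (σ : F ≃ₐ[ZMod p] F) (a b : F) : QuadraticForm (ZMod p) F :=
  (Bf σ a b).toQuadraticMap

lemma Qf_apply (σ : F ≃ₐ[ZMod p] F) (a b x : F) :
    Qf σ a b x = Algebra.trace (ZMod p) F (a * (σ x * x) + b * (x * x)) := rfl

lemma tr_nondeg {u : F} (h : ∀ z, Algebra.trace (ZMod p) F (u * z) = 0) : u = 0 :=
  (traceForm_nondegenerate (ZMod p) F).1 u (by simpa [Algebra.traceForm_apply] using h)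

lemma rad_eq (σ : F ≃ₐ[ZMod p] F) (a b x : F) (h : ∀ z, Qf σ a b (x + z) = Qf σ a b x + Qf σ a b z) :
    σ a * σ (σ x) + 2 * σ b * σ x + a * x = 0 := by
  have h1 : a * σ x + σ.symm (a * x) + 2 * b * x = 0 := by
    apply tr_nondeg (p := p)
    intro z
    have h2 := h z
    simp only [Qf_apply] at h2
    have h3 : Algebra.trace (ZMod p) F (σ.symm (a * x) * z) = Algebra.trace (ZMod p) F (a * x * σ z) := by
      rw [← Algebra.trace_eq_of_algEquiv σ (σ.symm (a * x) * z), map_mul, AlgEquiv.apply_symm_apply]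
    have e1 : (a * σ x + σ.symm (a * x) + 2 * b * x) * z = a * σ x * z + σ.symm (a * x) * z + 2 * b * x * z := by ring
    rw [e1, map_add, map_add, h3, ← map_add, ← map_add]
    have e2 : a * σ x * z + a * x * σ z + 2 * b * x * z =
      (a * (σ (x + z) * (x + z)) + b * ((x + z) * (x + z))) - ((a * (σ x * x) + b * (x * x)) + (a * (σ z * z) + b * (z * z))) := by
      rw [map_add]; ring
    rw [e2, map_sub, h2, map_add _ (a * (σ x * x) + b * (x * x)), sub_self]
  have h4 := congrArg σ h1
  simp only [map_add, map_mul, AlgEquiv.apply_symm_apply, map_zero, map_ofNat] at h4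
  linear_combination h4

/-- Solutions of the opposite radical equations cannot coexist. -/
lemma rad_disj (σ : F ≃ₐ[ZMod p] F) (H2 : ∀ c, σ c = -c → c = 0) (h20 : (2 : F) ≠ 0) (a b x y : F)
    (hab : ¬ (a = 0 ∧ b = 0)) (hx : x ≠ 0) (hy : y ≠ 0)
    (h1 : σ a * σ (σ x) + 2 * σ b * σ x + a * x = 0)
    (h2 : σ (-a) * σ (σ y) + 2 * σ b * σ y + (-a) * y = 0) : False := by
  have ha : a ≠ 0 := by
    rintro rfl
    simp [h20, hx] at h1
    exact hab ⟨rfl, h1⟩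
  rw [map_neg] at h2
  have h3 : σ (a * (x * σ y + y * σ x)) = -(a * (x * σ y + y * σ x)) := by
    simp only [map_mul, map_add]
    linear_combination σ y * h1 - σ x * h2
  have h4 := H2 _ h3
  have h5 : x * σ y + y * σ x = 0 := by simpa [ha] using h4
  have hsy : σ y ≠ 0 := by simpa using hy
  have h6 : σ (x / y) = -(x / y) := by
    rw [map_div₀]; field_simp; linear_combination h5
  have := H2 _ h6
  rw [div_eq_zero_iff] at this
  tauto

lemma rad_dim (σ : F ≃ₐ[ZMod p] F) (H1 : ∀ c, σ c = c → ∃ t : ZMod p, algebraMap (ZMod p) F t = c)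
    (h20 : (2 : F) ≠ 0) (a b : F)
    (hab : ¬ (a = 0 ∧ b = 0)) (v : Fin 3 → F) (hv : LinearIndependent (ZMod p) v)
    (h : ∀ i, σ a * σ (σ (v i)) + 2 * σ b * σ (v i) + a * v i = 0) : False := by
  have hv0 : v 0 ≠ 0 := hv.ne_zero 0
  have ha : a ≠ 0 := by
    rintro rfl
    have := h 0
    simp [h20, hv0] at this
    exact hab ⟨rfl, this⟩
  have hs0 : σ (v 0) ≠ 0 := by simpa using hv0
  have hW : ∀ i, ∃ t : ZMod p, algebraMap (ZMod p) F t = a * (v 0 * σ (v i) - v i * σ (v 0)) := by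
    intro i
    apply H1
    simp only [map_mul, map_sub]
    linear_combination σ (v 0) * h i - σ (v i) * h 0
  have hrep : ∀ z, v 0 * σ z - z * σ (v 0) = 0 → ∃ t : ZMod p, z = t • v 0 := by
    intro z hz
    obtain ⟨t, ht⟩ := H1 (z / v 0) (by rw [map_div₀]; field_simp; linear_combination hz)
    refine ⟨t, ?_⟩
    rw [Algebra.smul_def, ht]; field_simp
  rw [Fintype.linearIndependent_iff] at hv
  obtain ⟨c1, hc1⟩ := hW 1
  obtain ⟨c2, hc2⟩ := hW 2
  by_cases hc : c1 = 0
  · subst hc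
    rw [map_zero] at hc1
    obtain ⟨t, ht⟩ := hrep (v 1) (by simpa [ha] using hc1.symm)
    have := hv ![t, -1, 0] (by simp [Fin.sum_univ_three, ht]) 1
    simp at this
  · obtain ⟨t, ht⟩ := hrep (c2 • v 1 - c1 • v 2) (by
      apply mul_left_cancel₀ ha
      simp only [map_sub, map_smul]
      simp only [Algebra.smul_def, hc1, hc2]
      ring)
    have := hv ![t, -c2, c1] (by
      simp only [Fin.sum_univ_three, Matrix.cons_val_zero, Matrix.cons_val_one, Matrix.cons_val]
      rw [← ht]; module) 2
    simp [hc] at this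

noncomputable def Tf (σ : F ≃ₐ[ZMod p] F) (a b : F) : ℂ :=
  ∑ y ∈ ({0}ᶜ : Finset (ZMod p)), ∑ x : F, ZMod.stdAddChar (y * Qf σ a b x)

lemma weights_rad {n : ℕ} (Q : QuadraticForm (ZMod p) F) (w : Fin n → ZMod p)
    (e : Q.IsometryEquiv (QuadraticMap.weightedSumSquares (ZMod p) w)) (i : Fin n) (hi : w i = 0) (z : F) :
    Q (e.toLinearEquiv.symm (Pi.single i 1) + z) = Q (e.toLinearEquiv.symm (Pi.single i 1)) + Q z := by
  have h : ∀ x, Q x = ∑ i, w i * (e.toLinearEquiv x i * e.toLinearEquiv x i) := by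
    intro x
    rw [← e.map_app x, QuadraticMap.weightedSumSquares_apply]; rfl
  simp only [h, map_add, LinearEquiv.apply_symm_apply, ← Finset.sum_add_distrib]
  refine Finset.sum_congr rfl fun j _ => ?_
  by_cases hj : j = i
  · subst hj; simp [hi]
  · simp [hj]

lemma Tf_val (hp : Odd p) (σ : F ≃ₐ[ZMod p] F) (H1 : ∀ c, σ c = c → ∃ t : ZMod p, algebraMap (ZMod p) F t = c)
    (h20 : (2 : F) ≠ 0) {k : ℕ} (hF : Fintype.card F = p ^ (2 * k + 1)) (a b : F) (hab : ¬ (a = 0 ∧ b = 0)) :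
    Tf σ a b = 0 ∨ ((∃ x : F, x ≠ 0 ∧ σ a * σ (σ x) + 2 * σ b * σ x + a * x = 0) ∧
      Tf σ a b ^ 2 = (((p : ℂ) - 1) * (p : ℂ) ^ (k + 1)) ^ 2) := by
  have h2p : (2 : ZMod p) ≠ 0 := by
    intro h; apply h20
    have := congrArg (algebraMap (ZMod p) F) h
    rwa [map_ofNat, map_zero] at this
  have : Invertible (2 : ZMod p) := invertibleOfNonzero h2p
  obtain ⟨w, ⟨e⟩⟩ := (Qf σ a b).equivalent_weightedSumSquares
  have hn : Module.finrank (ZMod p) F = 2 * k + 1 := by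
    have h1 := Module.card_eq_pow_finrank (K := ZMod p) (V := F)
    rw [hF, ZMod.card] at h1
    exact (Nat.pow_right_injective (Fact.out : p.Prime).two_le h1).symm
  obtain h | ⟨hev, h⟩ := quad_T hp w _ _ rfl rfl (Tf σ a b) (by
    unfold Tf
    exact Finset.sum_congr rfl fun y _ => quad_sum _ w e y)
  · exact Or.inl h
  right
  have hsum := Finset.card_filter_add_card_filter_not (s := univ) (fun i => w i = 0)
  rw [Finset.card_univ, Fintype.card_fin] at hsum
  replace hsum := hsum.trans hn
  set d := #{i | w i = 0} with hd
  set r := #{i | ¬ w i = 0} with hr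
  have hrad : ∀ i, w i = 0 → σ a * σ (σ (e.toLinearEquiv.symm (Pi.single i 1))) + 2 * σ b * σ (e.toLinearEquiv.symm (Pi.single i 1)) + a * (e.toLinearEquiv.symm (Pi.single i 1)) = 0 :=
    fun i hi => rad_eq σ a b _ (weights_rad _ w e i hi)
  have hlin : LinearIndependent (ZMod p) (fun i => e.toLinearEquiv.symm (Pi.single i 1)) := by
    have := (Pi.basisFun (ZMod p) (Fin (Module.finrank (ZMod p) F))).linearIndependent.map' e.toLinearEquiv.symm.toLinearMap (LinearEquiv.ker _)
    convert! this using 2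
    simp
  have hd2 : d ≤ 2 := by
    by_contra hlt
    push Not at hlt
    rw [hd, Finset.two_lt_card_iff] at hlt
    obtain ⟨i, j, l, hi, hj, hl, hij, hil, hjl⟩ := hlt
    simp only [Finset.mem_filter, Finset.mem_univ, true_and] at hi hj hl
    have hinj : Function.Injective ![i, j, l] := by
      intro x y hxy
      fin_cases x <;> fin_cases y <;> simp_all
    refine rad_dim σ H1 h20 a b hab _ (hlin.comp ![i, j, l] hinj) ?_
    intro x
    apply hrad
    fin_cases x <;> simp_all
  have hd1 : d = 1 := by
    obtain ⟨s, hs⟩ := hev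
    omega
  constructor
  · have : 0 < d := by omega
    obtain ⟨i, hi⟩ := Finset.card_pos.1 this
    simp only [Finset.mem_filter, Finset.mem_univ, true_and] at hi
    exact ⟨_, hlin.ne_zero i, hrad i hi⟩
  · rw [h, mul_pow, ← pow_mul]
    congr 2
    omega

end part2

section part3
variable {p : ℕ} [Fact p.Prime] {F : Type*} [Field F] [Fintype F] [Algebra (ZMod p) F]

lemma orth [DecidableEq F] (u : F) : ∑ a : F, (ZMod.stdAddChar (Algebra.trace (ZMod p) F (a * u)) : ℂ) =
    if u = 0 then (Fintype.card F : ℂ) else 0 := by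
  let ψ : AddChar F ℂ := (ZMod.stdAddChar (N := p)).compAddMonoidHom (Algebra.trace (ZMod p) F).toAddMonoidHom
  have hψ : ψ ≠ 1 := by
    obtain ⟨a, ha⟩ : ∃ a : F, Algebra.trace (ZMod p) F (1 * a) ≠ 0 := by
      by_contra! h
      exact one_ne_zero (tr_nondeg (p := p) h)
    rw [one_mul] at ha
    refine AddChar.ne_one_iff.2 ⟨a, fun h => ha ?_⟩
    apply ZMod.injective_stdAddChar
    rw [AddChar.map_zero_eq_one]
    exact h
  have := AddChar.sum_mulShift u (AddChar.IsPrimitive.of_ne_one hψ)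
  rw [Nat.cast_ite, Nat.cast_zero] at this
  exact this

lemma orth2 [DecidableEq F] (u v : F) : ∑ ab : F × F, (ZMod.stdAddChar (Algebra.trace (ZMod p) F (ab.1 * u + ab.2 * v)) : ℂ) =
    if u = 0 ∧ v = 0 then (Fintype.card F : ℂ) ^ 2 else 0 := by
  simp only [map_add, AddChar.map_add_eq_mul]
  rw [Fintype.sum_prod_type]
  simp only [← Finset.mul_sum, ← Finset.sum_mul, orth]
  by_cases hu : u = 0 <;> by_cases hv : v = 0 <;> simp [hu, hv, sq]

noncomputable def Iset (p : ℕ) [Fact p.Prime] (F : Type*) [Fintype F] : Finset (ZMod p × F) := {0}ᶜ ×ˢ univ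

lemma Tf_eq (σ : F ≃ₐ[ZMod p] F) (a b : F) : Tf σ a b = ∑ i ∈ Iset p F,
    ZMod.stdAddChar (Algebra.trace (ZMod p) F (a * (i.1 • (σ i.2 * i.2)) + b * (i.1 • (i.2 * i.2)))) := by
  rw [Iset, Finset.sum_product]
  unfold Tf
  refine Finset.sum_congr rfl fun y _ => Finset.sum_congr rfl fun x _ => ?_
  rw [Qf_apply, ← smul_eq_mul, ← map_smul, smul_add, mul_smul_comm, mul_smul_comm]

lemma card_compl0 : #({0}ᶜ : Finset (ZMod p)) = p - 1 := by
  simp [card_compl, ZMod.card]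

lemma moment1 (σ : F ≃ₐ[ZMod p] F) :
    ∑ ab : F × F, Tf σ ab.1 ab.2 = ((p - 1 : ℕ) : ℂ) * (Fintype.card F : ℂ) ^ 2 := by
  classical
  simp only [Tf_eq]
  rw [Finset.sum_comm]
  simp only [orth2]
  rw [← Finset.sum_filter, Finset.sum_const, nsmul_eq_mul]
  congr 2
  rw [← card_compl0]
  have : (filter (fun i : ZMod p × F => i.1 • (σ i.2 * i.2) = 0 ∧ i.1 • (i.2 * i.2) = 0) (Iset p F)) = ({0}ᶜ : Finset (ZMod p)) ×ˢ ({0} : Finset F) := by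
    ext ⟨y, x⟩
    simp only [Iset, mem_filter, mem_product, mem_univ, and_true, mem_compl, mem_singleton]
    constructor
    · rintro ⟨hy, -, h⟩
      refine ⟨hy, ?_⟩
      simpa [hy] using h
    · rintro ⟨hy, rfl⟩
      simp [hy]
  rw [this, card_product, card_singleton, mul_one]

lemma count2 (σ : F ≃ₐ[ZMod p] F) (H1 : ∀ c, σ c = c → ∃ t : ZMod p, algebraMap (ZMod p) F t = c)
    [DecidableEq F] (i : ZMod p × F) (hi : i ∈ Iset p F) :
    #(filter (fun j : ZMod p × F => i.1 • (σ i.2 * i.2) + j.1 • (σ j.2 * j.2) = 0 ∧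
      i.1 • (i.2 * i.2) + j.1 • (j.2 * j.2) = 0) (Iset p F)) = p - 1 := by
  obtain ⟨y, x⟩ := i
  have hy : y ≠ 0 := by simpa [Iset] using hi
  by_cases hx : x = 0
  · subst hx
    rw [← card_compl0]
    have : (filter (fun j : ZMod p × F => y • (σ 0 * 0) + j.1 • (σ j.2 * j.2) = 0 ∧
      y • ((0:F) * 0) + j.1 • (j.2 * j.2) = 0) (Iset p F)) = ({0}ᶜ : Finset (ZMod p)) ×ˢ ({0} : Finset F) := by
      ext ⟨z, w⟩
      simp only [Iset, mem_filter, mem_product, mem_univ, and_true, mem_compl, mem_singleton]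
      constructor
      · rintro ⟨hz, -, h⟩
        refine ⟨hz, ?_⟩
        simpa [hz] using h
      · rintro ⟨hz, rfl⟩
        simp [hz]
    rw [this, card_product, card_singleton, mul_one]
  · rw [← card_compl0]
    symm
    refine Finset.card_bij (fun t _ => (-y / t ^ 2, t • x)) ?_ ?_ ?_
    · intro t ht
      have ht : t ≠ 0 := by simpa using ht
      simp only [Iset, mem_filter, mem_product, mem_univ, and_true, mem_compl, mem_singleton, map_smul]
      refine ⟨by simp [hy, ht], ?_, ?_⟩
      · rw [smul_mul_smul_comm, smul_smul, ← add_smul]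
        have : y + -y / t ^ 2 * (t * t) = 0 := by field_simp; ring
        rw [this, zero_smul]
      · rw [smul_mul_smul_comm, smul_smul, ← add_smul]
        have : y + -y / t ^ 2 * (t * t) = 0 := by field_simp; ring
        rw [this, zero_smul]
    · intro t _ s _ h
      exact smul_left_injective _ hx (Prod.ext_iff.1 h).2
    · rintro ⟨z, w⟩ h
      simp only [Iset, mem_filter, mem_product, mem_univ, and_true, mem_compl, mem_singleton] at h
      obtain ⟨hz, h1, h2⟩ := h
      have hw : w ≠ 0 := by
        rintro rfl
        simp [hx, hy] at h2
      have hz' : algebraMap (ZMod p) F z ≠ 0 := by simpa using hz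
      have hsx : σ x ≠ 0 := by simpa using hx
      obtain ⟨t, ht⟩ := H1 (w / x) (by
        rw [map_div₀, div_eq_div_iff hsx hx]
        simp only [Algebra.smul_def] at h1 h2
        apply mul_left_cancel₀ (mul_ne_zero (mul_ne_zero hz' hw) hx)
        linear_combination x ^ 2 * h1 - x * σ x * h2)
      have hwt : w = t • x := by rw [Algebra.smul_def, ht]; field_simp
      have ht0 : t ≠ 0 := by rintro rfl; simp at hwt; exact hw hwt
      refine ⟨t, by simpa using ht0, ?_⟩
      ext
      · simp only
        rw [hwt, smul_mul_smul_comm, smul_smul, ← add_smul] at h2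
        have h3 : y + z * (t * t) = 0 := by simpa [hx] using h2
        rw [div_eq_iff (pow_ne_zero 2 ht0)]
        linear_combination -h3
      · exact hwt.symm

lemma moment2 (σ : F ≃ₐ[ZMod p] F) (H1 : ∀ c, σ c = c → ∃ t : ZMod p, algebraMap (ZMod p) F t = c) :
    ∑ ab : F × F, Tf σ ab.1 ab.2 ^ 2 = ((p - 1 : ℕ) : ℂ) ^ 2 * (Fintype.card F : ℂ) ^ 3 := by
  classical
  simp only [Tf_eq, sq (∑ i ∈ Iset p F, _), Finset.sum_mul_sum]
  rw [Finset.sum_comm (s := (univ : Finset (F × F)))]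
  have : ∀ i ∈ Iset p F, ∑ ab : F × F, ∑ j ∈ Iset p F,
     (ZMod.stdAddChar (Algebra.trace (ZMod p) F (ab.1 * (i.1 • (σ i.2 * i.2)) + ab.2 * (i.1 • (i.2 * i.2)))) : ℂ) *
     ZMod.stdAddChar (Algebra.trace (ZMod p) F (ab.1 * (j.1 • (σ j.2 * j.2)) + ab.2 * (j.1 • (j.2 * j.2))))
      = ((p - 1 : ℕ) : ℂ) * (Fintype.card F : ℂ) ^ 2 := by
    intro i hi
    rw [Finset.sum_comm (s := (univ : Finset (F × F)))]
    simp only [← AddChar.map_add_eq_mul, ← map_add]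
    have e : ∀ (ab : F × F) (u v u' v' : F), ab.1 * u + ab.2 * v + (ab.1 * u' + ab.2 * v') =
      ab.1 * (u + u') + ab.2 * (v + v') := by intros; ring
    simp only [e, orth2]
    rw [← Finset.sum_filter, Finset.sum_const, nsmul_eq_mul, count2 σ H1 i hi]
  rw [Finset.sum_congr rfl this, Finset.sum_const, nsmul_eq_mul, Iset, card_product, card_compl0, Finset.card_univ]
  push_cast
  ring

lemma Tf_zero (σ : F ≃ₐ[ZMod p] F) : Tf σ 0 0 = ((p - 1 : ℕ) : ℂ) * (Fintype.card F : ℂ) := by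
  have h : ∀ x, Qf σ (0 : F) 0 x = 0 := by intro x; simp [Qf_apply]
  simp only [Tf, h, mul_zero, AddChar.map_zero_eq_one, Finset.sum_const, card_compl0, Finset.card_univ]
  simp

lemma count_fin {α : Type*} [Fintype α] [DecidableEq α] (S : α → ℂ) (z : α) (A V : ℂ) (hV : V ≠ 0) (hA0 : A ≠ 0)
    (hAV : A ≠ V) (hAV' : A ≠ -V) (hz : S z = A) (h : ∀ x, x ≠ z → S x = 0 ∨ S x = V ∨ S x = -V) :
    {x | S x = A}.ncard = 1 ∧
    ∑ x, S x = A + ({x | S x = V}.ncard : ℂ) * V - ({x | S x = -V}.ncard : ℂ) * V ∧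
    ∑ x, S x ^ 2 = A ^ 2 + ({x | S x = V}.ncard : ℂ) * V ^ 2 + ({x | S x = -V}.ncard : ℂ) * V ^ 2 ∧
    (Fintype.card α : ℂ) = 1 + ({x | S x = V}.ncard : ℂ) + ({x | S x = -V}.ncard : ℂ) + ({x | S x = 0}.ncard : ℂ) := by
  have hVV : V ≠ -V := by
    intro h; apply hV; exact self_eq_neg.1 h
  have hn : ∀ c : ℂ, {x | S x = c}.ncard = #{x | S x = c} := by
    intro c
    rw [← Set.ncard_coe_finset]; congr; ext; simp
  have hs : ∀ c d : ℂ, (#{x | S x = c} : ℂ) * d = ∑ x, if S x = c then d else 0 := by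
    intro c d
    rw [← Finset.sum_filter, Finset.sum_const, nsmul_eq_mul]
  have hs1 : ∀ c : ℂ, (#{x | S x = c} : ℂ) = ∑ x, if S x = c then 1 else 0 := by
    intro c; rw [← hs, mul_one]
  have hz1 : ∀ d : ℂ, d = ∑ x, if x = z then d else 0 := by intro d; simp
  refine ⟨?_, ?_, ?_, ?_⟩
  · rw [Set.ncard_eq_one]
    refine ⟨z, ?_⟩
    ext x
    simp only [Set.mem_ofPred_eq, Set.mem_singleton_iff]
    refine ⟨fun hx => ?_, fun hx => hx ▸ hz⟩
    by_contra hne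
    rcases h x hne with hc | hc | hc <;> rw [hx] at hc <;> contradiction
  · rw [hn, hn, hs, hs]
    nth_rw 1 [hz1 A]
    rw [← Finset.sum_add_distrib, ← Finset.sum_sub_distrib]
    refine Finset.sum_congr rfl fun x _ => ?_
    by_cases hx : x = z
    · subst hx; simp [hz, hAV, hAV']
    · rcases h x hx with hc | hc | hc <;> simp [hx, hc, hV, hV.symm, hVV, hVV.symm]
  · rw [hn, hn, hs, hs]
    nth_rw 1 [hz1 (A ^ 2)]
    rw [← Finset.sum_add_distrib, ← Finset.sum_add_distrib]
    refine Finset.sum_congr rfl fun x _ => ?_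
    by_cases hx : x = z
    · subst hx; simp [hz, hAV, hAV']
    · rcases h x hx with hc | hc | hc <;> simp [hx, hc, hV, hV.symm, hVV, hVV.symm]
  · rw [hn, hn, hn, hs1, hs1, hs1]
    nth_rw 1 [hz1 1]
    rw [← Finset.sum_add_distrib, ← Finset.sum_add_distrib, ← Finset.sum_add_distrib, ← Finset.card_univ, ← nsmul_one, ← Finset.sum_const]
    refine Finset.sum_congr rfl fun x _ => ?_
    by_cases hx : x = z
    · subst hx; simp [hz, hAV, hAV', hA0]
    · rcases h x hx with hc | hc | hc <;> simp [hx, hc, hV, hV.symm, hVV, hVV.symm]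

end part3

section part4
variable {p : ℕ} [Fact p.Prime] {F : Type*} [Field F] [Fintype F] [Algebra (ZMod p) F]

lemma frob_fix [CharP F p] {m n : ℕ} (hF : Fintype.card F = p ^ m) (hmn : Nat.gcd m n = 1) (c : F) (hc : c ^ p ^ n = c) :
    ∃ t : ZMod p, algebraMap (ZMod p) F t = c := by
  have h1 : Function.IsPeriodicPt (fun x : F => x ^ p) n c := by
    rw [Function.IsPeriodicPt, Function.IsFixedPt, pow_iterate]; exact hc
  have h2 : Function.IsPeriodicPt (fun x : F => x ^ p) m c := by
    rw [Function.IsPeriodicPt, Function.IsFixedPt, pow_iterate]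
    simp only
    rw [← hF, FiniteField.pow_card]
  have h3 := h2.gcd h1
  rw [hmn] at h3
  have h4 : c ^ p = c := h3
  have h5 := (Subfield.mem_bot_iff_pow_eq_self F p).2 h4
  obtain ⟨n, hn⟩ := (mem_bot_iff_intCast p F).1 h5
  exact ⟨(n : ZMod p), by rw [map_intCast, hn]⟩

lemma exists_sigma (h : ℕ) : ∃ σ : F ≃ₐ[ZMod p] F, ∀ x, σ x = x ^ p ^ h := by
  refine ⟨(FiniteField.frobeniusAlgEquivOfAlgebraic (ZMod p) F) ^ h, fun x => ?_⟩
  rw [AlgEquiv.coe_pow, FiniteField.coe_frobeniusAlgEquivOfAlgebraic_iterate, ZMod.card]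

lemma canChar_eq (x : F) : canChar p F x = ZMod.stdAddChar (Algebra.trace (ZMod p) F x) := by
  unfold canChar
  conv_rhs => rw [← ZMod.natCast_zmod_val (Algebra.trace (ZMod p) F x)]
  have := ZMod.stdAddChar_coe (N := p) ((Algebra.trace (ZMod p) F x).val : ℤ)
  push_cast at this
  rw [this]

end part4

end helpers

/-- value distribution of
`S(a,b) = Σ_{y ∈ GF(p)*} (R(ya, yb) + R(-ya, yb))` where
`R(a,b) = Σ_{x ∈ GF(q)} χ(a x^{p^h+1} + b x²)`, for `p` an odd prime, `m` odd,
`gcd(m,h) = 1`, `q = p^m`. -/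
theorem stmt1 {p : ℕ} [Fact p.Prime] (hp : Odd p) {m h : ℕ} (hm : Odd m) (hh : 0 < h)
    (hmh : Nat.gcd m h = 1)
    {F : Type*} [Field F] [Fintype F] [Algebra (ZMod p) F]
    (hF : Fintype.card F = p ^ m)
    (R : F → F → ℂ)
    (hR : R = fun a b => ∑ x : F, canChar p F (a * x ^ (p ^ h + 1) + b * x ^ 2))
    (S : F × F → ℂ)
    (hS : S = fun ab =>
      ∑ y ∈ ({0}ᶜ : Finset (ZMod p)),
        (R (algebraMap (ZMod p) F y * ab.1) (algebraMap (ZMod p) F y * ab.2) +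
          R (-(algebraMap (ZMod p) F y * ab.1)) (algebraMap (ZMod p) F y * ab.2))) :
    {ab : F × F | S ab = 2 * ((p : ℂ) - 1) * (p : ℂ) ^ m}.ncard = 1 ∧
    {ab : F × F | S ab = ((p : ℂ) - 1) * (p : ℂ) ^ ((m + 1) / 2)}.ncard =
      (p ^ (m - 1) + p ^ ((m - 1) / 2)) * (p ^ m - 1) ∧
    {ab : F × F | S ab = 0}.ncard = (p ^ m - 2 * p ^ (m - 1) + 1) * (p ^ m - 1) ∧
    {ab : F × F | S ab = -(((p : ℂ) - 1) * (p : ℂ) ^ ((m + 1) / 2))}.ncard =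
      (p ^ (m - 1) - p ^ ((m - 1) / 2)) * (p ^ m - 1) ∧
    ∀ ab : F × F,
      S ab = 2 * ((p : ℂ) - 1) * (p : ℂ) ^ m ∨
      S ab = ((p : ℂ) - 1) * (p : ℂ) ^ ((m + 1) / 2) ∨
      S ab = 0 ∨
      S ab = -(((p : ℂ) - 1) * (p : ℂ) ^ ((m + 1) / 2)) := by
  classical
  obtain ⟨σ, hσ⟩ := exists_sigma (p := p) (F := F) h
  have hpp : p.Prime := Fact.out
  have : CharP F p := charP_of_injective_algebraMap (algebraMap (ZMod p) F).injective p
  have hp3 : 3 ≤ p := by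
    rcases hpp.two_le.eq_or_lt with h | h
    · rw [← h] at hp; exact absurd hp (by decide)
    · exact h
  have h20 : (2 : F) ≠ 0 := by
    intro h0
    have h1 : ((2 : ℕ) : F) = 0 := by exact_mod_cast h0
    rw [CharP.cast_eq_zero_iff F p] at h1
    have := Nat.le_of_dvd (by norm_num) h1
    omega
  have H1 : ∀ c, σ c = c → ∃ t : ZMod p, algebraMap (ZMod p) F t = c := by
    intro c hc
    rw [hσ] at hc
    exact frob_fix hF hmh c hc
  have H2 : ∀ c, σ c = -c → c = 0 := by
    intro c hc
    have h1 : c ^ p ^ (2 * h) = c := by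
      have : σ (σ c) = c := by rw [hc, map_neg, hc, neg_neg]
      rw [hσ, hσ, ← pow_mul, ← pow_add, ← two_mul] at this
      exact this
    obtain ⟨t, rfl⟩ := frob_fix hF (Nat.Coprime.mul_right hm.coprime_two_right hmh) c h1
    rw [AlgEquiv.commutes] at hc
    have : 2 * algebraMap (ZMod p) F t = 0 := by linear_combination hc
    simpa [h20] using this
  obtain ⟨k, rfl⟩ := hm
  have e1 : (2 * k + 1 + 1) / 2 = k + 1 := by omega
  have e2 : 2 * k + 1 - 1 = 2 * k := by omega
  have e3 : 2 * k / 2 = k := by omega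
  rw [e2, e3, e1]
  have hRT : ∀ (y : ZMod p) (a b : F), R (algebraMap (ZMod p) F y * a) (algebraMap (ZMod p) F y * b) =
      ∑ x : F, ZMod.stdAddChar (y * Qf σ a b x) := by
    intro y a b
    rw [hR]
    refine Finset.sum_congr rfl fun x _ => ?_
    rw [canChar_eq, Qf_apply, ← smul_eq_mul y, ← map_smul, hσ, Algebra.smul_def]
    congr 2
    ring
  have hST : ∀ ab : F × F, S ab = Tf σ ab.1 ab.2 + Tf σ (-ab.1) ab.2 := by
    intro ab
    rw [hS]
    simp only
    rw [Finset.sum_add_distrib]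
    unfold Tf
    congr 1
    · exact Finset.sum_congr rfl fun y _ => hRT y _ _
    · refine Finset.sum_congr rfl fun y _ => ?_
      rw [← hRT, mul_neg]
  set V : ℂ := ((p : ℂ) - 1) * (p : ℂ) ^ (k + 1) with hVdef
  have hval := Tf_val hp σ H1 h20 hF
  have hprod : ∀ a b : F, ¬ (a = 0 ∧ b = 0) → Tf σ a b * Tf σ (-a) b = 0 := by
    intro a b hab
    rcases hval a b hab with h1 | ⟨⟨x, hx, hx'⟩, -⟩
    · rw [h1, zero_mul]
    rcases hval (-a) b (by simpa using hab) with h1 | ⟨⟨y, hy, hy'⟩, -⟩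
    · rw [h1, mul_zero]
    exact (rad_disj σ H2 h20 a b x y hab hx hy hx' hy').elim
  have hval' : ∀ a b : F, ¬ (a = 0 ∧ b = 0) → Tf σ a b = 0 ∨ Tf σ a b = V ∨ Tf σ a b = -V := by
    intro a b hab
    rcases hval a b hab with h1 | ⟨-, h1⟩
    · exact Or.inl h1
    · exact Or.inr (sq_eq_sq_iff_eq_or_eq_neg.1 h1)
  have hSval : ∀ ab : F × F, ab ≠ 0 → S ab = 0 ∨ S ab = V ∨ S ab = -V := by
    rintro ⟨a, b⟩ hab
    have hab' : ¬ (a = 0 ∧ b = 0) := by simpa [Prod.ext_iff] using hab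
    rw [hST]
    rcases mul_eq_zero.1 (hprod a b hab') with h1 | h1
    · simp only [h1, zero_add]
      exact hval' (-a) b (by simpa using hab')
    · simp only [h1, add_zero]
      exact hval' a b hab'
  have hp1 : ((p - 1 : ℕ) : ℂ) = (p : ℂ) - 1 := by rw [Nat.cast_sub hpp.one_le]; simp
  have hS0 : S 0 = 2 * ((p : ℂ) - 1) * (p : ℂ) ^ (2 * k + 1) := by
    rw [hST]
    simp only [Prod.fst_zero, Prod.snd_zero, neg_zero, Tf_zero, hF, hp1]
    push_cast; ring
  have hpos : (p : ℂ) ≠ 0 := by exact_mod_cast hpp.ne_zero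
  have hpos1 : (p : ℂ) - 1 ≠ 0 := by
    rw [← hp1]; exact_mod_cast (by omega : p - 1 ≠ 0)
  have hV0 : V ≠ 0 := mul_ne_zero hpos1 (pow_ne_zero _ hpos)
  have hA0 : 2 * ((p : ℂ) - 1) * (p : ℂ) ^ (2 * k + 1) ≠ 0 :=
    mul_ne_zero (mul_ne_zero two_ne_zero hpos1) (pow_ne_zero _ hpos)
  have hAV : 2 * ((p : ℂ) - 1) * (p : ℂ) ^ (2 * k + 1) = V * (2 * p ^ k : ℕ) := by
    rw [hVdef]; push_cast; ring
  have hP1 : 1 ≤ p ^ k := Nat.one_le_pow _ _ hpp.pos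
  have hAV1 : 2 * ((p : ℂ) - 1) * (p : ℂ) ^ (2 * k + 1) ≠ V := by
    rw [hAV]
    intro h0
    have h1 : ((2 * p ^ k : ℕ) : ℂ) = (1 : ℕ) := by
      apply mul_left_cancel₀ hV0; rw [h0]; simp
    have := Nat.cast_injective h1
    omega
  have hAV2 : 2 * ((p : ℂ) - 1) * (p : ℂ) ^ (2 * k + 1) ≠ -V := by
    rw [hAV]
    intro h0
    have h1 : ((2 * p ^ k + 1: ℕ) : ℂ) = (0 : ℕ) := by
      apply mul_left_cancel₀ hV0; push_cast at h0 ⊢; rw [mul_add, h0]; simp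
    have := Nat.cast_injective h1
    omega
  obtain ⟨c1, c2, c3, c4⟩ := count_fin S 0 _ V hV0 hA0 hAV1 hAV2 hS0 hSval
  have hneg : ∀ f : F → F → ℂ, ∑ ab : F × F, f (-ab.1) ab.2 = ∑ ab : F × F, f ab.1 ab.2 := by
    intro f
    exact ((Equiv.neg F).prodCongr (Equiv.refl F)).sum_comp (fun ab : F × F => f ab.1 ab.2)
  have m1 : ∑ ab, S ab = 2 * (((p : ℂ) - 1) * ((p : ℂ) ^ (2 * k + 1)) ^ 2) := by
    simp only [hST, Finset.sum_add_distrib]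
    rw [hneg, moment1, hp1, hF]
    push_cast; ring
  have m2 : ∑ ab, S ab ^ 2 = 2 * (((p : ℂ) - 1) ^ 2 * ((p : ℂ) ^ (2 * k + 1)) ^ 3) +
      2 * (((p : ℂ) - 1) * (p : ℂ) ^ (2 * k + 1)) ^ 2 := by
    have h1 : ∀ ab, S ab ^ 2 = Tf σ ab.1 ab.2 ^ 2 + Tf σ (-ab.1) ab.2 ^ 2 +
        if ab = 0 then 2 * (((p : ℂ) - 1) * (p : ℂ) ^ (2 * k + 1)) ^ 2 else 0 := by
      rintro ⟨a, b⟩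
      rw [hST]
      split_ifs with h0
      · obtain ⟨rfl, rfl⟩ := Prod.mk_eq_zero.1 h0
        simp only [neg_zero, Tf_zero, hF, hp1]
        push_cast; ring
      · have := hprod a b (by simpa [Prod.ext_iff] using h0)
        simp only
        linear_combination 2 * this
    simp only [h1, Finset.sum_add_distrib]
    rw [hneg (fun a b => Tf σ a b ^ 2), moment2 σ H1, hp1, hF]
    simp only [Finset.sum_ite_eq', Finset.mem_univ, if_true]
    push_cast; ring
  rw [m1] at c2
  rw [m2] at c3
  rw [Fintype.card_prod, hF] at c4
  set N1 := {x | S x = V}.ncard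
  set N2 := {x | S x = -V}.ncard
  set N0 := {x | S x = 0}.ncard
  push_cast at c4
  set P : ℂ := (p : ℂ) ^ k with hPdef
  have hP0 : P ≠ 0 := pow_ne_zero _ hpos
  have q1 : (p : ℂ) ^ (2 * k + 1) = P ^ 2 * p := by rw [hPdef]; ring
  have q2 : (p : ℂ) ^ (2 * k) = P ^ 2 := by rw [hPdef]; ring
  have q3 : V = ((p : ℂ) - 1) * (P * p) := by rw [hVdef, hPdef]; ring
  rw [q1] at c2 c3 c4
  rw [q3] at c2 c3
  have d1 : (N1 : ℂ) - N2 = 2 * P * (P ^ 2 * p - 1) := by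
    apply mul_left_cancel₀ (mul_ne_zero hpos1 (mul_ne_zero hP0 hpos))
    linear_combination -c2
  have d2 : (N1 : ℂ) + N2 = 2 * P ^ 2 * (P ^ 2 * p - 1) := by
    apply mul_left_cancel₀ (pow_ne_zero 2 (mul_ne_zero hpos1 (mul_ne_zero hP0 hpos)))
    linear_combination -c3
  have hQ1 : 1 ≤ p ^ (2 * k + 1) := Nat.one_le_pow _ _ hpp.pos
  have hQ2 : 2 * p ^ (2 * k) ≤ p ^ (2 * k + 1) := by
    rw [pow_succ, mul_comm]; exact Nat.mul_le_mul_left _ (by omega)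
  have hQ3 : p ^ k ≤ p ^ (2 * k) := Nat.pow_le_pow_right hpp.pos (by omega)
  refine ⟨c1, ?_, ?_, ?_, ?_⟩
  · apply Nat.cast_injective (R := ℂ)
    push_cast [Nat.cast_sub hQ1]
    rw [q1, q2]
    linear_combination (d1 + d2) / 2
  · apply Nat.cast_injective (R := ℂ)
    push_cast [Nat.cast_sub hQ1, Nat.cast_sub hQ2]
    rw [q1, q2]
    linear_combination -c4 - d2
  · apply Nat.cast_injective (R := ℂ)
    push_cast [Nat.cast_sub hQ1, Nat.cast_sub hQ3]
    rw [q1, q2]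
    linear_combination (d2 - d1) / 2
  · intro ab
    by_cases h0 : ab = 0
    · left; rw [h0, hS0]
    · rcases hSval ab h0 with h1 | h1 | h1 <;> tauto
end

section
/- Let m be odd, q = 3^m, and v = (3^{m+1}−1)/4. Then the number of pairs (a,b) ∈ GF(q)² such that wt(c(a,b)) = w equals: 1 if w = 0; (3^m−1)(3^{m−1}+3^{(m−1)/2}) if w = 2·3^{m−1} − 3^{(m−1)/2}; (3^m−1)(3^m−2·3^{m−1}+1) if w = 2·3^{m−1}; (3^m−1)(3^{m−1}−3^{(m−1)/2}) if w = 2·3^{m−1} + 3^{(m−1)/2}; and 0 for every other value of w. -/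
set_option linter.unusedSectionVars false

section helpers

open Finset

variable {F : Type*} [Field F] [Fintype F] [DecidableEq F] [Algebra (ZMod 3) F]

lemma aux_three : (3 : F) = 0 := by
  have h : algebraMap (ZMod 3) F 3 = 0 := by
    rw [show (3 : ZMod 3) = 0 from rfl, map_zero]
  rwa [map_ofNat] at h

lemma aux_ringChar : ringChar F ≠ 2 := by
  intro h
  have h2 : ((2 : ℕ) : F) = 0 := by rw [← h]; exact ringChar.Nat.cast_ringChar
  have h3 : (3 : F) = 0 := aux_three
  have : (1 : F) = 0 := by push_cast at h2; linear_combination h3 - h2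
  exact one_ne_zero this

lemma aux_card_trace {m : ℕ} (hm : Odd m) (hF : Fintype.card F = 3 ^ m) (c : F) (hc : c ≠ 0)
    (s : ZMod 3) : #{y : F | Algebra.trace (ZMod 3) F (c * y) = s} = 3 ^ (m - 1) := by
  haveI : Module.Finite (ZMod 3) F := Module.Finite.of_finite
  let f : F →+ ZMod 3 := (Algebra.trace (ZMod 3) F).toAddMonoidHom.comp (AddMonoidHom.mulLeft c)
  have hs : Function.Surjective f := by
    intro t
    obtain ⟨y, hy⟩ := Algebra.trace_surjective (ZMod 3) F t
    refine ⟨c⁻¹ * y, ?_⟩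
    simp [f, hc, hy]
  have hfib : ∀ t, #{y : F | f y = t} = #{y : F | f y = s} := fun t =>
    AddMonoidHom.card_fiber_eq_of_mem_range f (by simpa using hs t) (by simpa using hs s)
  have htot : Fintype.card F = ∑ t : ZMod 3, #{y : F | f y = t} := by
    rw [← Finset.card_univ]
    exact Finset.card_eq_sum_card_fiberwise (by simp)
  have h3 : Fintype.card F = 3 * #{y : F | f y = s} := by
    rw [htot, Finset.sum_congr rfl (fun t _ => hfib t)]
    simp
  have hpow : 3 ^ m = 3 * 3 ^ (m - 1) := by
    obtain ⟨k, rfl⟩ := hm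
    rw [show 2 * k + 1 - 1 = 2 * k by omega, pow_succ]; ring
  have : #{y : F | f y = s} = 3 ^ (m - 1) := by
    rw [hF, hpow] at h3; omega
  exact this

lemma aux_mod {m : ℕ} (hm : Odd m) : 3 ^ m % 4 = 3 := by
  obtain ⟨k, rfl⟩ := hm
  rw [pow_succ, pow_mul, Nat.mul_mod, Nat.pow_mod]; simp

lemma aux_neg_one {m : ℕ} (hm : Odd m) (hF : Fintype.card F = 3 ^ m) : ¬ IsSquare (-1 : F) := by
  rw [FiniteField.isSquare_neg_one_iff, hF, aux_mod hm]; simp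

/-- the twisted square map -/
noncomputable def phi (y : F) : F := y ^ (Fintype.card F / 2) * y ^ 2

lemma aux_eps (y : F) (hy : y ≠ 0) :
    y ^ (Fintype.card F / 2) = 1 ∨ y ^ (Fintype.card F / 2) = -1 :=
  FiniteField.pow_dichotomy aux_ringChar hy

lemma aux_odd_half {m : ℕ} (hm : Odd m) (hF : Fintype.card F = 3 ^ m) :
    Odd (Fintype.card F / 2) := by
  have := aux_mod hm
  rw [hF, Nat.odd_iff]; omega

lemma phi_neg {m : ℕ} (hm : Odd m) (hF : Fintype.card F = 3 ^ m) (y : F) :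
    phi (-y) = - phi y := by
  simp only [phi]; rw [(aux_odd_half hm hF).neg_pow]; ring

lemma phi_zero : phi (0 : F) = 0 := by simp [phi]

lemma phi_eq_zero (y : F) : phi y = 0 ↔ y = 0 := by
  refine ⟨fun h => ?_, fun h => by rw [h, phi_zero]⟩
  by_contra hy
  simp [phi, hy] at h

lemma phi_sq (y : F) : phi y ^ 2 = y ^ 4 := by
  by_cases hy : y = 0
  · simp [hy, phi_zero]
  · rcases aux_eps y hy with h | h <;> rw [phi, h] <;> ring

lemma phi_inj {m : ℕ} (hm : Odd m) (hF : Fintype.card F = 3 ^ m) :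
    Function.Injective (phi : F → F) := by
  intro y z h
  by_cases hz : z = 0
  · rw [hz, phi_zero, phi_eq_zero] at h; rw [h, hz]
  have h4 : y ^ 4 = z ^ 4 := by rw [← phi_sq, ← phi_sq, h]
  have h22 : (y ^ 2 - z ^ 2) * (y ^ 2 + z ^ 2) = 0 := by linear_combination h4
  rcases mul_eq_zero.1 h22 with h2 | h2
  · have : (y - z) * (y + z) = 0 := by linear_combination h2
    rcases mul_eq_zero.1 this with h1 | h1
    · exact sub_eq_zero.1 h1
    · exfalso
      have hy : y = -z := eq_neg_of_add_eq_zero_left h1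
      rw [hy, phi_neg hm hF] at h
      have h3 : (3 : F) = 0 := aux_three
      have : phi z = 0 := by linear_combination h + phi z * h3
      exact hz ((phi_eq_zero z).1 this)
  · exfalso
    apply aux_neg_one hm hF
    refine ⟨y / z, ?_⟩
    field_simp
    linear_combination -h2

lemma phi_bij {m : ℕ} (hm : Odd m) (hF : Fintype.card F = 3 ^ m) :
    Function.Bijective (phi : F → F) := Finite.injective_iff_bijective.1 (phi_inj hm hF)

lemma aux_sq_or {m : ℕ} (hm : Odd m) (hF : Fintype.card F = 3 ^ m) (a : F) (ha : a ≠ 0) :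
    ∃ z : F, z ≠ 0 ∧ (a = z ^ 2 ∨ a = - z ^ 2) := by
  obtain ⟨y, rfl⟩ := (phi_bij hm hF).2 a
  have hy : y ≠ 0 := fun h => ha (by rw [h, phi_zero])
  refine ⟨y, hy, ?_⟩
  rcases aux_eps y hy with h | h <;> rw [phi, h] <;> simp

/-- level counts of `Tr(y²)` -/
noncomputable def Mct (F : Type*) [Field F] [Fintype F] [DecidableEq F] [Algebra (ZMod 3) F] (s : ZMod 3) : ℕ :=
  #{y : F | Algebra.trace (ZMod 3) F (y ^ 2) = s}

lemma M_zero {m : ℕ} (hm : Odd m) (hF : Fintype.card F = 3 ^ m) : Mct F 0 = 3 ^ (m - 1) := by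
  rw [← aux_card_trace hm hF (1 : F) one_ne_zero 0, Mct]
  refine Finset.card_bij (fun y _ => phi y) ?_ (fun _ _ _ _ h => phi_inj hm hF h) ?_
  · intro y hy
    simp only [mem_filter, mem_univ, true_and, one_mul] at hy ⊢
    by_cases h0 : y = 0
    · simp [h0, phi_zero]
    · rcases aux_eps y h0 with h | h <;> rw [phi, h] <;> simp [hy]
  · intro x hx
    obtain ⟨y, rfl⟩ := (phi_bij hm hF).2 x
    refine ⟨y, ?_, rfl⟩
    simp only [mem_filter, mem_univ, true_and, one_mul] at hx ⊢
    by_cases h0 : y = 0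
    · simp [h0]
    · rcases aux_eps y h0 with h | h <;> rw [phi, h] at hx <;> simpa using hx

lemma univ3 (f : ZMod 3 → ℕ) : ∑ s, f s = f 0 + f 1 + f 2 := Fin.sum_univ_three f

lemma M_total {m : ℕ} (hF : Fintype.card F = 3 ^ m) :
    Mct F 0 + Mct F 1 + Mct F 2 = 3 ^ m := by
  rw [← hF, ← univ3, ← Finset.card_univ]
  exact (Finset.card_eq_sum_card_fiberwise (by simp)).symm

lemma M_sq {m : ℕ} (hm : Odd m) (hF : Fintype.card F = 3 ^ m) :
    Mct F 0 ^ 2 + Mct F 1 ^ 2 + Mct F 2 ^ 2 = 3 ^ m + (3 ^ m - 1) * 3 ^ (m - 1) := by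
  have h3 : (3 : F) = 0 := aux_three
  have e1 : #{p : F × F | Algebra.trace (ZMod 3) F (p.1 ^ 2) = Algebra.trace (ZMod 3) F (p.2 ^ 2)}
      = Mct F 0 ^ 2 + Mct F 1 ^ 2 + Mct F 2 ^ 2 := by
    rw [← univ3 (fun s => Mct F s ^ 2), Finset.card_eq_sum_card_fiberwise (t := univ)
      (f := fun p : F × F => Algebra.trace (ZMod 3) F (p.1 ^ 2)) (by simp)]
    refine Finset.sum_congr rfl fun s _ => ?_
    rw [sq, Mct, ← Finset.card_product]
    congr 1
    ext ⟨x, y⟩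
    simp only [mem_filter, mem_univ, true_and, mem_product]
    constructor
    · rintro ⟨h1, h2⟩; exact ⟨h2, h1 ▸ h2⟩
    · rintro ⟨h1, h2⟩; exact ⟨h1.trans h2.symm, h1⟩
  have e2 : #{p : F × F | Algebra.trace (ZMod 3) F (p.1 ^ 2) = Algebra.trace (ZMod 3) F (p.2 ^ 2)}
      = #{p : F × F | Algebra.trace (ZMod 3) F (p.1 * p.2) = 0} := by
    refine Finset.card_bij' (fun p _ => (p.1 + p.2, p.1 - p.2))
      (fun p _ => (-(p.1 + p.2), -(p.1 - p.2))) ?_ ?_ ?_ ?_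
    · rintro ⟨x, y⟩ h
      simp only [mem_filter, mem_univ, true_and] at h ⊢
      rw [show (x + y) * (x - y) = x ^ 2 - y ^ 2 by ring, map_sub, h, sub_self]
    · rintro ⟨x, y⟩ h
      simp only [mem_filter, mem_univ, true_and] at h ⊢
      rw [← sub_eq_zero, ← map_sub,
        show (-(x + y)) ^ 2 - (-(x - y)) ^ 2 = x * y by linear_combination x * y * h3, h]
    · rintro ⟨x, y⟩ _
      ext
      · simp only; linear_combination -x * h3
      · simp only; linear_combination -y * h3
    · rintro ⟨x, y⟩ _
      ext
      · simp only; linear_combination -x * h3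
      · simp only; linear_combination -y * h3
  have e3 : #{p : F × F | Algebra.trace (ZMod 3) F (p.1 * p.2) = 0}
      = 3 ^ m + (3 ^ m - 1) * 3 ^ (m - 1) := by
    rw [Finset.card_eq_sum_card_fiberwise (t := univ) (f := fun p : F × F => p.1) (by simp)]
    have : ∀ a : F, #{p ∈ ({p : F × F | Algebra.trace (ZMod 3) F (p.1 * p.2) = 0} : Finset (F × F))
        | p.1 = a} = #{y : F | Algebra.trace (ZMod 3) F (a * y) = 0} := by
      intro a
      refine Finset.card_bij' (fun p _ => p.2) (fun y _ => (a, y)) ?_ ?_ ?_ ?_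
      · rintro ⟨x, y⟩ h
        simp only [mem_filter, mem_univ, true_and] at h ⊢
        rw [← h.2]; exact h.1
      · intro y h
        simpa using h
      · rintro ⟨x, y⟩ h
        simp only [mem_filter, mem_univ, true_and] at h ⊢
        rw [h.2]
      · intro y h; rfl
    rw [Finset.sum_congr rfl fun a _ => this a, ← Finset.add_sum_erase _ _ (mem_univ (0 : F)),
      Finset.sum_congr rfl fun a ha => aux_card_trace hm hF a (Finset.ne_of_mem_erase ha) 0]
    simp [hF]
  rw [← e1, e2, e3]

lemma M_cases {m : ℕ} (hm : Odd m) (hF : Fintype.card F = 3 ^ m) :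
    (Mct F 1 = 3 ^ (m - 1) + 3 ^ ((m - 1) / 2) ∧ Mct F 2 + 3 ^ ((m - 1) / 2) = 3 ^ (m - 1)) ∨
    (Mct F 2 = 3 ^ (m - 1) + 3 ^ ((m - 1) / 2) ∧ Mct F 1 + 3 ^ ((m - 1) / 2) = 3 ^ (m - 1)) := by
  have h0 := M_zero hm hF
  have ht := M_total hF
  have hs := M_sq hm hF
  obtain ⟨k, rfl⟩ := hm
  rw [show 2 * k + 1 - 1 = 2 * k by omega] at *
  rw [show 2 * k / 2 = k by omega] at *
  rw [h0] at ht hs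
  generalize Mct F 1 = A at *
  generalize Mct F 2 = B at *
  have hq : 1 ≤ 3 ^ (2 * k + 1) := Nat.one_le_pow _ _ (by norm_num)
  zify [hq] at ht hs ⊢
  have e : (3 : ℤ) ^ (2 * k + 1) = 3 * (3 ^ k) ^ 2 := by rw [pow_succ, mul_comm 2 k, pow_mul]; ring
  have e' : (3 : ℤ) ^ (2 * k) = (3 ^ k) ^ 2 := by rw [mul_comm 2 k, pow_mul]
  rw [e, e'] at ht hs
  rw [e']
  clear e e'
  generalize (3 : ℤ) ^ k = D at *
  have hB : (B : ℤ) = 2 * D ^ 2 - A := by linarith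
  rw [hB] at hs ⊢
  have : ((A : ℤ) - D ^ 2 - D) * (A - D ^ 2 + D) = 0 := by linarith
  rcases mul_eq_zero.1 this with h | h
  · left; constructor <;> linarith
  · right; constructor <;> linarith

/-- weight -/
noncomputable def Wt (a b : F) : ℕ := #{y : F | Algebra.trace (ZMod 3) F (a * y ^ 2 + b * y) ≠ 0}

lemma Wt_zero : Wt (0 : F) 0 = 0 := by simp [Wt]

lemma Wt_add (a b : F) :
    #{y : F | Algebra.trace (ZMod 3) F (a * y ^ 2 + b * y) = 0} + Wt a b = Fintype.card F := by
  rw [← Finset.card_univ]; exact Finset.card_filter_add_card_filter_not _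

lemma Wt_lin {m : ℕ} (hm : Odd m) (hF : Fintype.card F = 3 ^ m) (b : F) (hb : b ≠ 0) :
    Wt 0 b + 3 ^ (m - 1) = 3 ^ m := by
  rw [← hF, ← Wt_add 0 b, ← aux_card_trace hm hF b hb 0]
  simp [add_comm]

lemma Wt_quad {m : ℕ} (hm : Odd m) (hF : Fintype.card F = 3 ^ m) (a z b : F) (hz : z ≠ 0)
    (ha : a = z ^ 2 ∨ a = - z ^ 2) :
    Wt a (z * b) + Mct F (Algebra.trace (ZMod 3) F (b ^ 2)) = 3 ^ m := by
  have h3 : (3 : F) = 0 := aux_three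
  rw [← hF, ← Wt_add a (z * b), add_comm]
  congr 1
  symm
  rw [Mct]
  rcases ha with rfl | rfl
  · refine Finset.card_bij' (fun y _ => z * y - b) (fun y _ => z⁻¹ * (y + b)) ?_ ?_ ?_ ?_
    · intro y h
      simp only [mem_filter, mem_univ, true_and] at h ⊢
      rw [← sub_eq_zero, ← map_sub, ← h]
      congr 1
      linear_combination - z * y * b * h3
    · intro y h
      simp only [mem_filter, mem_univ, true_and] at h ⊢
      rw [← sub_eq_zero, ← map_sub] at h
      rw [← h]
      congr 1
      field_simp
      linear_combination (b * y + b ^ 2) * h3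
    · intro y _; field_simp; ring
    · intro y _; field_simp; ring
  · refine Finset.card_bij' (fun y _ => z * y + b) (fun y _ => z⁻¹ * (y - b)) ?_ ?_ ?_ ?_
    · intro y h
      simp only [mem_filter, mem_univ, true_and] at h ⊢
      rw [← sub_eq_zero, ← map_sub, ← neg_eq_zero, ← map_neg, ← h]
      congr 1
      linear_combination - z * y * b * h3
    · intro y h
      simp only [mem_filter, mem_univ, true_and] at h ⊢
      rw [← sub_eq_zero, ← map_sub, ← neg_eq_zero, ← map_neg] at h
      rw [← h]
      congr 1
      field_simp
      linear_combination (b * y - b ^ 2) * h3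
    · intro y _; field_simp; ring
    · intro y _; field_simp; ring

lemma count_a {m : ℕ} (hm : Odd m) (hF : Fintype.card F = 3 ^ m) (a : F) (ha : a ≠ 0) (w : ℕ) :
    #{b : F | Wt a b = w} = ∑ s : ZMod 3, if w + Mct F s = 3 ^ m then Mct F s else 0 := by
  obtain ⟨z, hz, haz⟩ := aux_sq_or hm hF a ha
  have e1 : #{b : F | Wt a b = w} =
      #{b : F | w + Mct F (Algebra.trace (ZMod 3) F (b ^ 2)) = 3 ^ m} := by
    refine Finset.card_bij' (fun y _ => z⁻¹ * y) (fun y _ => z * y) ?_ ?_ ?_ ?_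
    · intro b h
      simp only [mem_filter, mem_univ, true_and] at h ⊢
      have := Wt_quad hm hF a z (z⁻¹ * b) hz haz
      rwa [mul_inv_cancel_left₀ hz, h] at this
    · intro b h
      simp only [mem_filter, mem_univ, true_and] at h ⊢
      have := Wt_quad hm hF a z b hz haz
      omega
    · intro y _; field_simp
    · intro y _; field_simp
  rw [e1, Finset.card_eq_sum_card_fiberwise (t := univ)
      (f := fun b : F => Algebra.trace (ZMod 3) F (b ^ 2)) (by simp)]
  refine Finset.sum_congr rfl fun s _ => ?_
  rw [Finset.filter_filter]
  split_ifs with h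
  · rw [Mct]; congr 1; ext y
    simp only [mem_filter, mem_univ, true_and]
    constructor
    · exact fun h => h.2
    · intro h'; exact ⟨by rw [h']; exact h, h'⟩
  · rw [Finset.card_eq_zero, Finset.filter_eq_empty_iff]
    rintro y _ ⟨h1, h2⟩
    rw [h2] at h1; exact h h1

lemma count_zero {m : ℕ} (hm : Odd m) (hF : Fintype.card F = 3 ^ m) (w : ℕ) :
    #{b : F | Wt 0 b = w} = (if w = 0 then 1 else 0) +
      if w + 3 ^ (m - 1) = 3 ^ m then 3 ^ m - 1 else 0 := by
  have : ∀ b ∈ univ.erase (0 : F), (if Wt 0 b = w then 1 else 0) =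
      if w + 3 ^ (m - 1) = 3 ^ m then 1 else 0 := by
    intro b hb
    have := Wt_lin hm hF b (Finset.ne_of_mem_erase hb)
    congr 1
    apply propext; omega
  rw [Finset.card_filter, ← Finset.add_sum_erase _ _ (mem_univ (0 : F)),
    Finset.sum_congr rfl this, Wt_zero]
  simp [hF, eq_comm]

lemma count_all {m : ℕ} (hm : Odd m) (hF : Fintype.card F = 3 ^ m) (w : ℕ) :
    #{p : F × F | Wt p.1 p.2 = w} = ((if w = 0 then 1 else 0) +
      if w + 3 ^ (m - 1) = 3 ^ m then 3 ^ m - 1 else 0) +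
      (3 ^ m - 1) * ∑ s : ZMod 3, if w + Mct F s = 3 ^ m then Mct F s else 0 := by
  rw [Finset.card_filter, Fintype.sum_prod_type]
  simp_rw [← Finset.card_filter]
  rw [← Finset.add_sum_erase _ _ (mem_univ (0 : F)), count_zero hm hF,
    Finset.sum_congr rfl fun a ha => count_a hm hF a (Finset.ne_of_mem_erase ha) w]
  simp [hF]

lemma phi_pow {m : ℕ} (hm : Odd m) (hF : Fintype.card F = 3 ^ m) (y : F) (hy : y ≠ 0) :
    phi y ^ ((3 ^ (m + 1) - 1) / 4) = y ^ (Fintype.card F / 2) * y := by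
  have hmod := aux_mod hm
  have hmod8 : 3 ^ (m + 1) % 8 = 1 := by
    obtain ⟨k, rfl⟩ := hm
    rw [show 2 * k + 1 + 1 = 2 * (k + 1) by ring, pow_mul, Nat.pow_mod]; simp
  obtain ⟨u, hu⟩ : ∃ u, (3 ^ (m + 1) - 1) / 4 = 2 * u := ⟨(3 ^ (m + 1) - 1) / 8, by omega⟩
  have hp : 3 ^ (m + 1) = 3 * 3 ^ m := by ring
  have h4u : 4 * u = 3 * (Fintype.card F / 2) + 1 := by rw [hF]; omega
  rw [hu, pow_mul, phi_sq, ← pow_mul, h4u, pow_succ, mul_comm 3, pow_mul]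
  rcases aux_eps y hy with h | h <;> rw [h] <;> ring

lemma norm_eq {m : ℕ} (hm : Odd m) (hF : Fintype.card F = 3 ^ m)
    (α : Fˣ) (hα : ∀ x : Fˣ, x ∈ Subgroup.zpowers α) (v : ℕ) (hv : v = (3 ^ (m + 1) - 1) / 4)
    (a b : F) :
    hammingNorm (fun i : Fin (3 ^ m - 1) => Algebra.trace (ZMod 3) F (a * (α : F) ^ (i : ℕ)) +
        Algebra.trace (ZMod 3) F (b * (α : F) ^ ((i : ℕ) * v))) = Wt a b := by
  have hord : orderOf α = 3 ^ m - 1 := by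
    rw [orderOf_eq_card_of_forall_mem_zpowers hα, Nat.card_eq_fintype_card, Fintype.card_units, hF]
  have hstep : #{x : F | x ≠ 0 ∧ Algebra.trace (ZMod 3) F (a * x + b * x ^ v) ≠ 0} = Wt a b := by
    symm
    rw [Wt]
    have key : ∀ y : F, y ≠ 0 → (Algebra.trace (ZMod 3) F (a * phi y + b * phi y ^ v) ≠ 0 ↔
        Algebra.trace (ZMod 3) F (a * y ^ 2 + b * y) ≠ 0) := by
      intro y hy
      rw [hv, phi_pow hm hF y hy, phi]
      rcases aux_eps y hy with h | h <;> rw [h]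
      · simp
      · rw [show a * (-1 * y ^ 2) + b * (-1 * y) = -(a * y ^ 2 + b * y) by ring, map_neg,
          neg_ne_zero]
    refine Finset.card_bij (fun y _ => phi y) ?_ (fun _ _ _ _ h => phi_inj hm hF h) ?_
    · intro y h
      simp only [mem_filter, mem_univ, true_and] at h ⊢
      have hy : y ≠ 0 := by rintro rfl; simp at h
      exact ⟨fun h0 => hy ((phi_eq_zero y).1 h0), (key y hy).2 h⟩
    · intro x hx
      obtain ⟨y, rfl⟩ := (phi_bij hm hF).2 x
      simp only [mem_filter, mem_univ, true_and] at hx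
      have hy : y ≠ 0 := fun h0 => hx.1 ((phi_eq_zero y).2 h0)
      exact ⟨y, by simpa using (key y hy).1 hx.2, rfl⟩
  rw [← hstep, hammingNorm]
  refine Finset.card_bij (fun i _ => (α : F) ^ (i : ℕ)) ?_ ?_ ?_
  · intro i h
    simp only [mem_filter, mem_univ, true_and] at h ⊢
    refine ⟨by simp, ?_⟩
    rwa [← pow_mul, map_add]
  · intro i _ j _ h
    have h' : α ^ (i : ℕ) = α ^ (j : ℕ) := by ext; simpa using h
    exact Fin.ext (pow_injOn_Iio_orderOf (by simp [hord]) (by simp [hord]) h')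
  · intro x hx
    simp only [mem_filter, mem_univ, true_and] at hx
    obtain ⟨n, hn, hnx⟩ := (isOfFinOrder_of_finite α).mem_zpowers_iff_mem_range_orderOf.1
      (hα (Units.mk0 x hx.1)) |> Finset.mem_image.1
    have hxn : (α : F) ^ n = x := by
      have := congrArg Units.val hnx; simpa using this
    refine ⟨⟨n, by rw [← hord]; exact Finset.mem_range.1 hn⟩, ?_, hxn⟩
    simp only [mem_filter, mem_univ, true_and]
    rw [pow_mul, hxn, ← map_add]; exact hx.2

end helpers


/-- weight distribution of the ternary cyclic code `C_{(1,v,3,m)}` with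
`m` odd and `v = (3^{m+1}-1)/4`; codewords are `c(a,b)_i = Tr(a α^i) + Tr(b α^{iv})`. -/
theorem stmt3 {m : ℕ} (hm : Odd m)
    {F : Type*} [Field F] [Fintype F] [Algebra (ZMod 3) F]
    (hF : Fintype.card F = 3 ^ m)
    (α : Fˣ) (hα : ∀ x : Fˣ, x ∈ Subgroup.zpowers α)
    (v : ℕ) (hv : v = (3 ^ (m + 1) - 1) / 4)
    (c : F × F → Fin (3 ^ m - 1) → ZMod 3)
    (hc : c = fun (ab : F × F) (i : Fin (3 ^ m - 1)) =>
      Algebra.trace (ZMod 3) F (ab.1 * (α : F) ^ (i : ℕ)) +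
        Algebra.trace (ZMod 3) F (ab.2 * (α : F) ^ ((i : ℕ) * v))) :
    ∀ w : ℕ,
      {ab : F × F | hammingNorm (c ab) = w}.ncard =
        if w = 0 then 1
        else if w = 2 * 3 ^ (m - 1) - 3 ^ ((m - 1) / 2) then
          (3 ^ m - 1) * (3 ^ (m - 1) + 3 ^ ((m - 1) / 2))
        else if w = 2 * 3 ^ (m - 1) then
          (3 ^ m - 1) * (3 ^ m - 2 * 3 ^ (m - 1) + 1)
        else if w = 2 * 3 ^ (m - 1) + 3 ^ ((m - 1) / 2) then
          (3 ^ m - 1) * (3 ^ (m - 1) - 3 ^ ((m - 1) / 2))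
        else 0 := by
  classical
  intro w
  have hset : {ab : F × F | hammingNorm (c ab) = w} =
      ((({p : F × F | Wt p.1 p.2 = w} : Finset (F × F))) : Set (F × F)) := by
    ext ⟨a, b⟩
    simp only [Set.mem_setOf_eq, Finset.coe_filter, Finset.mem_univ, true_and]
    rw [hc, ← norm_eq hm hF α hα v hv a b]
  rw [hset, Set.ncard_coe_finset, count_all hm hF, univ3, M_zero hm hF]
  have hM := M_cases hm hF
  obtain ⟨k, rfl⟩ := hm
  rw [show 2 * k + 1 - 1 = 2 * k by omega] at *
  rw [show 2 * k / 2 = k by omega] at *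
  have e : 3 ^ (2 * k + 1) = 3 * 3 ^ (2 * k) := by ring
  have hDE : 3 ^ k ≤ 3 ^ (2 * k) := Nat.pow_le_pow_right (by norm_num) (by omega)
  have hD : 0 < 3 ^ k := by positivity
  rw [e]
  clear hset hc hF hv
  generalize 3 ^ (2 * k) = E at *
  generalize 3 ^ k = D at *
  generalize Mct F 1 = A at *
  generalize Mct F 2 = B at *
  have e1 : 3 * E - 2 * E + 1 = E + 1 := by omega
  rw [e1]
  generalize hQ : 3 * E - 1 = Q
  obtain ⟨h1, h2⟩ | ⟨h1, h2⟩ := hM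
  · obtain rfl : B = E - D := by omega
    subst h1
    split_ifs <;> first | omega | (simp; done) | (simp; ring)
  · obtain rfl : A = E - D := by omega
    subst h1
    split_ifs <;> first | omega | (simp; done) | (simp; ring)
end

section
/- Let m be odd, q = 3^m, and v = (3^{m+1}−1)/4. Then the only x ∈ GF(q)* satisfying (−x−1)^v + x^v + 1 = 0 is x = 1. -/
/-- for `m` odd, `q = 3^m` and `v = (3^{m+1}-1)/4`, the only `x ∈ GF(q)*`
satisfying `(-x-1)^v + x^v + 1 = 0` is `x = 1`. -/
theorem stmt5 {m : ℕ} (hm : Odd m)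
    {F : Type*} [Field F] [Fintype F] (hF : Fintype.card F = 3 ^ m)
    (v : ℕ) (hv : v = (3 ^ (m + 1) - 1) / 4) :
    ∀ x : F, x ≠ 0 → ((-x - 1) ^ v + x ^ v + 1 = 0 ↔ x = 1) := by
  have h8 : 3 ^ m % 8 = 3 := by
    obtain ⟨k, rfl⟩ := hm
    rw [pow_succ, pow_mul, Nat.mul_mod, Nat.pow_mod]
    norm_num
  have hs : 3 ^ (m + 1) = 3 ^ m * 3 := pow_succ 3 m
  have h4v : 4 * v + 1 = 3 ^ m * 3 := by omega
  obtain ⟨w, hw⟩ : ∃ w, v = w + w := ⟨v / 2, by omega⟩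
  have hv0 : v ≠ 0 := by omega
  have hneg : ¬ IsSquare (-1 : F) := by
    rw [FiniteField.isSquare_neg_one_iff, hF]
    omega
  have h3 : (3 : F) = 0 := by
    have h := FiniteField.cast_card_eq_zero F
    rw [hF] at h
    push_cast at h
    exact eq_zero_of_pow_eq_zero h
  have key : ∀ y : F, (y ^ v) ^ 2 = y ∨ (y ^ v) ^ 2 = -y := by
    intro y
    by_cases hy : y = 0
    · left; simp [hy, hv0]
    · apply sq_eq_sq_iff_eq_or_eq_neg.mp
      apply mul_right_cancel₀ hy
      have h1 : y ^ (4 * v + 1) = y ^ 3 := by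
        rw [h4v, pow_mul, ← hF, FiniteField.pow_card]
      calc ((y ^ v) ^ 2) ^ 2 * y = y ^ (4 * v + 1) := by ring
        _ = y ^ 2 * y := by rw [h1]; ring
  intro x hx
  constructor
  · intro h
    have ha0 : x ^ v ≠ 0 := pow_ne_zero _ hx
    have han : x ^ v ≠ -1 := by
      intro h'
      exact hneg ⟨x ^ w, by rw [← h', hw, pow_add]⟩
    have hx' := key x
    have hb := key (-x - 1)
    generalize x ^ v = a at *
    generalize (-x - 1) ^ v = b at *
    obtain rfl : b = -a - 1 := by linear_combination h
    rcases hx' with hx' | hx' <;> rcases hb with hb | hb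
    · have : (a - 1) ^ 2 = 0 := by
        linear_combination -hb - hx' - (-a^2 - 1) * h3 + 0 * h3
      have := sub_eq_zero.mp (pow_eq_zero_iff (two_ne_zero) |>.mp this)
      rw [← hx', this, one_pow]
    · exact absurd (by linear_combination -hb + hx' + a * h3) ha0
    · exact absurd (by linear_combination -hb + hx' + (a + 1) * h3) han
    · have : a * (a + 1) = 0 := by
        linear_combination -hb - hx' + (a^2 + a) * h3
      rcases mul_eq_zero.mp this with h' | h'
      · exact absurd h' ha0
      · exact absurd (eq_neg_of_add_eq_zero_left h') han
  · rintro rfl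
    have : (-1 - 1 : F) = 1 := by linear_combination -h3
    rw [this, one_pow]
    linear_combination h3
end

section
/- Let m be odd, q = 3^m, and v = (3^{m+1}−1)/4. Then the only x ∈ GF(q) satisfying (x+1)^v − x^v − 1 = 0 is x = 0. -/
/-- for `m` odd, `q = 3^m` and `v = (3^{m+1}-1)/4`, the only `x ∈ GF(q)`
satisfying `(x+1)^v - x^v - 1 = 0` is `x = 0`. -/
theorem stmt6 {m : ℕ} (hm : Odd m)
    {F : Type*} [Field F] [Fintype F] (hF : Fintype.card F = 3 ^ m)
    (v : ℕ) (hv : v = (3 ^ (m + 1) - 1) / 4) :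
    ∀ x : F, ((x + 1) ^ v - x ^ v - 1 = 0 ↔ x = 0) := by
  obtain ⟨k, rfl⟩ := hm
  have h9 : 3 ^ (2 * k + 1) % 8 = 3 := by
    rw [pow_succ, pow_mul, Nat.mul_mod, Nat.pow_mod]; norm_num
  have h3s : 3 ^ (2 * k + 1 + 1) = 3 * 3 ^ (2 * k + 1) := by ring
  rw [h3s] at hv
  have hns : ¬ IsSquare (-1 : F) := by
    rw [FiniteField.isSquare_neg_one_iff, hF, not_not]
    clear hv h3s hF
    generalize 3 ^ (2 * k + 1) = Q at *
    omega
  have h3 : (3 : F) = 0 := by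
    have h : ((Fintype.card F : ℕ) : F) = 0 := Nat.cast_card_eq_zero F
    rw [hF] at h
    push_cast at h
    exact eq_zero_of_pow_eq_zero h
  obtain ⟨w, hw⟩ : ∃ w, v = w + w := ⟨v / 2, by omega⟩
  have hv0 : v ≠ 0 := by omega
  have h4 : v * 4 + 1 = 3 ^ (2 * k + 1) * 3 := by omega
  have key : ∀ y : F, (y ^ v) ^ 2 = y ∨ (y ^ v) ^ 2 = - y := by
    intro y
    by_cases hy : y = 0
    · left; simp [hy, hv0]
    · apply sq_eq_sq_iff_eq_or_eq_neg.mp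
      apply mul_right_cancel₀ hy
      calc ((y ^ v) ^ 2) ^ 2 * y = y ^ (v * 4 + 1) := by ring
        _ = y ^ 2 * y := by
          rw [h4, pow_mul, ← hF, FiniteField.pow_card]; ring
  have sq : ∀ y : F, y ^ v ≠ -1 := by
    intro y h
    exact hns ⟨y ^ w, by rw [← h, hw, pow_add]⟩
  have h2 : (2 : F) ≠ 0 := by
    intro h
    exact one_ne_zero (α := F) (by linear_combination h3 - h)
  intro x
  constructor
  swap
  · rintro rfl; simp [hv0]
  intro h
  have ha := key (x + 1)
  have hb := key x
  have sa := sq (x + 1)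
  have sb := sq x
  generalize (x + 1) ^ v = a at *
  generalize x ^ v = b at *
  obtain rfl : a = b + 1 := by linear_combination h
  have hb1 : b + 1 ≠ 0 := fun h => sb (by linear_combination h)
  rcases ha with ha | ha <;> rcases hb with hb | hb
  · have : 2 * b = 0 := by linear_combination ha - hb
    have : b = 0 := by simpa [h2] using this
    rw [← hb, this]; simp
  · have : 2 * (b * (b + 1)) = 0 := by linear_combination ha + hb
    have : b = 0 := by simpa [h2, hb1] using this
    rw [← neg_eq_zero, ← hb, this]; simp
  · have : (b - 1) ^ 2 = 0 := by
      linear_combination -ha - hb + h3 * (b ^ 2 + 1)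
    have : b - 1 = 0 := eq_zero_of_pow_eq_zero this
    exact absurd (by linear_combination this + h3) sa
  · have : 2 * (b + 1) = 0 := by linear_combination ha - hb
    exact absurd (by simpa [h2] using this) hb1
end

section
/- Let m ≡ 7 (mod 8), q = 3^m, and v = (3^{(m+1)/8}−1)(3^{(m+1)/4}+1)(3^{(m+1)/2}+1). Then the number of pairs (a,b) ∈ GF(q)² such that wt(c(a,b)) = w equals: 1 if w = 0; (3^m−1)(3^{m−1}+3^{(m−1)/2}) if w = 2·3^{m−1} − 3^{(m−1)/2}; (3^m−1)(3^m−2·3^{m−1}+1) if w = 2·3^{m−1}; (3^m−1)(3^{m−1}−3^{(m−1)/2}) if w = 2·3^{m−1} + 3^{(m−1)/2}; and 0 for every other value of w. -/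
set_option linter.unusedSectionVars false

namespace TC
open Finset

def h (c : ZMod 3) : ℤ := if c = 0 then 2 else -1
def g (c : ZMod 3) : ℤ := if c = 0 then 0 else if c = 1 then 1 else -1

lemma h_mul : ∀ c d : ZMod 3, h c * h d = h (c + d) + h (c - d) := by decide
lemma hg_mul : ∀ c d : ZMod 3, h c * h d + 3 * (g c * g d) = 2 * h (c - d) := by decide
lemma h_sum : ∀ c : ZMod 3, h c + h (c + 1) + h (c + 1 + 1) = 0 := by decide

lemma sum_h_aff {G : Type*} [AddCommGroup G] [Fintype G] (φ : G →+ ZMod 3) (c : ZMod 3)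
    (hφ : ∃ x, φ x ≠ 0) : ∑ x, h (c + φ x) = 0 := by
  obtain ⟨x, hx⟩ := hφ
  obtain ⟨y, hy⟩ : ∃ y, φ y = 1 := by
    have : ∀ d : ZMod 3, d ≠ 0 → d = 1 ∨ -d = 1 := by decide
    rcases this _ hx with h1 | h1
    · exact ⟨x, h1⟩
    · exact ⟨-x, by simpa using h1⟩
  have e1 : ∑ x, h (c + φ x) = ∑ x, h (c + φ x + 1) := by
    rw [← Equiv.sum_comp (Equiv.addRight y)]
    simp [hy, add_assoc]
  have e2 : ∑ x, h (c + φ x + 1) = ∑ x, h (c + φ x + 1 + 1) := by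
    rw [← Equiv.sum_comp (Equiv.addRight y)]
    simp only [Equiv.coe_addRight, map_add, hy, add_assoc]
  have e3 : ∑ x, h (c + φ x) + ∑ x, h (c + φ x + 1) + ∑ x, h (c + φ x + 1 + 1) = 0 := by
    rw [← sum_add_distrib, ← sum_add_distrib]
    exact sum_eq_zero fun x _ => h_sum _
  linarith

lemma descent (n : ℕ) : ∀ X Y : ℤ, X ^ 2 + 3 * Y ^ 2 = 3 ^ n →
    (Odd n → X = 0) ∧ (Even n → X = 3 ^ (n / 2) ∨ X = - 3 ^ (n / 2)) := by
  induction n using Nat.strong_induction_on with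
  | _ n ih =>
    intro X Y hXY
    match n, ih, hXY with
    | 0, _, hXY =>
      refine ⟨by simp, fun _ => ?_⟩
      have hY : Y = 0 := by nlinarith [sq_nonneg X, sq_nonneg Y, Int.one_le_abs (z := Y), sq_abs Y]
      subst hY
      have : X ^ 2 = 1 := by simpa using hXY
      have h0 : (X - 1) * (X + 1) = 0 := by linarith
      rcases mul_eq_zero.mp h0 with h1 | h1
      · left; simp; linarith
      · right; simp; linarith
    | 1, _, hXY =>
      refine ⟨fun _ => ?_, by simp⟩
      have h1 : X ≤ 1 := by nlinarith [sq_nonneg Y]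
      have h2 : -1 ≤ X := by nlinarith [sq_nonneg Y]
      generalize Y ^ 2 = t at hXY
      interval_cases X <;> omega
    | n + 2, ih, hXY =>
      have h3 : (3 : ℤ) ∣ X := by
        apply Int.prime_three.dvd_of_dvd_pow (n := 2)
        exact ⟨3 * 3 ^ n - Y ^ 2, by rw [pow_add] at hXY; linarith⟩
      obtain ⟨X, rfl⟩ := h3
      have h3 : (3 : ℤ) ∣ Y := by
        apply Int.prime_three.dvd_of_dvd_pow (n := 2)
        exact ⟨3 ^ n - X ^ 2, by rw [pow_add] at hXY; linarith⟩
      obtain ⟨Y, rfl⟩ := h3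
      have := ih n (by omega) X Y (by rw [pow_add] at hXY; linarith)
      constructor
      · intro ho
        rw [this.1 (by simpa [Nat.odd_add] using ho)]; simp
      · intro he
        have e : (n + 2) / 2 = n / 2 + 1 := by omega
        rw [e, pow_succ]
        rcases this.2 (by simpa [Nat.even_add] using he) with h | h <;> rw [h]
        · left; ring
        · right; ring

section
variable {F : Type*} [Field F] [Fintype F] [Algebra (ZMod 3) F]

lemma three_eq : (3 : F) = 0 := by
  have := congrArg (algebraMap (ZMod 3) F) (show (3 : ZMod 3) = 0 by decide)
  rwa [map_ofNat, map_zero] at this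

lemma two_ne : (2 : F) ≠ 0 := by
  intro h
  have h3 := three_eq (F := F)
  have : (1 : F) = 0 := by linear_combination h3 - h
  exact one_ne_zero this

lemma trace_nd {c : F} (hc : c ≠ 0) : ∃ z, Algebra.trace (ZMod 3) F (z * c) ≠ 0 := by
  by_contra! hcon
  have := (traceForm_nondegenerate (ZMod 3) F).1 c (fun z => by
    rw [Algebra.traceForm_apply, mul_comm]; exact hcon z)
  exact hc this

/-- the quadratic form -/
noncomputable def qf (σ : F ≃ₐ[ZMod 3] F) (a b y : F) : ZMod 3 :=
  Algebra.trace (ZMod 3) F (a * (σ y * y) + b * y ^ 2)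

/-- the linear map whose kernel is the radical -/
noncomputable def rad (σ : F ≃ₐ[ZMod 3] F) (a b : F) : F →ₗ[ZMod 3] F where
  toFun w := σ.symm (a * w) + a * σ w + 2 * b * w
  map_add' x y := by simp only [map_add, mul_add]; ring
  map_smul' r x := by
    simp only [map_smul, mul_smul_comm, smul_add, RingHom.id_apply]

lemma rad_apply (σ : F ≃ₐ[ZMod 3] F) (a b w : F) :
    rad σ a b w = σ.symm (a * w) + a * σ w + 2 * b * w := rfl

lemma qf_add (σ : F ≃ₐ[ZMod 3] F) (a b z w : F) :
    qf σ a b (z + w) - qf σ a b z =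
      qf σ a b w + Algebra.trace (ZMod 3) F (z * rad σ a b w) := by
  have e : Algebra.trace (ZMod 3) F (z * σ.symm (a * w)) =
      Algebra.trace (ZMod 3) F (σ z * (a * w)) := by
    rw [← Algebra.trace_eq_of_algEquiv σ]; simp
  unfold qf
  have e' : Algebra.trace (ZMod 3) F (z * rad σ a b w) =
      Algebra.trace (ZMod 3) F (σ z * (a * w) + z * (a * σ w + 2 * b * w)) := by
    rw [rad_apply, map_add, ← e, ← map_add]; congr 1; ring
  rw [e', sub_eq_iff_eq_add, ← map_add, ← map_add]
  congr 1
  rw [map_add]; ring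

lemma qf_rad (σ : F ≃ₐ[ZMod 3] F) (a b w : F) (hw : rad σ a b w = 0) : qf σ a b w = 0 := by
  have h1 := qf_add σ a b w w
  rw [hw, mul_zero, map_zero, add_zero] at h1
  have e2 : w + w = -w := by linear_combination w * three_eq (F := F)
  have e3 : qf σ a b (-w) = qf σ a b w := by simp [qf]
  rw [e2, e3, sub_self] at h1
  exact h1.symm

/-- the sum -/
noncomputable def HQ (σ : F ≃ₐ[ZMod 3] F) (a b : F) : ℤ := ∑ y, h (qf σ a b y)
noncomputable def GQ (σ : F ≃ₐ[ZMod 3] F) (a b : F) : ℤ := ∑ y, g (qf σ a b y)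

lemma norm_eq (σ : F ≃ₐ[ZMod 3] F) (a b : F) :
    HQ σ a b ^ 2 + 3 * GQ σ a b ^ 2 =
      4 * (Fintype.card F * Nat.card (LinearMap.ker (rad σ a b))) := by
  classical
  have e1 : HQ σ a b ^ 2 + 3 * GQ σ a b ^ 2 =
      ∑ z, ∑ y, 2 * h (qf σ a b y - qf σ a b z) := by
    unfold HQ GQ
    rw [sq, sq, sum_mul_sum, sum_mul_sum, mul_sum, ← sum_add_distrib, sum_comm]
    refine (sum_congr rfl fun y _ => ?_)
    rw [mul_sum, ← sum_add_distrib]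
    refine (sum_congr rfl fun z _ => ?_)
    rw [← hg_mul]
  have e2 : ∀ z, ∑ y, 2 * h (qf σ a b y - qf σ a b z) =
      ∑ w, 2 * h (qf σ a b w + Algebra.trace (ZMod 3) F (z * rad σ a b w)) := by
    intro z
    rw [← Equiv.sum_comp (Equiv.addLeft z)]
    simp only [Equiv.coe_addLeft, qf_add]
  have e3 : ∀ w, ∑ z, 2 * h (qf σ a b w + Algebra.trace (ZMod 3) F (z * rad σ a b w)) =
      if rad σ a b w = 0 then 4 * (Fintype.card F : ℤ) else 0 := by
    intro w
    split_ifs with hw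
    · simp [qf_rad _ _ _ _ hw, hw, h]; ring
    · rw [← mul_sum]
      have := sum_h_aff ((Algebra.trace (ZMod 3) F).toAddMonoidHom.comp
        (AddMonoidHom.mulRight (rad σ a b w))) (qf σ a b w) (by simpa using trace_nd hw)
      simp at this
      rw [this, mul_zero]
  rw [e1, sum_congr rfl fun z _ => e2 z, sum_comm, sum_congr rfl fun w _ => e3 w, ← sum_filter,
    sum_const, Nat.card_eq_fintype_card, Fintype.card_subtype]
  simp only [LinearMap.mem_ker, nsmul_eq_mul]
  ring

lemma GQ_even (σ : F ≃ₐ[ZMod 3] F) (a b : F) : Even (GQ σ a b) := by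
  have : ((GQ σ a b : ℤ) : ZMod 2) = 0 := by
    unfold GQ
    rw [Int.cast_sum]
    have hev : ∀ y, qf σ a b (-y) = qf σ a b y := by simp [qf]
    refine sum_involution (fun y _ => -y) ?_ ?_ (by simp) (by simp)
    · intro y _
      rw [hev]
      exact CharTwo.add_self_eq_zero _
    · intro y _ hy e
      have : y = 0 := by
        have : 2 * y = 0 := by linear_combination -e
        exact (mul_eq_zero.mp this).resolve_left two_ne
      subst this
      simp [qf, g] at hy
  exact (ZMod.intCast_eq_zero_iff_even).mp this

lemma HQ_val {m : ℕ} (hm : Odd m) (hF : Fintype.card F = 3 ^ m) (σ : F ≃ₐ[ZMod 3] F) (a b : F)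
    (h9 : Nat.card (LinearMap.ker (rad σ a b)) ≤ 9) :
    (Nat.card (LinearMap.ker (rad σ a b)) = 1 → HQ σ a b = 0) ∧
    (HQ σ a b = 0 ∨ HQ σ a b = 2 * 3 ^ ((m + 1) / 2) ∨ HQ σ a b = - (2 * 3 ^ ((m + 1) / 2))) := by
  have hn := norm_eq σ a b
  obtain ⟨d, hd⟩ : ∃ d, Nat.card (LinearMap.ker (rad σ a b)) = 3 ^ d :=
    ⟨Module.finrank (ZMod 3) (LinearMap.ker (rad σ a b)), by
      rw [Module.natCard_eq_pow_finrank (K := ZMod 3)]; simp⟩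
  rw [hd] at h9 hn ⊢
  have hd2 : d ≤ 2 := (Nat.pow_le_pow_iff_right (a := 3) (by norm_num)).mp (by simpa using h9)
  obtain ⟨Y, hY⟩ := GQ_even σ a b
  have hX : Even (HQ σ a b) := by
    have : Even (HQ σ a b ^ 2) := by
      rw [hY] at hn
      exact ⟨2 * (Fintype.card F * ((3 ^ d : ℕ) : ℤ)) - 6 * Y ^ 2, by linarith⟩
    exact (Int.even_pow' two_ne_zero).mp this
  obtain ⟨X, hX⟩ := hX
  rw [hX, hY, hF] at hn
  push_cast at hn
  have hXY : X ^ 2 + 3 * Y ^ 2 = 3 ^ (m + d) := by rw [pow_add]; linarith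
  have := descent (m + d) X Y hXY
  have hm' := Nat.odd_iff.mp hm
  rw [hX]
  constructor
  · intro h1
    have : d = 0 := by simpa using h1
    subst this
    rw [(descent _ X Y hXY).1 (by simpa using hm)]; rfl
  · interval_cases d
    · left; rw [this.1 (by simpa using hm)]; rfl
    · right
      rcases this.2 (by rw [Nat.even_iff]; omega) with h | h <;> rw [h]
      · left; ring
      · right; ring
    · left; rw [this.1 (by rw [Nat.odd_iff]; omega)]; rfl

lemma rad_card_le (σ : F ≃ₐ[ZMod 3] F) (hfix : ∀ x, σ x = x → x = 0 ∨ x = 1 ∨ x = -1)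
    (a b : F) (ha : a ≠ 0) : Nat.card (LinearMap.ker (rad σ a b)) ≤ 9 := by
  classical
  by_cases hy : ∃ y, y ≠ 0 ∧ rad σ a b y = 0
  swap
  · push Not at hy
    have : LinearMap.ker (rad σ a b) = ⊥ := by
      rw [Submodule.eq_bot_iff]
      intro x hx
      by_contra hx0
      exact hy x hx0 hx
    rw [this]; simp
  obtain ⟨y, hy0, hy⟩ := hy
  let W : F → F := fun z => a * (y * σ z - z * σ y)
  have hW : ∀ z, rad σ a b z = 0 → σ (W z) = W z := by
    intro z hz
    rw [rad_apply] at hz hy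
    have hs : W z = σ.symm (W z) := by
      have e : σ.symm (W z) = σ.symm (a * y) * z - σ.symm (a * z) * y := by
        rw [σ.symm_apply_eq]
        simp only [W, map_sub, map_mul, σ.apply_symm_apply]; ring
      rw [e]
      simp only [W]
      linear_combination y * hz - z * hy
    rw [hs, σ.apply_symm_apply]; exact hs
  rw [Nat.card_eq_fintype_card, Fintype.card_subtype]
  simp only [LinearMap.mem_ker]
  have hc := card_le_mul_card_image (f := W) (univ.filter fun x => rad σ a b x = 0) 3 ?_
  · have h3 : #(image W (univ.filter fun x => rad σ a b x = 0)) ≤ 3 := by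
      refine (card_le_card (t := {0, 1, -1}) ?_).trans card_le_three
      intro p hp
      simp only [mem_image, mem_filter, mem_univ, true_and] at hp
      obtain ⟨z, hz, rfl⟩ := hp
      simpa using hfix _ (hW z hz)
    omega
  · intro p hp
    simp only [mem_image, mem_filter, mem_univ, true_and] at hp
    obtain ⟨z, hz, rfl⟩ := hp
    refine (card_le_card (t := {z, z + y, z - y}) ?_).trans card_le_three
    intro x hx
    simp only [mem_filter, mem_univ, true_and] at hx
    have h1 : σ ((x - z) / y) = (x - z) / y := by
      have hσy : σ y ≠ 0 := by simpa using hy0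
      rw [map_div₀, div_eq_div_iff hσy hy0, map_sub]
      have := mul_left_cancel₀ ha hx.2
      linear_combination this
    have h2 := hfix _ h1
    simp only [mem_insert, mem_singleton]
    rw [div_eq_iff hy0, div_eq_iff hy0, div_eq_iff hy0] at h2
    rcases h2 with h2 | h2 | h2
    · left; linear_combination h2
    · right; left; linear_combination h2
    · right; right; linear_combination h2

lemma rad_one (σ : F ≃ₐ[ZMod 3] F) (hneg : ∀ x, σ x = -x → x = 0) (a b : F) (ha : a ≠ 0) :
    Nat.card (LinearMap.ker (rad σ a b)) = 1 ∨ Nat.card (LinearMap.ker (rad σ (-a) b)) = 1 := by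
  by_contra! hcon
  have key : ∀ a, Nat.card (LinearMap.ker (rad σ a b)) ≠ 1 → ∃ y, y ≠ 0 ∧ rad σ a b y = 0 := by
    intro a h1
    by_contra! hy
    apply h1
    have : LinearMap.ker (rad σ a b) = ⊥ := by
      rw [Submodule.eq_bot_iff]
      intro x hx
      by_contra hx0
      exact hy x hx0 hx
    rw [this]; simp
  obtain ⟨y, hy0, hy⟩ := key a hcon.1
  obtain ⟨z, hz0, hz⟩ := key (-a) hcon.2
  rw [rad_apply] at hy hz
  have hu : σ (a * (y * σ z + z * σ y)) = - (a * (y * σ z + z * σ y)) := by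
    set u := a * (y * σ z + z * σ y) with hu
    have e : σ.symm u = σ.symm (a * y) * z + σ.symm (a * z) * y := by
      rw [σ.symm_apply_eq]
      simp only [hu, map_add, map_mul, σ.apply_symm_apply]; ring
    have e2 : u = - σ.symm u := by
      rw [e, hu]
      rw [neg_mul, map_neg] at hz
      linear_combination z * hy - y * hz
    have := congrArg σ e2
    simpa using this
  have h0 := (mul_eq_zero.mp (hneg _ hu)).resolve_left ha
  have hσy : σ y ≠ 0 := by simpa using hy0
  have : σ (z / y) = -(z / y) := by
    rw [map_div₀, ← neg_div, div_eq_div_iff hσy hy0]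
    linear_combination h0
  have := hneg _ this
  rw [div_eq_zero_iff] at this
  tauto

lemma exists_sigma {m k : ℕ} (hk : m + 1 = 8 * k) (hF : Fintype.card F = 3 ^ m) :
    ∃ σ : F ≃ₐ[ZMod 3] F, (∀ x, σ x = x ^ 3 ^ k) ∧
      (∀ x, σ x = x → x = 0 ∨ x = 1 ∨ x = -1) ∧ (∀ x, σ x = -x → x = 0) := by
  let φ := FiniteField.frobeniusAlgEquivOfAlgebraic (ZMod 3) F
  have hφ : ∀ n x, (φ ^ n) x = x ^ 3 ^ n := by
    intro n x
    have := congrFun (FiniteField.coe_frobeniusAlgEquivOfAlgebraic_iterate (ZMod 3) F n) x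
    rw [ZMod.card] at this
    rw [← this, AlgEquiv.coe_pow]
  have hcube : ∀ x : F, x ^ 3 ^ (8 * k) = x ^ 3 := by
    intro x
    rw [← hk, pow_succ, pow_mul, ← hF, FiniteField.pow_card]
  have h8 : ∀ x, (φ ^ k) ((φ ^ k) ((φ ^ k) ((φ ^ k) ((φ ^ k) ((φ ^ k) ((φ ^ k) ((φ ^ k) x))))))) =
      x ^ 3 := by
    intro x
    rw [← hcube x, ← hφ, mul_comm, pow_mul]
    rfl
  have hf : ∀ x : F, x ^ 3 = x → x = 0 ∨ x = 1 ∨ x = -1 := by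
    intro x hx
    have : x * ((x - 1) * (x + 1)) = 0 := by linear_combination hx
    rcases mul_eq_zero.mp this with h | h
    · exact Or.inl h
    · rcases mul_eq_zero.mp h with h | h
      · right; left; linear_combination h
      · right; right; linear_combination h
  refine ⟨φ ^ k, hφ k, ?_, ?_⟩
  · intro x hx
    apply hf
    have := h8 x
    simp only [hx] at this
    exact this.symm
  · intro x hx
    have := h8 x
    simp only [hx, map_neg, neg_neg] at this
    rcases hf x this.symm with h | h | h
    · exact h
    · subst h
      rw [map_one] at hx
      exact absurd (by linear_combination hx) (two_ne (F := F))
    · subst h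
      rw [map_neg, map_one] at hx
      exact absurd (by linear_combination -hx) (two_ne (F := F))

/-- the doubled real part of the character sum -/
noncomputable def TS (v : ℕ) (ab : F × F) : ℤ :=
  ∑ x : F, h (Algebra.trace (ZMod 3) F (ab.1 * x + ab.2 * x ^ v))

lemma two_TS {m k v : ℕ} (hk : m + 1 = 8 * k) (hF : Fintype.card F = 3 ^ m)
    (hv : v * (3 ^ k + 1) = 3 ^ (m + 1) - 1) (hv2 : Even v) (σ : F ≃ₐ[ZMod 3] F)
    (hσ : ∀ x, σ x = x ^ 3 ^ k) (a b : F) :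
    2 * TS v (a, b) = HQ σ a b + HQ σ (-a) b := by
  classical
  have hv0 : v ≠ 0 := by
    rintro rfl
    have : 3 ^ 1 ≤ 3 ^ (m + 1) := Nat.pow_le_pow_right (by norm_num) (by omega)
    omega
  have hchar : ringChar F ≠ 2 := by
    intro h2
    apply two_ne (F := F)
    have := ringChar.Nat.cast_ringChar (R := F)
    rw [h2] at this
    exact_mod_cast this
  have he : Even (3 ^ k + 1) := by
    have : Odd (3 ^ k) := Odd.pow (by decide)
    exact this.add_one
  -- powers
  have hpv : ∀ y : F, (y ^ (3 ^ k + 1)) ^ v = y ^ 2 := by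
    intro y
    rw [← pow_mul, mul_comm, hv]
    by_cases hy : y = 0
    · subst hy
      rw [zero_pow two_ne_zero, zero_pow]
      have : 3 ^ 1 ≤ 3 ^ (m + 1) := Nat.pow_le_pow_right (by norm_num) (by omega)
      omega
    · apply mul_right_cancel₀ hy
      rw [← pow_succ, Nat.sub_add_cancel (Nat.pos_of_ne_zero (by positivity)), pow_succ 3 m,
        pow_mul, ← hF, FiniteField.pow_card, pow_succ]
  set M := Fintype.card F / 2 with hM
  have hModd : Odd M := by
    rw [hM, hF]
    have h9 : 3 ^ m % 4 = 3 := by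
      have : m = 2 * (4 * k - 1) + 1 := by omega
      rw [this, pow_succ, pow_mul, Nat.mul_mod, Nat.pow_mod]
      norm_num
    rw [Nat.odd_iff]; omega
  have hdich : ∀ y : F, y ≠ 0 → y ^ M = 1 ∨ y ^ M = -1 := fun y hy =>
    FiniteField.pow_dichotomy hchar hy
  let θ : F → F := fun y => y ^ M * y ^ (3 ^ k + 1)
  have hM0 : M ≠ 0 := by rintro h0; rw [h0] at hModd; exact absurd hModd (by decide)
  have hθv : ∀ y, θ y ^ v = y ^ 2 := by
    intro y
    simp only [θ, mul_pow, hpv]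
    by_cases hy : y = 0
    · simp [hy]
    · rcases hdich y hy with h | h <;> simp [h, hv2.neg_one_pow]
  have hθneg : ∀ y, θ (-y) = - θ y := by
    intro y
    simp only [θ, hModd.neg_pow, he.neg_pow]; ring
  have hθ0 : ∀ y, θ y = 0 → y = 0 := by
    intro y hy
    have := hθv y
    rw [hy, zero_pow hv0] at this
    exact pow_eq_zero_iff two_ne_zero |>.mp this.symm
  have hinj : Function.Injective θ := by
    intro y z hyz
    have h2 : y ^ 2 = z ^ 2 := by rw [← hθv, ← hθv, hyz]
    rcases sq_eq_sq_iff_eq_or_eq_neg.mp h2 with h | h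
    · exact h
    · rw [h, hθneg] at hyz
      have : θ z = 0 := by
        have : 2 * θ z = 0 := by linear_combination -hyz
        exact (mul_eq_zero.mp this).resolve_left two_ne
      have := hθ0 _ this
      rw [h, this, neg_zero]
  have hbij : Function.Bijective θ := Finite.injective_iff_bijective.mp hinj
  have hbij' : Function.Bijective (fun y => θ (-y)) :=
    hbij.comp (Equiv.neg F).bijective
  have e1 := hbij.sum_comp (fun x => h (Algebra.trace (ZMod 3) F (a * x + b * x ^ v)))
  have e2 := hbij'.sum_comp (fun x => h (Algebra.trace (ZMod 3) F (a * x + b * x ^ v)))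
  have : 2 * TS v (a, b) = TS v (a, b) + TS v (a, b) := by ring
  rw [this]
  unfold TS HQ
  simp only
  nth_rewrite 1 [← e1]
  rw [← e2, ← sum_add_distrib, ← sum_add_distrib]
  refine sum_congr rfl fun y _ => ?_
  have hσy : σ y * y = y ^ (3 ^ k + 1) := by rw [hσ, pow_succ]
  simp only [hθv, hθneg, qf, hσy]
  rw [neg_pow, hv2.neg_one_pow, one_mul, hθv]
  by_cases hy : y = 0
  · subst hy; simp [θ, hM0]
  rcases hdich y hy with h1 | h1
  · simp [θ, h1]
  · simp [θ, h1, add_comm]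

lemma TS_val {m k v : ℕ} (hk : m + 1 = 8 * k) (hF : Fintype.card F = 3 ^ m)
    (hv : v * (3 ^ k + 1) = 3 ^ (m + 1) - 1) (hv2 : Even v) (ab : F × F) (hab : ab ≠ 0) :
    TS v ab = 0 ∨ TS v ab = 3 ^ ((m + 1) / 2) ∨ TS v ab = - 3 ^ ((m + 1) / 2) := by
  obtain ⟨σ, hσ, hfix, hneg⟩ := exists_sigma hk hF
  obtain ⟨a, b⟩ := ab
  have h2 := two_TS hk hF hv hv2 σ hσ a b
  have hm : Odd m := by rw [Nat.odd_iff]; omega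
  by_cases ha : a = 0
  · subst ha
    have hb : b ≠ 0 := by rintro rfl; exact hab rfl
    have hc : Nat.card (LinearMap.ker (rad σ 0 b)) = 1 := by
      have : LinearMap.ker (rad σ 0 b) = ⊥ := by
        rw [Submodule.eq_bot_iff]
        intro x hx
        rw [LinearMap.mem_ker, rad_apply] at hx
        simpa [hb, two_ne] using hx
      rw [this]; simp
    have h0 := (HQ_val hm hF σ 0 b (by omega)).1 hc
    rw [neg_zero, h0] at h2
    left; linarith
  · have v1 := HQ_val hm hF σ a b (rad_card_le σ hfix a b ha)
    have v2 := HQ_val hm hF σ (-a) b (rad_card_le σ hfix (-a) b (neg_ne_zero.mpr ha))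
    rcases rad_one σ hneg a b ha with h1 | h1
    · rw [v1.1 h1] at h2
      rcases v2.2 with h | h | h <;> rw [h] at h2
      · left; linarith
      · right; left; linarith
      · right; right; linarith
    · rw [v2.1 h1] at h2
      rcases v1.2 with h | h | h <;> rw [h] at h2
      · left; linarith
      · right; left; linarith
      · right; right; linarith

lemma sum_ab (x y : F) [Decidable (x = 0 ∧ y = 0)] :
    ∑ ab : F × F, h (Algebra.trace (ZMod 3) F (ab.1 * x + ab.2 * y)) =
      if x = 0 ∧ y = 0 then 2 * (Fintype.card F : ℤ) ^ 2 else 0 := by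
  split_ifs with hxy
  · simp [hxy.1, hxy.2, h]; ring
  · have := sum_h_aff ((Algebra.trace (ZMod 3) F).toAddMonoidHom.comp
      (((AddMonoidHom.mulRight x).comp (AddMonoidHom.fst F F)) +
        ((AddMonoidHom.mulRight y).comp (AddMonoidHom.snd F F)))) 0 (by
        by_cases hx : x = 0
        · have hy : y ≠ 0 := fun hy => hxy ⟨hx, hy⟩
          obtain ⟨z, hz⟩ := trace_nd hy
          exact ⟨(0, z), by simpa using hz⟩
        · obtain ⟨z, hz⟩ := trace_nd hx
          exact ⟨(z, 0), by simpa using hz⟩)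
    simpa using this

lemma TS_zero (v : ℕ) : TS v (0 : F × F) = 2 * Fintype.card F := by
  simp [TS, h]; ring

lemma TS_moment1 (v : ℕ) (hv0 : v ≠ 0) :
    ∑ ab : F × F, TS v ab = 2 * (Fintype.card F : ℤ) ^ 2 := by
  classical
  unfold TS
  rw [sum_comm]
  simp only [sum_ab]
  rw [sum_eq_single 0]
  · simp [hv0]
  · intro x _ hx; simp [hx]
  · simp

lemma TS_moment2 (v : ℕ) (hv0 : v ≠ 0) (hv2 : Even v) :
    ∑ ab : F × F, TS v ab ^ 2 =
      2 * (Fintype.card F : ℤ) ^ 2 * (Fintype.card F + 1) := by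
  classical
  have e1 : ∀ ab : F × F, TS v ab ^ 2 = ∑ x : F, ∑ y : F,
      (h (Algebra.trace (ZMod 3) F (ab.1 * (x + y) + ab.2 * (x ^ v + y ^ v))) +
       h (Algebra.trace (ZMod 3) F (ab.1 * (x - y) + ab.2 * (x ^ v - y ^ v)))) := by
    intro ab
    rw [sq, TS, sum_mul_sum]
    refine sum_congr rfl fun x _ => sum_congr rfl fun y _ => ?_
    rw [h_mul, ← map_add, ← map_sub]
    congr 3 <;> ring
  rw [sum_congr rfl fun ab _ => e1 ab, sum_comm]
  have e2 : ∀ x : F, ∑ ab : F × F, ∑ y : F,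
      (h (Algebra.trace (ZMod 3) F (ab.1 * (x + y) + ab.2 * (x ^ v + y ^ v))) +
       h (Algebra.trace (ZMod 3) F (ab.1 * (x - y) + ab.2 * (x ^ v - y ^ v)))) =
      (if x = 0 then 2 * (Fintype.card F : ℤ) ^ 2 else 0) + 2 * (Fintype.card F : ℤ) ^ 2 := by
    intro x
    rw [sum_comm]
    simp only [sum_add_distrib, sum_ab]
    congr 1
    · rw [sum_eq_single (-x)]
      · congr 1
        simp only [add_neg_cancel, true_and, hv2.neg_pow, eq_iff_iff]
        constructor
        · intro hx
          have : 2 * x ^ v = 0 := by linear_combination hx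
          exact pow_eq_zero_iff hv0 |>.mp ((mul_eq_zero.mp this).resolve_left two_ne)
        · rintro rfl; simp [hv0]
      · intro y _ hy
        rw [if_neg]
        rintro ⟨h1, _⟩
        exact hy (by linear_combination h1)
      · simp
    · rw [sum_eq_single x]
      · simp
      · intro y _ hy
        rw [if_neg]
        rintro ⟨h1, _⟩
        exact hy (by linear_combination -h1)
      · simp
  rw [sum_congr rfl fun x _ => e2 x, sum_add_distrib]
  simp; ring

lemma wt_eq {m : ℕ} (hF : Fintype.card F = 3 ^ m)
    (α : Fˣ) (hα : ∀ x : Fˣ, x ∈ Subgroup.zpowers α) (v : ℕ) (hv0 : v ≠ 0) (a b : F) :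
    3 * (hammingNorm (fun i : Fin (3 ^ m - 1) => Algebra.trace (ZMod 3) F (a * (α : F) ^ (i : ℕ)) +
        Algebra.trace (ZMod 3) F (b * (α : F) ^ ((i : ℕ) * v))) : ℤ) =
      2 * 3 ^ m - TS v (a, b) := by
  classical
  have hord : orderOf α = 3 ^ m - 1 := by
    rw [orderOf_eq_card_of_forall_mem_zpowers hα, Nat.card_eq_fintype_card, Fintype.card_units, hF]
  let e : Fin (3 ^ m - 1) → Fˣ := fun i => α ^ (i : ℕ)
  have hinj : Function.Injective e := by
    intro i j hij
    apply Fin.ext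
    exact pow_injOn_Iio_orderOf (by simp [hord]) (by simp [hord]) hij
  have hbij : Function.Bijective e := by
    rw [Fintype.bijective_iff_injective_and_card]
    exact ⟨hinj, by simp [Fintype.card_units, hF]⟩
  have hh : ∀ c : ZMod 3, h c = 2 - 3 * (if c ≠ 0 then 1 else 0) := by decide
  have e1 : TS v (a, b) = 2 * 3 ^ m - 3 * ∑ x : F,
      (if Algebra.trace (ZMod 3) F (a * x + b * x ^ v) ≠ 0 then (1 : ℤ) else 0) := by
    unfold TS
    simp only [hh, sum_sub_distrib, ← mul_sum]
    simp [hF]; ring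
  have e2 : ∑ x : F, (if Algebra.trace (ZMod 3) F (a * x + b * x ^ v) ≠ 0 then (1 : ℤ) else 0) =
      ∑ x : Fˣ, (if Algebra.trace (ZMod 3) F (a * x + b * (x : F) ^ v) ≠ 0 then (1 : ℤ) else 0) := by
    symm
    refine sum_of_injOn (fun x : Fˣ => (x : F)) (fun x _ y _ h => Units.ext h) (by simp) ?_
      (by simp)
    intro x _ hx
    have : x = 0 := by
      by_contra h0
      exact hx ⟨Units.mk0 x h0, by simp, rfl⟩
    subst this
    simp [hv0]
  rw [e1, e2, ← hbij.sum_comp]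
  simp only [hammingNorm, e]
  rw [card_filter]
  push_cast
  simp only [pow_mul, map_add]
  ring
end
end TC

theorem stmt7 {m : ℕ} (hm : m % 8 = 7)
    {F : Type*} [Field F] [Fintype F] [Algebra (ZMod 3) F]
    (hF : Fintype.card F = 3 ^ m)
    (α : Fˣ) (hα : ∀ x : Fˣ, x ∈ Subgroup.zpowers α)
    (v : ℕ)
    (hv : v = (3 ^ ((m + 1) / 8) - 1) * (3 ^ ((m + 1) / 4) + 1) * (3 ^ ((m + 1) / 2) + 1))
    (c : F × F → Fin (3 ^ m - 1) → ZMod 3)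
    (hc : c = fun (ab : F × F) (i : Fin (3 ^ m - 1)) =>
      Algebra.trace (ZMod 3) F (ab.1 * (α : F) ^ (i : ℕ)) +
        Algebra.trace (ZMod 3) F (ab.2 * (α : F) ^ ((i : ℕ) * v))) :
    ∀ w : ℕ,
      {ab : F × F | hammingNorm (c ab) = w}.ncard =
        if w = 0 then 1
        else if w = 2 * 3 ^ (m - 1) - 3 ^ ((m - 1) / 2) then
          (3 ^ m - 1) * (3 ^ (m - 1) + 3 ^ ((m - 1) / 2))
        else if w = 2 * 3 ^ (m - 1) then
          (3 ^ m - 1) * (3 ^ m - 2 * 3 ^ (m - 1) + 1)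
        else if w = 2 * 3 ^ (m - 1) + 3 ^ ((m - 1) / 2) then
          (3 ^ m - 1) * (3 ^ (m - 1) - 3 ^ ((m - 1) / 2))
        else 0 := by
  classical
  obtain ⟨k, hk⟩ : ∃ k, m + 1 = 8 * k := ⟨(m + 1) / 8, by omega⟩
  have hk8 : (m + 1) / 8 = k := by omega
  have hk4 : (m + 1) / 4 = 2 * k := by omega
  have hk2 : (m + 1) / 2 = 4 * k := by omega
  rw [hk8, hk4, hk2] at hv
  have hkpos : 1 ≤ k := by omega
  have h3k : 3 ≤ 3 ^ k := by
    calc 3 = 3 ^ 1 := by norm_num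
      _ ≤ 3 ^ k := Nat.pow_le_pow_right (by norm_num) hkpos
  have hv2 : Even v := by
    rw [hv]
    have : Odd (3 ^ (4 * k)) := Odd.pow (by decide)
    exact Even.mul_left this.add_one _
  have hv0 : v ≠ 0 := by
    rw [hv]
    have : 3 ^ k - 1 ≠ 0 := by omega
    positivity
  have hve : v * (3 ^ k + 1) = 3 ^ (m + 1) - 1 := by
    have hz : (v : ℤ) * (3 ^ k + 1) = 3 ^ (m + 1) - 1 := by
      rw [hv, hk]
      push_cast [Nat.cast_sub (show 1 ≤ 3 ^ k by omega)]
      rw [mul_comm 2 k, mul_comm 4 k, mul_comm 8 k, pow_mul, pow_mul, pow_mul]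
      ring
    have h1 : 1 ≤ 3 ^ (m + 1) := Nat.one_le_pow _ _ (by norm_num)
    zify [h1]
    exact hz
  -- abbreviation
  obtain ⟨s, hs⟩ : ∃ s, s = 3 ^ ((m - 1) / 2) := ⟨_, rfl⟩
  have hs1 : 3 ^ (m - 1) = s ^ 2 := by
    rw [hs, ← pow_mul]; congr 1; omega
  have hsq : 3 ^ m = 3 * s ^ 2 := by
    rw [← hs1, ← pow_succ']; congr 1; omega
  have hsP : 3 ^ ((m + 1) / 2) = 3 * s := by
    rw [hs, ← pow_succ']; congr 1; omega
  have hsge : 2 ≤ s := by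
    have : 3 ^ 1 ≤ 3 ^ ((m - 1) / 2) := Nat.pow_le_pow_right (by norm_num) (by omega)
    omega
  have hss : s < s ^ 2 := by nlinarith
  rw [hs1, ← hs]
  have hqZ : (3 : ℤ) ^ m = 3 * (s : ℤ) ^ 2 := by exact_mod_cast hsq
  have hwt : ∀ ab : F × F, 3 * (hammingNorm (c ab) : ℤ) = 6 * (s : ℤ) ^ 2 - TC.TS v ab := by
    intro ab
    rw [hc, TC.wt_eq hF α hα v hv0, hqZ]; ring
  have hval : ∀ ab : F × F, ab ≠ 0 →
      TC.TS v ab = 0 ∨ TC.TS v ab = 3 * s ∨ TC.TS v ab = -(3 * s) := by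
    intro ab hab
    have := TC.TS_val hk hF hve hv2 ab hab
    have hP : (3 : ℤ) ^ ((m + 1) / 2) = 3 * s := by exact_mod_cast hsP
    rwa [hP] at this
  have h0 : TC.TS v (0 : F × F) = 6 * (s : ℤ) ^ 2 := by
    rw [TC.TS_zero, hF]; push_cast; rw [hqZ]; ring
  -- counting
  let U : Finset (F × F) := Finset.univ.erase 0
  let A : Finset (F × F) := U.filter fun ab => TC.TS v ab = 3 * s
  let Z : Finset (F × F) := U.filter fun ab => TC.TS v ab = 0
  let B : Finset (F × F) := U.filter fun ab => TC.TS v ab = -(3 * s)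
  have hs0 : (0 : ℤ) < s := by omega
  have hU : (U.card : ℤ) = 9 * (s : ℤ) ^ 4 - 1 := by
    have : U.card + 1 = Fintype.card (F × F) := by
      rw [← Finset.card_univ]; exact Finset.card_erase_add_one (Finset.mem_univ _)
    rw [Fintype.card_prod, hF, hsq] at this
    zify at this
    linarith
  have hcard : (U.card : ℤ) = A.card + Z.card + B.card := by
    simp only [A, Z, B, Finset.card_filter, Finset.card_eq_sum_ones U]
    push_cast
    rw [← Finset.sum_add_distrib, ← Finset.sum_add_distrib]
    refine Finset.sum_congr rfl fun ab hab => ?_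
    rcases hval ab (Finset.ne_of_mem_erase hab) with h | h | h <;> rw [h] <;>
      split_ifs <;> omega
  have hm1 : 3 * (s : ℤ) * (A.card - B.card) = 18 * (s : ℤ) ^ 4 - 6 * (s : ℤ) ^ 2 := by
    have t1 := TC.TS_moment1 (F := F) v hv0
    rw [← Finset.add_sum_erase _ _ (Finset.mem_univ (0 : F × F)), h0, hF] at t1
    push_cast at t1
    rw [hqZ] at t1
    have : ∑ ab ∈ U, TC.TS v ab = 3 * (s : ℤ) * (A.card - B.card) := by
      simp only [A, B, Finset.card_filter]
      push_cast
      rw [← Finset.sum_sub_distrib, Finset.mul_sum]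
      refine Finset.sum_congr rfl fun ab hab => ?_
      rcases hval ab (Finset.ne_of_mem_erase hab) with h | h | h <;> rw [h] <;>
        split_ifs <;> first | omega | (exfalso; omega) | ring
    simp only [U] at this
    rw [this] at t1
    linarith
  have hm2 : 9 * (s : ℤ) ^ 2 * (A.card + B.card) =
      54 * (s : ℤ) ^ 6 - 18 * (s : ℤ) ^ 4 := by
    have t1 := TC.TS_moment2 (F := F) v hv0 hv2
    rw [← Finset.add_sum_erase _ _ (Finset.mem_univ (0 : F × F)), h0, hF] at t1
    push_cast at t1
    rw [hqZ] at t1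
    have : ∑ ab ∈ U, TC.TS v ab ^ 2 = 9 * (s : ℤ) ^ 2 * (A.card + B.card) := by
      simp only [A, B, Finset.card_filter]
      push_cast
      rw [← Finset.sum_add_distrib, Finset.mul_sum]
      refine Finset.sum_congr rfl fun ab hab => ?_
      rcases hval ab (Finset.ne_of_mem_erase hab) with h | h | h <;> rw [h] <;>
        split_ifs <;> first | (exfalso; omega) | ring
    simp only [U] at this
    rw [this] at t1
    linarith
  have hd : (A.card : ℤ) - B.card = 6 * (s : ℤ) ^ 3 - 2 * s := by
    apply mul_left_cancel₀ (show (3 * (s : ℤ)) ≠ 0 by positivity)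
    rw [hm1]; ring
  have hsum : (A.card : ℤ) + B.card = 6 * (s : ℤ) ^ 4 - 2 * (s : ℤ) ^ 2 := by
    apply mul_left_cancel₀ (show (9 * (s : ℤ) ^ 2) ≠ 0 by positivity)
    rw [hm2]; ring
  have h1q : 1 ≤ 3 * s ^ 2 := by omega
  have hset : ∀ (w : ℕ) (S : Finset (F × F)),
      (∀ ab, hammingNorm (c ab) = w ↔ ab ∈ S) →
      {ab : F × F | hammingNorm (c ab) = w}.ncard = S.card := by
    intro w S hS
    rw [← Set.ncard_coe_finset]
    congr 1
    ext ab
    simpa using hS ab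
  have hssZ : (s : ℤ) < (s : ℤ) ^ 2 := by exact_mod_cast hss
  have cases : ∀ ab : F × F, (ab = 0 ∧ TC.TS v ab = 6 * (s : ℤ) ^ 2) ∨
      (ab ≠ 0 ∧ (TC.TS v ab = 0 ∨ TC.TS v ab = 3 * s ∨ TC.TS v ab = -(3 * s))) := by
    intro ab
    by_cases hab : ab = 0
    · left; exact ⟨hab, by rw [hab, h0]⟩
    · right; exact ⟨hab, hval ab hab⟩
  intro w
  split_ifs with w0 w1 w2 w3
  · rw [hset w {0}, Finset.card_singleton]
    intro ab
    have := hwt ab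
    rw [Finset.mem_singleton]
    zify at w0 ⊢
    rcases cases ab with ⟨h, h'⟩ | ⟨h, h'⟩
    · simp only [h, iff_true]; rw [← h]; omega
    · simp only [h, iff_false]; omega
  · rw [hset w A, hsq]
    · zify [h1q]; linarith
    intro ab
    have := hwt ab
    zify [show s ≤ 2 * s ^ 2 by omega] at w1 ⊢
    simp only [A, U, Finset.mem_filter, Finset.mem_erase, Finset.mem_univ, and_true]
    rcases cases ab with ⟨h, h'⟩ | ⟨h, h'⟩
    · simp only [h, ne_eq, not_true, false_and, iff_false]; rw [← h]; omega
    · simp only [h, ne_eq, not_false_eq_true, true_and]; omega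
  · rw [hset w Z, hsq]
    · zify [h1q, show 2 * s ^ 2 ≤ 3 * s ^ 2 by omega]; linarith
    intro ab
    have := hwt ab
    zify at w2 ⊢
    simp only [Z, U, Finset.mem_filter, Finset.mem_erase, Finset.mem_univ, and_true]
    rcases cases ab with ⟨h, h'⟩ | ⟨h, h'⟩
    · simp only [h, ne_eq, not_true, false_and, iff_false]; rw [← h]; omega
    · simp only [h, ne_eq, not_false_eq_true, true_and]; omega
  · rw [hset w B, hsq]
    · zify [h1q, hss.le]; linarith
    intro ab
    have := hwt ab
    zify at w3 ⊢
    simp only [B, U, Finset.mem_filter, Finset.mem_erase, Finset.mem_univ, and_true]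
    rcases cases ab with ⟨h, h'⟩ | ⟨h, h'⟩
    · simp only [h, ne_eq, not_true, false_and, iff_false]; rw [← h]; omega
    · simp only [h, ne_eq, not_false_eq_true, true_and]; omega
  · rw [hset w ∅, Finset.card_empty]
    intro ab
    have := hwt ab
    simp only [Finset.notMem_empty, iff_false]
    intro hw
    rw [hw] at this
    zify [show s ≤ 2 * s ^ 2 by omega] at w0 w1 w2 w3
    rcases cases ab with ⟨h, h'⟩ | ⟨h, h'⟩ <;> omega
end

section
/- Let m ≡ 7 (mod 8), q = 3^m, h = (m+1)/8, and s = 3^h + 1. Then a pair (x₁, y₁) ∈ GF(q) × GF(q) satisfies y₁² − x₁² = 1 if and only if there exists θ ∈ GF(q)* such that x₁ = θ − θ^{−1} and y₁ = −θ − θ^{−1}. Moreover, for such θ one has x₁^s = θ^s + θ^{−s} − (θ^{3^h−1} + θ^{1−3^h}) and y₁^s = θ^s + θ^{−s} + (θ^{3^h−1} + θ^{1−3^h}). -/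
/-- with `m ≡ 7 (mod 8)`, `q = 3^m`, `h = (m+1)/8` and `s = 3^h + 1`:
the solutions of `y₁² - x₁² = 1` in `GF(q)²` are exactly the pairs
`(θ - θ⁻¹, -θ - θ⁻¹)` for `θ ∈ GF(q)*`, and for such `θ` one has
`x₁^s = θ^s + θ^{-s} - (θ^{3^h-1} + θ^{1-3^h})` and
`y₁^s = θ^s + θ^{-s} + (θ^{3^h-1} + θ^{1-3^h})`. -/
theorem stmt8 {m : ℕ} (hm : m % 8 = 7)
    {F : Type*} [Field F] [Fintype F] (hF : Fintype.card F = 3 ^ m)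
    (h s : ℕ) (hh : h = (m + 1) / 8) (hs : s = 3 ^ h + 1) :
    (∀ x₁ y₁ : F, y₁ ^ 2 - x₁ ^ 2 = 1 ↔
        ∃ θ : F, θ ≠ 0 ∧ x₁ = θ - θ⁻¹ ∧ y₁ = -θ - θ⁻¹) ∧
    (∀ θ : F, θ ≠ 0 →
        (θ - θ⁻¹) ^ s =
          θ ^ s + θ⁻¹ ^ s - (θ ^ (3 ^ h - 1) + θ⁻¹ ^ (3 ^ h - 1)) ∧
        (-θ - θ⁻¹) ^ s =
          θ ^ s + θ⁻¹ ^ s + (θ ^ (3 ^ h - 1) + θ⁻¹ ^ (3 ^ h - 1))) := by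
  have hm0 : m ≠ 0 := by omega
  have : Fact (Nat.Prime 3) := ⟨by norm_num⟩
  have h3 : (3 : F) = 0 := by
    have h1 : ((Fintype.card F : ℕ) : F) = 0 := Nat.cast_card_eq_zero F
    rw [hF] at h1
    push_cast at h1
    exact (pow_eq_zero_iff hm0).1 h1
  have : CharP F 3 := by
    refine (CharP.charP_iff_prime_eq_zero (by norm_num)).2 ?_
    exact_mod_cast h3
  refine ⟨fun x y => ⟨fun hxy => ?_, ?_⟩, fun θ hθ => ?_⟩
  · have hp : (y - x) * (y + x) = 1 := by linear_combination hxy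
    have hinv : (y - x)⁻¹ = y + x := inv_eq_of_mul_eq_one_right hp
    refine ⟨y - x, left_ne_zero_of_mul_eq_one hp, ?_, ?_⟩
    · rw [hinv]; linear_combination x * h3
    · rw [hinv]; linear_combination y * h3
  · rintro ⟨θ, hθ, rfl, rfl⟩
    have := mul_inv_cancel₀ hθ
    linear_combination 4 * this + h3
  · obtain ⟨n, hn⟩ : ∃ n, 3 ^ h = n + 1 :=
      ⟨3 ^ h - 1, by have : 0 < 3 ^ h := by positivity
                     omega⟩
    have e1 : ∀ a b : F, (a - b) ^ (n + 1) = a ^ (n + 1) - b ^ (n + 1) := by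
      intro a b
      rw [← hn]
      exact sub_pow_char_pow a b h
    have e2 : (-θ) ^ (n + 1) = -θ ^ (n + 1) := by
      have := e1 0 θ
      simpa using this
    have hi := mul_inv_cancel₀ hθ
    subst hs
    rw [hn, Nat.add_sub_cancel, pow_succ (θ - θ⁻¹), pow_succ (-θ - θ⁻¹), e1, e1, e2]
    constructor
    · linear_combination (-θ ^ n - θ⁻¹ ^ n) * hi
    · linear_combination (θ ^ n + θ⁻¹ ^ n) * hi
end

section
/- Let m be a positive integer with m ≡ 7 (mod 16), q = 3^m, h = (m+1)/8, and s = 3^h + 1. Then s ≡ 4 (mod 8), gcd(s, q²−1) = 4, and gcd(3^h − 1, q²−1) = 2. -/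
/-- if `m ≡ 7 (mod 16)`, `q = 3^m`, `h = (m+1)/8` and `s = 3^h + 1`, then
`s ≡ 4 (mod 8)`, `gcd(s, q²-1) = 4` and `gcd(3^h - 1, q²-1) = 2`. -/
theorem stmt9 {m : ℕ} (hm : m % 16 = 7)
    (q h s : ℕ) (hq : q = 3 ^ m) (hh : h = (m + 1) / 8) (hs : s = 3 ^ h + 1) :
    s % 8 = 4 ∧
    Nat.gcd s (q ^ 2 - 1) = 4 ∧
    Nat.gcd (3 ^ h - 1) (q ^ 2 - 1) = 2 := by
  obtain ⟨k, hk⟩ : ∃ k, h = 2 * k + 1 := ⟨h / 2, by omega⟩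
  have hmh : m + 1 = 8 * h := by omega
  have hq2 : q ^ 2 = 3 ^ (2 * m) := by rw [hq, ← pow_mul, mul_comm]
  have hcop : Nat.gcd h m = 1 := by
    have h1 : Nat.gcd h m ∣ m + 1 := hmh ▸ (Nat.gcd_dvd_left h m).mul_left 8
    exact Nat.dvd_one.mp ((Nat.dvd_add_right (Nat.gcd_dvd_right h m)).mp h1)
  have hcop2 : Nat.gcd h (2 * m) = 1 := by
    have h2 : Nat.Coprime h 2 := by
      rw [Nat.coprime_two_right]; exact ⟨k, hk⟩
    exact Nat.Coprime.mul_right h2 hcop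
  have hs8 : s % 8 = 4 := by
    rw [hs, hk, pow_succ, pow_mul, Nat.add_mod, Nat.mul_mod, Nat.pow_mod]
    norm_num
  have hg8 : Nat.gcd (3 ^ (2 * h) - 1) (3 ^ (2 * m) - 1) = 8 := by
    rw [Nat.pow_sub_one_gcd_pow_sub_one, Nat.gcd_mul_left, hcop]; norm_num
  have hsd : s ∣ 3 ^ (2 * h) - 1 := by
    refine ⟨3 ^ h - 1, ?_⟩
    rw [hs, mul_comm 2 h, pow_mul]
    exact Nat.sq_sub_sq (3 ^ h) 1
  refine ⟨hs8, ?_, ?_⟩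
  · rw [hq2]
    have h8 : 8 ∣ 3 ^ (2 * m) - 1 := hg8 ▸ Nat.gcd_dvd_right _ _
    have hd : Nat.gcd s (3 ^ (2 * m) - 1) ∣ 8 := by
      have := Nat.gcd_dvd_gcd_of_dvd_left (3 ^ (2 * m) - 1) hsd
      rwa [hg8] at this
    have h4 : 4 ∣ Nat.gcd s (3 ^ (2 * m) - 1) :=
      Nat.dvd_gcd (by omega) (by omega)
    have hl := Nat.gcd_dvd_left s (3 ^ (2 * m) - 1)
    generalize Nat.gcd s (3 ^ (2 * m) - 1) = g at *
    have hle := Nat.le_of_dvd (by norm_num) hd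
    have : g ≠ 8 := by rintro rfl; omega
    have : g ≠ 0 := by rintro rfl; simp at hd
    omega
  · rw [hq2, Nat.pow_sub_one_gcd_pow_sub_one, hcop2]; norm_num
end

section
/- Let m be a positive integer with m ≡ 15 (mod 16) (i.e., m ≡ −1 (mod 16)), q = 3^m, h = (m+1)/8, and s = 3^h + 1. Then s ≡ 2 (mod 8), gcd(s, q²−1) = 2, and gcd(3^h − 1, q²−1) = 8. -/
/-- if `m ≡ 15 (mod 16)`, `q = 3^m`, `h = (m+1)/8` and `s = 3^h + 1`, then
`s ≡ 2 (mod 8)`, `gcd(s, q²-1) = 2` and `gcd(3^h - 1, q²-1) = 8`. -/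
theorem stmt10 {m : ℕ} (hm : m % 16 = 15)
    (q h s : ℕ) (hq : q = 3 ^ m) (hh : h = (m + 1) / 8) (hs : s = 3 ^ h + 1) :
    s % 8 = 2 ∧
    Nat.gcd s (q ^ 2 - 1) = 2 ∧
    Nat.gcd (3 ^ h - 1) (q ^ 2 - 1) = 8 := by
  have hmh : m + 1 = 8 * h := by omega
  obtain ⟨k, hk⟩ : ∃ k, h = 2 * k := ⟨h / 2, by omega⟩
  have hcop : Nat.gcd k m = 1 := by
    have h1 : Nat.gcd k m ∣ m + 1 := by
      rw [hmh, hk]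
      exact Dvd.dvd.mul_left (Dvd.dvd.mul_left (Nat.gcd_dvd_left k m) 2) 8
    exact Nat.dvd_one.mp ((Nat.dvd_add_right (Nat.gcd_dvd_right k m)).mp h1)
  have hcop2 : Nat.gcd h m = 1 := by
    have h1 : Nat.gcd h m ∣ m + 1 := by
      rw [hmh]
      exact Dvd.dvd.mul_left (Nat.gcd_dvd_left h m) 8
    exact Nat.dvd_one.mp ((Nat.dvd_add_right (Nat.gcd_dvd_right h m)).mp h1)
  have hq2 : q ^ 2 = 3 ^ (2 * m) := by rw [hq, ← pow_mul, mul_comm]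
  have key : Nat.gcd (3 ^ h - 1) (q ^ 2 - 1) = 8 := by
    rw [hq2, Nat.pow_sub_one_gcd_pow_sub_one, hk, Nat.gcd_mul_left, hcop]
    norm_num
  have key2 : Nat.gcd (3 ^ (2 * h) - 1) (q ^ 2 - 1) = 8 := by
    rw [hq2, Nat.pow_sub_one_gcd_pow_sub_one, Nat.gcd_mul_left, hcop2]
    norm_num
  have hs8 : s % 8 = 2 := by
    have : 3 ^ h % 8 = 1 := by
      rw [hk, pow_mul, Nat.pow_mod]; simp
    omega
  refine ⟨hs8, ?_, key⟩
  have hd8 : Nat.gcd s (q ^ 2 - 1) ∣ 8 := by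
    rw [← key2]
    apply Nat.gcd_dvd_gcd_of_dvd_left
    refine ⟨3 ^ h - 1, ?_⟩
    rw [hs, mul_comm 2 h, pow_mul]
    exact Nat.sq_sub_sq (3 ^ h) 1
  apply Nat.dvd_antisymm
  · have h2 : Nat.gcd s (q ^ 2 - 1) ∣ s % 8 :=
      (Nat.dvd_mod_iff hd8).mpr (Nat.gcd_dvd_left _ _)
    rwa [hs8] at h2
  · apply Nat.dvd_gcd
    · omega
    · have : 8 ∣ q ^ 2 - 1 := by rw [← key]; exact Nat.gcd_dvd_right _ _
      omega
end

section
/- Let m be odd, q = 3^m, let γ be a generator of the multiplicative group GF(q²)*, and set ε = γ^{(q²−1)/4}. Then ε² = −1, and a pair (x₁, y₁) ∈ GF(q²) × GF(q²) satisfies x₁² + y₁² = −1 if and only if there exists θ ∈ GF(q²)* such that x₁ = ε(θ + θ^{−1}) and y₁ = θ − θ^{−1}. Furthermore, for any positive integer h, writing s = 3^h + 1, one has x₁^s = (θ^s + θ^{−s} + θ^{3^h−1} + θ^{1−3^h})·ε^s and y₁^s = θ^s + θ^{−s} − (θ^{3^h−1} + θ^{1−3^h}). -/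
/-- with `m` odd, `q = 3^m`, `γ` a generator of `GF(q²)*` and
`ε = γ^{(q²-1)/4}`: one has `ε² = -1`; the solutions of `x₁² + y₁² = -1` in `GF(q²)²`
are exactly the pairs `(ε(θ + θ⁻¹), θ - θ⁻¹)` for `θ ∈ GF(q²)*`; and for any positive
integer `h`, writing `s = 3^h + 1`, such `x₁, y₁` satisfy
`x₁^s = (θ^s + θ^{-s} + θ^{3^h-1} + θ^{1-3^h})·ε^s` and
`y₁^s = θ^s + θ^{-s} - (θ^{3^h-1} + θ^{1-3^h})`. -/
theorem stmt11 {m : ℕ} (hm : Odd m)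
    {K : Type*} [Field K] [Fintype K] (hK : Fintype.card K = (3 ^ m) ^ 2)
    (γ : Kˣ) (hγ : ∀ x : Kˣ, x ∈ Subgroup.zpowers γ)
    (ε : K) (hε : ε = (γ : K) ^ (((3 ^ m) ^ 2 - 1) / 4)) :
    ε ^ 2 = -1 ∧
    (∀ x₁ y₁ : K, x₁ ^ 2 + y₁ ^ 2 = -1 ↔
        ∃ θ : K, θ ≠ 0 ∧ x₁ = ε * (θ + θ⁻¹) ∧ y₁ = θ - θ⁻¹) ∧
    (∀ h : ℕ, 0 < h → ∀ θ : K, θ ≠ 0 →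
        (ε * (θ + θ⁻¹)) ^ (3 ^ h + 1) =
          (θ ^ (3 ^ h + 1) + θ⁻¹ ^ (3 ^ h + 1) + θ ^ (3 ^ h - 1) + θ⁻¹ ^ (3 ^ h - 1)) *
            ε ^ (3 ^ h + 1) ∧
        (θ - θ⁻¹) ^ (3 ^ h + 1) =
          θ ^ (3 ^ h + 1) + θ⁻¹ ^ (3 ^ h + 1) - (θ ^ (3 ^ h - 1) + θ⁻¹ ^ (3 ^ h - 1))) := by
  have h3 : (3 : K) = 0 := by
    have h := Nat.cast_card_eq_zero K
    rw [hK] at h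
    push_cast at h
    exact (pow_eq_zero_iff hm.pos.ne').mp ((pow_eq_zero_iff two_ne_zero).mp h)
  have : Fact (Nat.Prime 3) := ⟨Nat.prime_three⟩
  have : CharP K 3 := (CharP.charP_iff_prime_eq_zero Nat.prime_three).mpr (by exact_mod_cast h3)
  have he : ε ^ 2 = -1 := by
    have hord : orderOf γ = (3 ^ m) ^ 2 - 1 := by
      rw [orderOf_eq_card_of_forall_mem_zpowers hγ, Nat.card_units, Nat.card_eq_fintype_card, hK]
    have h4 : 4 ∣ (3 ^ m) ^ 2 - 1 := by
      rw [← pow_mul, mul_comm, pow_mul]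
      have := Nat.sub_dvd_pow_sub_pow 9 1 m
      rw [one_pow] at this
      exact Dvd.dvd.trans (by norm_num) this
    have hbig : 9 ≤ (3 ^ m) ^ 2 := by
      have : 3 ^ 1 ≤ 3 ^ m := Nat.pow_le_pow_right (by norm_num) hm.pos
      nlinarith
    obtain ⟨k, hk⟩ := h4
    have hkε : ε = (γ : K) ^ k := by
      rw [hε, hk, Nat.mul_div_cancel_left _ (by norm_num)]
    have h41 : γ ^ (4 * k) = 1 := by rw [← hk, ← hord]; exact pow_orderOf_eq_one γ
    have h21 : γ ^ (2 * k) ≠ 1 := pow_ne_one_of_lt_orderOf (by omega) (by omega)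
    have e4 : (ε ^ 2) ^ 2 = 1 := by
      have := congrArg (Units.val) h41
      push_cast at this
      rw [hkε, ← this]; ring
    have e2 : ε ^ 2 ≠ 1 := by
      intro h
      apply h21
      ext
      push_cast
      rw [← h, hkε]; ring
    exact (eq_or_eq_neg_of_sq_eq_sq _ 1 (by rw [e4, one_pow])).resolve_left e2
  refine ⟨he, ?_, ?_⟩
  · intro x y
    constructor
    · intro h
      have hp : (ε * x - y) * (ε * x + y) = 1 := by
        linear_combination x ^ 2 * he - h
      have hi : (ε * x - y)⁻¹ = ε * x + y := inv_eq_of_mul_eq_one_right hp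
      refine ⟨ε * x - y, left_ne_zero_of_mul_eq_one hp, ?_, ?_⟩
      · rw [hi]
        linear_combination (-2 * x) * he + x * h3
      · rw [hi]
        linear_combination y * h3
    · rintro ⟨θ, h0, rfl, rfl⟩
      have hi : θ * θ⁻¹ = 1 := mul_inv_cancel₀ h0
      linear_combination (θ + θ⁻¹) ^ 2 * he - 4 * hi - h3
  · intro h hh θ h0
    obtain ⟨n, hn⟩ : ∃ n, 3 ^ h = n + 1 := ⟨3 ^ h - 1, by have := Nat.pow_pos (n := h) (show 0 < 3 by norm_num); omega⟩
    have hi : θ * θ⁻¹ = 1 := mul_inv_cancel₀ h0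
    have ha := add_pow_char_pow (p := 3) (n := h) θ θ⁻¹
    have hs := sub_pow_char_pow (p := 3) (n := h) θ θ⁻¹
    rw [hn] at ha hs ⊢
    rw [Nat.add_sub_cancel, mul_pow, pow_succ (θ + θ⁻¹), pow_succ (θ - θ⁻¹), ha, hs]
    constructor
    · linear_combination (ε ^ (n + 1 + 1)) * (θ ^ n + θ⁻¹ ^ n) * hi
    · linear_combination (-(θ ^ n + θ⁻¹ ^ n)) * hi
end

section
/- Let m ≡ 7 (mod 8), q = 3^m, and v = (3^{(m+1)/8}−1)(3^{(m+1)/4}+1)(3^{(m+1)/2}+1). Then the only x ∈ GF(q) satisfying (x+1)^v − x^v − 1 = 0 is x = 0. -/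
/-- for `m ≡ 7 (mod 8)`, `q = 3^m` and
`v = (3^{(m+1)/8}-1)(3^{(m+1)/4}+1)(3^{(m+1)/2}+1)`, the only `x ∈ GF(q)` satisfying
`(x+1)^v - x^v - 1 = 0` is `x = 0`. -/
theorem stmt12 {m : ℕ} (hm : m % 8 = 7)
    {F : Type*} [Field F] [Fintype F] (hF : Fintype.card F = 3 ^ m)
    (v : ℕ)
    (hv : v = (3 ^ ((m + 1) / 8) - 1) * (3 ^ ((m + 1) / 4) + 1) * (3 ^ ((m + 1) / 2) + 1)) :
    ∀ x : F, ((x + 1) ^ v - x ^ v - 1 = 0 ↔ x = 0) := by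
  have : Fact (Nat.Prime 3) := ⟨Nat.prime_three⟩
  have : CharP F 3 := charP_of_card_eq_prime_pow hF
  have h3 : (3 : F) = 0 := by exact_mod_cast CharP.cast_eq_zero F 3
  obtain ⟨k, hk, hk0⟩ : ∃ k, m + 1 = 8 * k ∧ 0 < k := ⟨(m + 1) / 8, by omega, by omega⟩
  have e1 : (m + 1) / 8 = k := by omega
  have e2 : (m + 1) / 4 = k * 2 := by omega
  have e3 : (m + 1) / 2 = k * 4 := by omega
  rw [e1, e2, e3, pow_mul, pow_mul] at hv
  obtain ⟨c, hc⟩ : Odd (3 ^ k) := Odd.pow (by decide)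
  have hQ1 : 1 < 3 ^ k := Nat.one_lt_pow hk0.ne' (by norm_num)
  have frob : ∀ a b : F, (a + b) ^ 3 ^ k = a ^ 3 ^ k + b ^ 3 ^ k := fun a b =>
    add_pow_char_pow a b 3 k
  have hQ8 : ∀ x : F, x ^ (3 ^ k) ^ 8 = x ^ 3 := by
    intro x
    rw [← pow_mul, mul_comm k 8, ← hk, pow_succ, pow_mul, ← hF, FiniteField.pow_card]
  generalize 3 ^ k = Q at *
  have hve : v = 2 * (c * (Q ^ 2 + 1) * (Q ^ 4 + 1)) := by
    rw [hv, show Q - 1 = 2 * c by omega]; ring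
  have hv0 : v ≠ 0 := by
    rw [hve]
    have : c ≠ 0 := by omega
    positivity
  have hvQ : v * (Q + 1) + 1 = Q ^ 8 := by
    rw [hve, hc]; ring
  have key : ∀ x : F, (x ^ v) ^ (Q + 1) = x ^ 2 := by
    intro x
    by_cases hx : x = 0
    · subst hx; simp [hv0]
    · apply mul_right_cancel₀ hx
      rw [← pow_mul, ← pow_succ, hvQ, hQ8]; ring
  intro x
  constructor
  swap
  · rintro rfl; simp [hv0]
  intro h
  by_contra hx
  have ka := key x
  have kb := key (x + 1)
  have hb : (x + 1) ^ v = x ^ v + 1 := by linear_combination h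
  have hve1 : (x ^ v) = (x ^ 2) ^ (c * (Q ^ 2 + 1) * (Q ^ 4 + 1)) := by
    rw [← pow_mul, ← hve]
  rw [hb] at kb
  generalize x ^ v = a at *
  rw [pow_succ, frob, one_pow] at kb
  rw [pow_succ] at ka
  have s1 : a ^ Q + a = 2 * x := by linear_combination kb - ka
  have s2 : (a ^ Q - a) ^ 2 = 0 := by
    linear_combination (a ^ Q + a + 2 * x) * s1 - 4 * ka
  have s3 : a ^ Q = a := by
    have := pow_eq_zero_iff (two_ne_zero) |>.1 s2
    linear_combination this
  have hxa : x = a := by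
    rw [s3] at s1
    linear_combination s1 - (a - x) * h3
  have it : ∀ n : ℕ, a ^ Q ^ n = a := by
    intro n
    induction n with
    | zero => simp
    | succ n ih => rw [pow_succ, pow_mul, ih, s3]
  have a3 : a ^ 3 = a := by rw [← hQ8, it]
  subst hxa
  have x2 : x ^ 2 = 1 := by
    apply mul_right_cancel₀ hx
    linear_combination a3
  rw [x2, one_pow] at hve1
  subst hve1
  rw [show (1 : F) + 1 = -1 by linear_combination h3, hve, pow_mul] at hb
  norm_num at hb
  exact one_ne_zero (α := F) (by linear_combination h3 - hb)
end

section
/- Let m ≡ 7 (mod 8), q = 3^m, and v = (3^{(m+1)/8}−1)(3^{(m+1)/4}+1)(3^{(m+1)/2}+1). Then the code D = {c ∈ GF(3)^{q−1} : Σ_{i=0}^{q−2} c_i α^i = 0 and Σ_{i=0}^{q−2} c_i α^{iv} = 0 in GF(q)} is a GF(3)-linear subspace of GF(3)^{q−1} of dimension 3^m − 1 − 2m whose minimum nonzero Hamming weight is 4. -/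
section aux

variable {F : Type*} [Field F] [Fintype F] [Algebra (ZMod 3) F]

/-- Key lemma: conditions C2 and C3 simultaneously. -/
theorem key_aux [CharP F 3] {k v : ℕ}
    (hfix : ∀ x : F, x ^ 3 ^ (8 * k) = x ^ 3)
    (hvd : v * (3 ^ k + 1) = 3 ^ (8 * k) - 1) (hve : Even v)
    (x e1 e2 : F) (hx : x ≠ 0) (hx1 : x + 1 ≠ 0)
    (he1 : e1 = 1 ∨ e1 = -1) (he2 : e2 = 1 ∨ e2 = -1)
    (h : e1 * x ^ v + e2 * (x + 1) ^ v + 1 = 0) : x = 1 ∧ e1 = 1 ∧ e2 = 1 := by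
  have : Fact (Nat.Prime 3) := ⟨Nat.prime_three⟩
  have h3 : (3 : F) = 0 := by exact_mod_cast CharP.cast_eq_zero F 3
  have h2 : ∀ y : F, y ≠ 0 → y ^ v * (y ^ v) ^ 3 ^ k = y ^ 2 := by
    intro y hy
    have : y ^ v * (y ^ v) ^ 3 ^ k = y ^ (v * (3 ^ k + 1)) := by ring
    rw [this, hvd]
    apply mul_right_cancel₀ hy
    rw [← pow_succ, Nat.sub_add_cancel (Nat.one_le_pow _ _ (by norm_num)), hfix]
    ring
  have hA := h2 x hx
  have hB := h2 _ hx1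
  set A := x ^ v with hAdef
  set B := (x + 1) ^ v with hBdef
  have hs1 : e1 ^ 3 ^ k = e1 := by
    rcases he1 with rfl | rfl
    · simp
    · exact Odd.neg_one_pow (Odd.pow (by decide))
  have he1s : e1 * e1 = 1 := by rcases he1 with rfl | rfl <;> ring
  have he2s : e2 * e2 = 1 := by rcases he2 with rfl | rfl <;> ring
  have hs2 : e2 ^ 3 ^ k = e2 := by
    rcases he2 with rfl | rfl
    · simp
    · exact Odd.neg_one_pow (Odd.pow (by decide))
  have hBe : e2 * B = -(e1 * A + 1) := by linear_combination h
  have hBs : e2 * B ^ 3 ^ k = -(e1 * A ^ 3 ^ k + 1) := by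
    have := congrArg (fun t => t ^ 3 ^ k) hBe
    simp only [mul_pow, hs2, neg_pow (e1 * A + 1), add_pow_char_pow, hs1, one_pow] at this
    rw [this, Odd.neg_one_pow (Odd.pow (by decide))]
    ring
  set A' := A ^ 3 ^ k with hA'
  set B' := B ^ 3 ^ k
  have hBB : B * B' = (e1 * A + 1) * (e1 * A' + 1) := by
    have : (e2 * B) * (e2 * B') = (e1 * A + 1) * (e1 * A' + 1) := by rw [hBe, hBs]; ring
    linear_combination this - (B * B') * he2s
  have hsum : e1 * (A + A') = 2 * x := by
    linear_combination hB - hBB - hA - A * A' * he1s + 0 * h3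
  have hsq : (A - A') ^ 2 = 0 := by
    have : (A + A') ^ 2 = 4 * x ^ 2 := by
      linear_combination (e1 * (A + A') + 2 * x) * hsum - (A + A') ^ 2 * he1s
    linear_combination this - 4 * hA
  have hAA : A' = A := by
    have := pow_eq_zero_iff (two_ne_zero) |>.1 hsq
    linear_combination -this
  have hiter : ∀ j : ℕ, A ^ 3 ^ (j * k) = A := by
    intro j
    induction j with
    | zero => simp
    | succ j ih =>
      rw [Nat.succ_mul, pow_add, pow_mul, ih, ← hA', hAA]
  have hA3 : A ^ 3 = A := by rw [← hfix, hiter]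
  have hA0 : A ≠ 0 := pow_ne_zero _ hx
  have hA2 : A ^ 2 = 1 := by
    apply mul_right_cancel₀ hA0
    linear_combination hA3
  have hx2 : (x - 1) * (x + 1) = 0 := by
    rw [hAA] at hA
    linear_combination hA2 - hA
  have hx' : x = 1 := by
    rcases mul_eq_zero.1 hx2 with h | h
    · linear_combination h
    · exact absurd h hx1
  refine ⟨hx', ?_⟩
  have hA1 : A = 1 := by rw [hAdef, hx', one_pow]
  have hB1 : B = 1 := by
    rw [hBdef, hx', show (1 + 1 : F) = -1 by linear_combination h3, hve.neg_one_pow]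
  rw [hA1, hB1] at h
  have h10 : (1 : F) ≠ 0 := one_ne_zero
  rcases he1 with rfl | rfl <;> rcases he2 with rfl | rfl
  · simp
  · exact absurd (by linear_combination h) h10
  · exact absurd (by linear_combination h) h10
  · exact absurd (by linear_combination -h) h10

theorem zmod3_alg (c : ZMod 3) (hc : c ≠ 0) :
    algebraMap (ZMod 3) F c = 1 ∨ algebraMap (ZMod 3) F c = -1 := by
  have : c = 1 ∨ c = -1 := by revert c; decide
  rcases this with rfl | rfl <;> simp

theorem three_aux [CharP F 3] {k v : ℕ}
    (hfix : ∀ x : F, x ^ 3 ^ (8 * k) = x ^ 3)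
    (hvd : v * (3 ^ k + 1) = 3 ^ (8 * k) - 1) (hve : Even v)
    (x y z e1 e2 e3 : F) (hx : x ≠ 0) (hy : y ≠ 0) (hz : z ≠ 0) (hxz : x ≠ z)
    (he1 : e1 = 1 ∨ e1 = -1) (he2 : e2 = 1 ∨ e2 = -1) (he3 : e3 = 1 ∨ e3 = -1)
    (h : e1 * x + e2 * y + e3 * z = 0)
    (h' : e1 * x ^ v + e2 * y ^ v + e3 * z ^ v = 0) : False := by
  have he1s : e1 * e1 = 1 := by rcases he1 with rfl | rfl <;> ring
  have he2s : e2 * e2 = 1 := by rcases he2 with rfl | rfl <;> ring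
  have he3s : e3 * e3 = 1 := by rcases he3 with rfl | rfl <;> ring
  have hev : ∀ e : F, (e = 1 ∨ e = -1) → e ^ v = 1 := by
    rintro e (rfl | rfl)
    · simp
    · exact hve.neg_one_pow
  have hmul : ∀ e f : F, (e = 1 ∨ e = -1) → (f = 1 ∨ f = -1) → (e * f = 1 ∨ e * f = -1) := by
    rintro e f (rfl | rfl) (rfl | rfl) <;> simp
  have h13 := hmul e1 e3 he1 he3
  have h23 := hmul e2 e3 he2 he3
  have ht : e1 * e3 * x / z + 1 = - (e2 * e3 * y / z) := by
    field_simp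
    linear_combination e3 * h - z * he3s
  have hne : ∀ e : F, (e = 1 ∨ e = -1) → e ≠ 0 := by
    rintro e (rfl | rfl) <;> simp
  have hzv : z ^ v ≠ 0 := pow_ne_zero _ hz
  obtain ⟨h1, h2, h3⟩ := key_aux hfix hvd hve (e1 * e3 * x / z) (e1 * e3) (e2 * e3)
    (div_ne_zero (mul_ne_zero (hne _ h13) hx) hz)
    (by rw [ht]; exact neg_ne_zero.2 (div_ne_zero (mul_ne_zero (hne _ h23) hy) hz)) h13 h23
    (by
      rw [ht, hve.neg_pow, div_pow, div_pow, mul_pow (e1 * e3), mul_pow (e2 * e3), hev _ h13, hev _ h23]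
      field_simp
      linear_combination e3 * h' - z ^ v * he3s)
  rw [h2, one_mul, div_eq_one_iff_eq hz] at h1
  exact hxz h1

theorem two_aux [CharP F 3] {v : ℕ} (hve : Even v)
    (x y e1 e2 : F) (hx : x ≠ 0) (hxy : x ≠ y)
    (he1 : e1 = 1 ∨ e1 = -1) (he2 : e2 = 1 ∨ e2 = -1)
    (h : e1 * x + e2 * y = 0)
    (h' : e1 * x ^ v + e2 * y ^ v = 0) : False := by
  have h3 : (3 : F) = 0 := by exact_mod_cast CharP.cast_eq_zero F 3
  have hxv : x ^ v ≠ 0 := pow_ne_zero _ hx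
  rcases he1 with rfl | rfl <;> rcases he2 with rfl | rfl
  · have : y = -x := by linear_combination h
    rw [this, hve.neg_pow] at h'
    exact hxv (by linear_combination x ^ v * h3 - h')
  · exact hxy (by linear_combination h)
  · exact hxy (by linear_combination -h)
  · have : y = -x := by linear_combination -h
    rw [this, hve.neg_pow] at h'
    exact hxv (by linear_combination x ^ v * h3 + h')

/-- Low-weight words used for the sphere-packing argument. -/
def lowWord {n : ℕ} (p : Fin n × Fin n × Bool) : Fin n → ZMod 3 :=
  Pi.single p.1 (if p.1 < p.2.1 then 1 else if p.2.2 then 1 else -1) +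
    Pi.single p.2.1 (if p.1 = p.2.1 then 0 else if p.1 < p.2.1 then (if p.2.2 then 1 else -1) else -1)

theorem lowWord_norm {n : ℕ} (p : Fin n × Fin n × Bool) : hammingNorm (lowWord p) ≤ 2 := by
  have hs : ∀ (i : Fin n) (a : ZMod 3), hammingNorm (Pi.single i a : Fin n → ZMod 3) ≤ 1 := by
    intro i a
    unfold hammingNorm
    calc _ ≤ ({i} : Finset (Fin n)).card := by
          apply Finset.card_le_card
          intro j hj
          by_contra hne
          simp at hj hne
          exact hj (by simp [hne])
      _ = 1 := by simp
  unfold lowWord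
  set a := (Pi.single p.1 (if p.1 < p.2.1 then 1 else if p.2.2 then 1 else -1) :
    Fin n → ZMod 3)
  set b := (Pi.single p.2.1 (if p.1 = p.2.1 then 0 else if p.1 < p.2.1 then (if p.2.2 then 1 else -1) else -1) : Fin n → ZMod 3)
  have h1 : hammingNorm a ≤ 1 := hs _ _
  have h2 : hammingNorm b ≤ 1 := hs _ _
  have : hammingNorm (a + b) ≤ hammingNorm a + hammingNorm b := by
    have := hammingDist_triangle (-a) 0 b
    rw [hammingDist_zero_left, hammingDist_eq_hammingNorm, hammingDist_eq_hammingNorm] at this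
    simpa using this
  omega

theorem lowWord_inj {n : ℕ} : Function.Injective (lowWord (n := n)) := by
  rintro ⟨i, j, s⟩ ⟨i', j', s'⟩ h
  have h1 := congrFun h i
  have h2 := congrFun h j
  have h3 := congrFun h i'
  have h4 := congrFun h j'
  have e1 : (1 : ZMod 3) ≠ 0 := by decide
  have e2 : (-1 : ZMod 3) ≠ 0 := by decide
  have e3 : (1 : ZMod 3) ≠ -1 := by decide
  simp only [lowWord, Pi.add_apply, Pi.single_apply] at h1 h2 h3 h4
  clear h
  grind

end aux

theorem stmt13 {m : ℕ} (hm : m % 8 = 7)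
    {F : Type*} [Field F] [Fintype F] [Algebra (ZMod 3) F]
    (hF : Fintype.card F = 3 ^ m)
    (α : Fˣ) (hα : ∀ x : Fˣ, x ∈ Subgroup.zpowers α)
    (v : ℕ)
    (hv : v = (3 ^ ((m + 1) / 8) - 1) * (3 ^ ((m + 1) / 4) + 1) * (3 ^ ((m + 1) / 2) + 1)) :
    ∃ D : Submodule (ZMod 3) (Fin (3 ^ m - 1) → ZMod 3),
      (D : Set (Fin (3 ^ m - 1) → ZMod 3)) =
        {c | (∑ i : Fin (3 ^ m - 1), algebraMap (ZMod 3) F (c i) * (α : F) ^ (i : ℕ) = 0) ∧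
             (∑ i : Fin (3 ^ m - 1), algebraMap (ZMod 3) F (c i) * (α : F) ^ ((i : ℕ) * v) = 0)} ∧
      Module.finrank (ZMod 3) D = 3 ^ m - 1 - 2 * m ∧
      (∀ c : Fin (3 ^ m - 1) → ZMod 3, c ∈ D → c ≠ 0 → 4 ≤ hammingNorm c) ∧
      (∃ c : Fin (3 ^ m - 1) → ZMod 3, c ∈ D ∧ c ≠ 0 ∧ hammingNorm c = 4) := by
  classical
  have : Fact (Nat.Prime 3) := ⟨Nat.prime_three⟩
  have : CharP F 3 := charP_of_injective_algebraMap (algebraMap (ZMod 3) F).injective 3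
  have h3 : (3 : F) = 0 := by exact_mod_cast CharP.cast_eq_zero F 3
  obtain ⟨k, hk⟩ : ∃ k, m + 1 = 8 * k := ⟨(m + 1) / 8, by omega⟩
  have hk1 : (m + 1) / 8 = k := by omega
  have hk2 : (m + 1) / 4 = 2 * k := by omega
  have hk3 : (m + 1) / 2 = 4 * k := by omega
  rw [hk1, hk2, hk3] at hv
  have hfix : ∀ x : F, x ^ 3 ^ (8 * k) = x ^ 3 := by
    intro x
    rw [← hk, pow_succ, pow_mul, ← hF, FiniteField.pow_card]
  have hvd : v * (3 ^ k + 1) = 3 ^ (8 * k) - 1 := by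
    rw [hv]
    have h1 : 1 ≤ 3 ^ k := Nat.one_le_pow _ _ (by norm_num)
    have h2 : 1 ≤ 3 ^ (8 * k) := Nat.one_le_pow _ _ (by norm_num)
    zify [h1, h2]
    rw [mul_comm 2 k, mul_comm 4 k, mul_comm 8 k, pow_mul, pow_mul, pow_mul]
    ring
  have hve : Even v := by
    rw [hv]
    have : Even (3 ^ k - 1) := Nat.Odd.sub_odd (Odd.pow (by decide)) odd_one
    exact (this.mul_right _).mul_right _
  have hn : Fintype.card Fˣ = 3 ^ m - 1 := by rw [Fintype.card_units, hF]
  have hord : orderOf α = 3 ^ m - 1 := by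
    rw [orderOf_eq_card_of_forall_mem_zpowers hα, Nat.card_eq_fintype_card, hn]
  have hbig : 3 ^ 7 ≤ 3 ^ m := Nat.pow_le_pow_right (by norm_num) (by omega)
  set n := 3 ^ m - 1 with hndef
  have hinj : ∀ i j : Fin n, i ≠ j → (α : F) ^ (i : ℕ) ≠ (α : F) ^ (j : ℕ) := by
    intro i j hij h
    apply hij
    have h' : α ^ (i : ℕ) = α ^ (j : ℕ) := by ext; simpa using h
    exact Fin.ext (pow_injOn_Iio_orderOf (by simp [hord]) (by simp [hord]) h')
  have hsurjα : ∀ x : F, x ≠ 0 → ∃ i : Fin n, (α : F) ^ (i : ℕ) = x := by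
    intro x hx
    have := hα (Units.mk0 x hx)
    rw [← mem_powers_iff_mem_zpowers, mem_powers_iff_mem_range_orderOf, hord] at this
    simp only [Finset.mem_image, Finset.mem_range] at this
    obtain ⟨i, hi, h⟩ := this
    refine ⟨⟨i, hi⟩, ?_⟩
    have := congrArg Units.val h
    simpa using this
  let L : (Fin n → ZMod 3) →ₗ[ZMod 3] F × F :=
    Fintype.linearCombination (ZMod 3) (fun i : Fin n => ((α : F) ^ (i : ℕ), (α : F) ^ ((i : ℕ) * v)))
  have hL : ∀ c, L c = (∑ i : Fin n, algebraMap (ZMod 3) F (c i) * (α : F) ^ (i : ℕ),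
      ∑ i : Fin n, algebraMap (ZMod 3) F (c i) * (α : F) ^ ((i : ℕ) * v)) := by
    intro c
    simp only [L, Fintype.linearCombination_apply, Algebra.smul_def, Prod.smul_mk]
    ext <;> simp [Prod.fst_sum, Prod.snd_sum]
  have hmem : ∀ c, c ∈ LinearMap.ker L ↔
      (∑ i : Fin n, algebraMap (ZMod 3) F (c i) * (α : F) ^ (i : ℕ) = 0) ∧
      (∑ i : Fin n, algebraMap (ZMod 3) F (c i) * (α : F) ^ ((i : ℕ) * v) = 0) := by
    intro c
    rw [LinearMap.mem_ker, hL, Prod.mk_eq_zero]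
  -- surjectivity
  have hrange : LinearMap.range L = ⊤ := by
    rw [eq_top_iff]
    have hgen : ∀ x : F, x ≠ 0 → (x, x ^ v) ∈ LinearMap.range L := by
      intro x hx
      obtain ⟨i, rfl⟩ := hsurjα x hx
      refine ⟨Pi.single i 1, ?_⟩
      simp [L, Fintype.linearCombination_apply_single, pow_mul]
    have hleft : ∀ x : F, (x, (0 : F)) ∈ LinearMap.range L := by
      intro x
      by_cases hx : x = 0
      · subst hx; exact Submodule.zero_mem _
      have h1 := hgen (-x) (neg_ne_zero.2 hx)
      have h2 := hgen x hx
      have := Submodule.sub_mem _ h1 h2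
      convert this using 1
      ext
      · simp; linear_combination x * h3
      · simp [hve.neg_pow]
    have hright : ∀ x : F, x ≠ 0 → ((0 : F), x ^ 2) ∈ LinearMap.range L := by
      intro x hx
      have h1 := Submodule.sub_mem _ (hgen (x ^ (3 ^ k + 1)) (pow_ne_zero _ hx))
        (hleft (x ^ (3 ^ k + 1)))
      have h2 : (x ^ (3 ^ k + 1)) ^ v = x ^ 2 := by
        rw [← pow_mul, mul_comm, hvd]
        apply mul_right_cancel₀ hx
        rw [← pow_succ, Nat.sub_add_cancel (Nat.one_le_pow _ _ (by norm_num)), hfix]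
        ring
      rw [h2] at h1
      simpa using h1
    have hright0 : ∀ x : F, ((0 : F), x ^ 2) ∈ LinearMap.range L := by
      intro x
      by_cases hx : x = 0
      · subst hx; exact ⟨0, by rw [map_zero]; ext <;> simp⟩
      · exact hright x hx
    have hright' : ∀ x : F, ((0 : F), x) ∈ LinearMap.range L := by
      intro x
      have h1 := Submodule.sub_mem _ (Submodule.sub_mem _ (hright0 (x - 1)) (hright0 x))
        (hright0 1)
      convert h1 using 1
      ext
      · simp
      · simp; linear_combination x * h3
    rintro ⟨x, y⟩ -
    have := Submodule.add_mem _ (hleft x) (hright' y)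
    simpa using this
  have hfin : Module.finrank (ZMod 3) F = m := by
    have := Module.card_eq_pow_finrank (K := ZMod 3) (V := F)
    rw [hF, ZMod.card] at this
    exact (Nat.pow_right_injective (le_refl 2 |>.trans (by norm_num)) this).symm
  have hmin : ∀ c : Fin n → ZMod 3, c ∈ LinearMap.ker L → c ≠ 0 → 4 ≤ hammingNorm c := by
    intro c hc hc0
    rw [hmem] at hc
    obtain ⟨hc1, hc2⟩ := hc
    by_contra hlt
    have hα0 : ∀ i : Fin n, (α : F) ^ (i : ℕ) ≠ 0 := fun i => pow_ne_zero _ α.ne_zero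
    have hpos : hammingNorm c ≠ 0 := by rwa [Ne, hammingNorm_eq_zero]
    set S := Finset.univ.filter (fun i => c i ≠ 0) with hS
    have hSc : S.card = hammingNorm c := rfl
    have hmS : ∀ i ∈ S, algebraMap (ZMod 3) F (c i) = 1 ∨ algebraMap (ZMod 3) F (c i) = -1 := by
      intro i hi
      exact zmod3_alg _ (by simpa [hS] using hi)
    have hr : ∀ f : Fin n → F, ∑ i, algebraMap (ZMod 3) F (c i) * f i =
        ∑ i ∈ S, algebraMap (ZMod 3) F (c i) * f i := by
      intro f
      symm
      apply Finset.sum_subset (Finset.subset_univ _)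
      intro i _ hi
      have : c i = 0 := by simpa [hS] using hi
      simp [this]
    rw [hr] at hc1 hc2
    simp only [pow_mul] at hc2
    clear_value S
    have hcases : S.card = 1 ∨ S.card = 2 ∨ S.card = 3 := by omega
    rcases hcases with h | h | h
    · obtain ⟨a, rfl⟩ := Finset.card_eq_one.1 h
      simp only [Finset.sum_singleton] at hc1
      rcases hmS a (by simp) with h | h <;> rw [h] at hc1 <;> exact hα0 a (by simpa using hc1)
    · obtain ⟨a, b, hab, rfl⟩ := Finset.card_eq_two.1 h
      rw [Finset.sum_pair hab] at hc1 hc2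
      exact two_aux hve _ _ _ _ (hα0 a) (hinj a b hab) (hmS a (by simp)) (hmS b (by simp)) hc1 hc2
    · obtain ⟨a, b, d, hab, had, hbd, rfl⟩ := Finset.card_eq_three.1 h
      rw [Finset.sum_insert (by simp [hab, had]), Finset.sum_pair hbd, ← add_assoc] at hc1 hc2
      exact three_aux hfix hvd hve _ _ _ _ _ _ (hα0 a) (hα0 b) (hα0 d) (hinj a d had)
        (hmS a (by simp)) (hmS b (by simp)) (hmS d (by simp)) hc1 hc2
  refine ⟨LinearMap.ker L, ?_, ?_, hmin, ?_⟩
  · ext c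
    exact hmem c
  · have := LinearMap.finrank_range_add_finrank_ker L
    rw [hrange, finrank_top, Module.finrank_prod, hfin, Module.finrank_fin_fun] at this
    omega
  · have hcard : Fintype.card (F × F) < Fintype.card (Fin n × Fin n × Bool) := by
      simp only [Fintype.card_prod, hF, Fintype.card_fin, Fintype.card_bool]
      have : 3 ^ m = n + 1 := by omega
      rw [this]
      have : 3 ≤ n := by omega
      nlinarith
    obtain ⟨p, p', hpp, heq⟩ := Fintype.exists_ne_map_eq_of_card_lt
      (fun p : Fin n × Fin n × Bool => L (lowWord p)) hcard
    have hker : lowWord p - lowWord p' ∈ LinearMap.ker L := by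
      rw [LinearMap.mem_ker, map_sub, sub_eq_zero]; exact heq
    have hne : lowWord p - lowWord p' ≠ 0 := sub_ne_zero.2 (fun h => hpp (lowWord_inj h))
    refine ⟨_, hker, hne, le_antisymm ?_ (hmin _ hker hne)⟩
    rw [sub_eq_neg_add, ← hammingDist_eq_hammingNorm]
    have h1 := hammingDist_triangle (lowWord p') 0 (lowWord p)
    rw [hammingDist_zero_right, hammingDist_zero_left] at h1
    have h2 := lowWord_norm p
    have h3 := lowWord_norm p'
    omega
end

section
/- Let m be a positive integer, q = 3^m, n = q − 1, and let v be an integer with 0 ≤ v ≤ n−1 such that v is not congruent to any power 3^j modulo n (i.e., v ∉ C₁, the 3-cyclotomic coset of 1 modulo n) and such that the residues v·3^j mod n for j = 0, 1, …, m−1 are pairwise distinct (i.e., |C_v| = m). Then the code D = {c ∈ GF(3)^{n} : Σ_{i=0}^{n−1} c_i α^i = 0 and Σ_{i=0}^{n−1} c_i α^{iv} = 0 in GF(q)} has dimension n − 2m and minimum nonzero Hamming weight equal to 4 if and only if the following three conditions all hold: (C1) v is even; (C2) the only x ∈ GF(q)* with (−x−1)^v + x^v + 1 = 0 is x = 1;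 (C3) the only x ∈ GF(q) with (x+1)^v − x^v − 1 = 0 is x = 0. -/
theorem aux_field {F : Type*} [Field F] (h3 : (3 : F) = 0) (v : ℕ)
    (hev : Even v)
    (h2 : ∀ x : F, x ≠ 0 → ((-x - 1) ^ v + x ^ v + 1 = 0 ↔ x = 1))
    (hh3 : ∀ x : F, ((x + 1) ^ v - x ^ v - 1 = 0 ↔ x = 0)) 
    (s t u x y z : F) (hs : s = 1 ∨ s = -1) (ht : t = 1 ∨ t = -1) (hu : u = 1 ∨ u = -1)
    (hx : x ≠ 0) (hy : y ≠ 0) (hz : z ≠ 0) (hxz : x ≠ z) 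
    (e1 : s * x + t * y + u * z = 0)
    (e2 : s * x ^ v + t * y ^ v + u * z ^ v = 0) : False := by
  -- all plus
  have P : ∀ x y z : F, x ≠ 0 → z ≠ 0 → x ≠ z → x + y + z = 0 → x ^ v + y ^ v + z ^ v = 0 → False := by
    intro x y z hx hz hxz e1 e2
    have hzv : z ^ v ≠ 0 := pow_ne_zero _ hz
    have := (h2 (x / z) (div_ne_zero hx hz)).1 (by
      have : -(x / z) - 1 = y / z := by
        field_simp
        linear_combination -e1
      rw [this, div_pow, div_pow]
      field_simp
      linear_combination e2)
    rw [div_eq_one_iff_eq hz] at this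
    exact hxz this
  have M : ∀ x y z : F, x ≠ 0 → y ≠ 0 → x + y = z → x ^ v + y ^ v = z ^ v → False := by
    intro x y z hx hy e1 e2
    have hyv : y ^ v ≠ 0 := pow_ne_zero _ hy
    have := (hh3 (x / y)).1 (by
      have : (x / y) + 1 = z / y := by
        field_simp
        linear_combination e1
      rw [this, div_pow, div_pow]
      field_simp
      linear_combination -e2)
    exact div_ne_zero hx hy this
  rcases hs with rfl | rfl <;> rcases ht with rfl | rfl <;> rcases hu with rfl | rfl
  · exact P x y z hx hz hxz (by linear_combination e1) (by linear_combination e2)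
  · exact M x y z hx hy (by linear_combination e1) (by linear_combination e2)
  · exact M x z y hx hz (by linear_combination e1) (by linear_combination e2)
  · exact M y z x hy hz (by linear_combination -e1) (by linear_combination -e2)
  · exact M y z x hy hz (by linear_combination e1) (by linear_combination e2)
  · exact M x z y hx hz (by linear_combination -e1) (by linear_combination -e2)
  · exact M x y z hx hy (by linear_combination -e1) (by linear_combination -e2)
  · exact P x y z hx hz hxz (by linear_combination -e1) (by linear_combination -e2)

theorem aux_field2 {F : Type*} [Field F] (h3 : (3 : F) = 0) (v : ℕ)
    (hev : Even v)
    (s t x y : F) (hs : s = 1 ∨ s = -1) (ht : t = 1 ∨ t = -1)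
    (hx : x ≠ 0) (hxy : x ≠ y)
    (e1 : s * x + t * y = 0)
    (e2 : s * x ^ v + t * y ^ v = 0) : False := by
  have P : ∀ x y : F, x ≠ 0 → x + y = 0 → x ^ v + y ^ v = 0 → False := by
    intro x y hx e1 e2
    have : y = -x := by linear_combination e1
    rw [this, hev.neg_pow] at e2
    exact pow_ne_zero v hx (by linear_combination x ^ v * h3 - e2)
  rcases hs with rfl | rfl <;> rcases ht with rfl | rfl
  · exact P x y hx (by linear_combination e1) (by linear_combination e2)
  · exact hxy (by linear_combination e1)
  · exact hxy (by linear_combination -e1)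
  · exact P x y hx (by linear_combination -e1) (by linear_combination -e2)

theorem aux_zmod (a : ZMod 3) (h : a ≠ 0) : a = 1 ∨ a = -1 := by
  revert a; decide

/-- no codewords of weight 1, 2, 3 -/
theorem aux_min {F ι : Type*} [Field F] [Algebra (ZMod 3) F] [Fintype ι]
    (β : ι → F) (hβ : Function.Injective β) (hβ0 : ∀ i, β i ≠ 0) (v : ℕ)
    (hev : Even v)
    (h2 : ∀ x : F, x ≠ 0 → ((-x - 1) ^ v + x ^ v + 1 = 0 ↔ x = 1))
    (hh3 : ∀ x : F, ((x + 1) ^ v - x ^ v - 1 = 0 ↔ x = 0)) 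
    (h3 : (3 : F) = 0)
    (c : ι → ZMod 3) (hc : c ≠ 0)
    (e1 : ∑ i, algebraMap (ZMod 3) F (c i) * β i = 0)
    (e2 : ∑ i, algebraMap (ZMod 3) F (c i) * β i ^ v = 0) : 4 ≤ hammingNorm c := by
  classical
  by_contra hlt
  push Not at hlt
  set S : Finset ι := Finset.univ.filter (fun i => c i ≠ 0) with hS
  have hcard : S.card = hammingNorm c := rfl
  have red : ∀ g : ι → F, ∑ i, algebraMap (ZMod 3) F (c i) * g i
      = ∑ i ∈ S, algebraMap (ZMod 3) F (c i) * g i := by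
    intro g
    symm
    apply Finset.sum_subset (Finset.subset_univ _)
    intro i _ hi
    have : c i = 0 := by simpa [hS] using hi
    simp [this]
  rw [red] at e1
  rw [red (fun i => β i ^ v)] at e2
  have sg : ∀ i ∈ S, algebraMap (ZMod 3) F (c i) = 1 ∨ algebraMap (ZMod 3) F (c i) = -1 := by
    intro i hi
    have : c i ≠ 0 := by simpa [hS] using hi
    rcases aux_zmod _ this with h | h <;> simp [h]
  have hpos : hammingNorm c ≠ 0 := by simpa using hc
  have : S.card = 1 ∨ S.card = 2 ∨ S.card = 3 := by omega
  rcases this with h | h | h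
  · obtain ⟨a, ha⟩ := Finset.card_eq_one.1 h
    rw [ha] at e1 sg
    simp only [Finset.sum_singleton] at e1
    rcases sg a (by simp) with h | h <;> rw [h] at e1 <;> exact hβ0 a (by simpa using e1)
  · obtain ⟨a, b, hab, ha⟩ := Finset.card_eq_two.1 h
    rw [ha] at e1 e2 sg
    rw [Finset.sum_pair hab] at e1 e2
    exact aux_field2 h3 v hev _ _ _ _ (sg a (by simp)) (sg b (by simp)) (hβ0 a) (hβ.ne hab) e1 e2
  · obtain ⟨a, b, d, hab, had, hbd, ha⟩ := Finset.card_eq_three.1 h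
    rw [ha] at e1 e2 sg
    rw [Finset.sum_insert (by simp [hab, had]), Finset.sum_pair hbd, ← add_assoc] at e1 e2
    exact aux_field h3 v hev h2 hh3 _ _ _ _ _ _ (sg a (by simp)) (sg b (by simp)) (sg d (by simp))
      (hβ0 a) (hβ0 b) (hβ0 d) (hβ.ne had) e1 e2

/-- explicit vectors of weight at most two -/
def auxVec {n : ℕ} (p : Fin n × Fin n × Bool) : Fin n → ZMod 3 :=
  if p.1 = p.2.1 then Pi.single p.1 (if p.2.2 then 1 else -1)
  else if p.2.2 then Pi.single p.1 1 + Pi.single p.2.1 (-1)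
  else if p.1 < p.2.1 then Pi.single p.1 1 + Pi.single p.2.1 1
  else Pi.single p.1 (-1) + Pi.single p.2.1 (-1)

theorem auxVec_inj {n : ℕ} : Function.Injective (auxVec (n := n)) := by
  have d1 : (1 : ZMod 3) ≠ 0 := by decide
  have d2 : (1 : ZMod 3) ≠ -1 := by decide
  have d3 : (-1 : ZMod 3) ≠ 0 := by decide
  rintro ⟨i, j, b⟩ ⟨k, l, b'⟩ h
  have hi := congrFun h i
  have hj := congrFun h j
  have hk := congrFun h k
  have hl := congrFun h l
  clear h
  simp only [auxVec] at hi hj hk hl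
  cases b <;> cases b' <;> simp only [if_true, if_false, Bool.false_eq_true] at hi hj hk hl <;>
    split_ifs at hi hj hk hl <;>
    simp only [Pi.add_apply, Pi.single_apply] at hi hj hk hl <;> grind

theorem auxVec_norm {n : ℕ} (p : Fin n × Fin n × Bool) : hammingNorm (auxVec p) ≤ 2 := by
  have : (Finset.univ.filter fun i => auxVec p i ≠ 0) ⊆ {p.1, p.2.1} := by
    intro i hi
    simp only [Finset.mem_filter, Finset.mem_univ, true_and] at hi
    contrapose! hi
    simp only [Finset.mem_insert, Finset.mem_singleton, not_or] at hi
    unfold auxVec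
    split_ifs <;> simp [Pi.single_apply, hi.1, hi.2]
  exact (Finset.card_le_card this).trans Finset.card_le_two

theorem aux_exists {n : ℕ} {W : Type*} [AddCommGroup W] [Fintype W] (f : (Fin n → ZMod 3) →+ W)
    (hW : Fintype.card W < 2 * n ^ 2) : ∃ c, f c = 0 ∧ c ≠ 0 ∧ hammingNorm c ≤ 4 := by
  obtain ⟨x, y, hxy, h⟩ := Fintype.exists_ne_map_eq_of_card_lt (fun p => f (auxVec p))
    (by simp; linarith)
  refine ⟨auxVec x - auxVec y, by simp [h], sub_ne_zero.2 (auxVec_inj.ne hxy), ?_⟩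
  have h1 := hammingDist_triangle (auxVec y) 0 (auxVec x)
  rw [hammingDist_eq_hammingNorm, neg_add_eq_sub, hammingDist_zero_right, hammingDist_zero_left] at h1
  linarith [auxVec_norm x, auxVec_norm y]

theorem aux_modeq {m : ℕ} (v j k : ℕ) (hj : j < m)
    (h : v * 3 ^ j ≡ 3 ^ k [MOD 3 ^ m - 1]) : v ≡ 3 ^ (k + (m - j)) [MOD 3 ^ m - 1] := by
  have h1 : 3 ^ m ≡ 1 [MOD 3 ^ m - 1] := by
    have h0 : 1 ≤ 3 ^ m := Nat.one_le_pow _ _ (by norm_num)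
    exact ((Nat.modEq_iff_dvd' h0).2 dvd_rfl).symm
  have h2 := h.mul_right (3 ^ (m - j))
  rw [mul_assoc, ← pow_add, ← pow_add, Nat.add_sub_cancel' hj.le] at h2
  have h3 := h1.mul_left v
  rw [mul_one] at h3
  exact h3.symm.trans h2

theorem aux_pow_inj {m : ℕ} (j k : ℕ) (hj : j < m) (hk : k < m)
    (h : 3 ^ j ≡ 3 ^ k [MOD 3 ^ m - 1]) : j = k := by
  wlog hjk : j ≤ k generalizing j k
  · exact (this k j hk hj h.symm (by omega)).symm
  have hle : 3 ^ j ≤ 3 ^ k := Nat.pow_le_pow_right (by norm_num) hjk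
  have hd := (Nat.modEq_iff_dvd' hle).1 h
  have hpos : 0 < 3 ^ j := by positivity
  have h4 : 3 ^ (k + 1) ≤ 3 ^ m := Nat.pow_le_pow_right (by norm_num) hk
  rw [pow_succ] at h4
  have h5 : 3 ^ k - 3 ^ j = 0 := Nat.eq_zero_of_dvd_of_lt hd (by omega)
  exact Nat.pow_right_injective (le_refl 2 |>.trans (by norm_num : 2 ≤ 3)) (by simp only; omega)

theorem aux_indep {m : ℕ} (hm : 0 < m)
    {F : Type*} [Field F] [Fintype F] [Algebra (ZMod 3) F]
    (hF : Fintype.card F = 3 ^ m) (hfr : Module.finrank (ZMod 3) F = m)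
    (α : Fˣ) (hord : orderOf α = 3 ^ m - 1)
    (v : ℕ) 
    (hv1 : ∀ j : ℕ, ¬ v ≡ 3 ^ j [MOD 3 ^ m - 1])
    (hv2 : ∀ j k : ℕ, j < m → k < m → v * 3 ^ j ≡ v * 3 ^ k [MOD 3 ^ m - 1] → j = k)
    (a b : F) (h : ∀ g : Fˣ, Algebra.trace (ZMod 3) F (a * g) +
      Algebra.trace (ZMod 3) F (b * (g : F) ^ v) = 0) : a = 0 ∧ b = 0 := by
  let ex : Fin m ⊕ Fin m → ℕ := Sum.elim (fun j => 3 ^ (j : ℕ)) (fun j => v * 3 ^ (j : ℕ))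
  let χ : Fin m ⊕ Fin m → (Fˣ →* F) := fun s => (Units.coeHom F).comp (powMonoidHom (ex s))
  have hχ : Function.Injective χ := by
    intro s t hst
    have h1 := DFunLike.congr_fun hst α
    have h2 : ex s ≡ ex t [MOD 3 ^ m - 1] := by
      rw [← hord, ← pow_eq_pow_iff_modEq]
      apply Units.ext
      simpa [χ] using h1
    rcases s with ⟨j, hj⟩ | ⟨j, hj⟩ <;> rcases t with ⟨k, hk⟩ | ⟨k, hk⟩ <;>
      simp only [ex, Sum.elim_inl, Sum.elim_inr] at h2
    · have := aux_pow_inj j k hj hk h2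
      simp [this]
    · exact absurd (aux_modeq v k j hk h2.symm) (hv1 _)
    · exact absurd (aux_modeq v j k hj h2) (hv1 _)
    · have := hv2 j k hj hk h2
      simp [this]
  have li := (linearIndependent_monoidHom Fˣ F).comp χ hχ
  rw [Fintype.linearIndependent_iff] at li
  have := li (Sum.elim (fun j => a ^ 3 ^ (j : ℕ)) (fun j => b ^ 3 ^ (j : ℕ))) (by
    funext g
    have hg := congrArg (algebraMap (ZMod 3) F) (h g)
    rw [map_add, FiniteField.algebraMap_trace_eq_sum_pow,
      FiniteField.algebraMap_trace_eq_sum_pow, hfr, map_zero, Finset.sum_range,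
      Finset.sum_range, Nat.card_zmod] at hg
    simp only [Fintype.sum_sum_type, Sum.elim_inl, Sum.elim_inr, Pi.add_apply, Finset.sum_apply,
      Pi.smul_apply, Function.comp, smul_eq_mul, Pi.zero_apply]
    rw [← hg]
    congr 1 <;> refine Finset.sum_congr rfl fun j _ => ?_
    · simp [χ, ex, mul_pow]
    · simp [χ, ex, mul_pow, pow_mul])
  constructor
  · simpa using this (Sum.inl ⟨0, hm⟩)
  · simpa using this (Sum.inr ⟨0, hm⟩)

theorem aux_surj {m : ℕ} (hm : 0 < m)
    {F : Type*} [Field F] [Fintype F] [Algebra (ZMod 3) F]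
    (hF : Fintype.card F = 3 ^ m) (hfr : Module.finrank (ZMod 3) F = m)
    (α : Fˣ) (hord : orderOf α = 3 ^ m - 1)
    (v : ℕ) 
    (hv1 : ∀ j : ℕ, ¬ v ≡ 3 ^ j [MOD 3 ^ m - 1])
    (hv2 : ∀ j k : ℕ, j < m → k < m → v * 3 ^ j ≡ v * 3 ^ k [MOD 3 ^ m - 1] → j = k)
    (W : Submodule (ZMod 3) (F × F)) (hW : ∀ g : Fˣ, ((g : F), (g : F) ^ v) ∈ W) : W = ⊤ := by
  by_contra hne
  obtain ⟨f, f0, hf⟩ := Submodule.exists_dual_map_eq_bot_of_lt_top (lt_top_iff_ne_top.2 hne) inferInstance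
  have rep : ∀ l : Module.Dual (ZMod 3) F, ∃ a : F, ∀ x, l x = Algebra.trace (ZMod 3) F (a * x) := by
    intro l
    have nd : (Algebra.traceForm (ZMod 3) F).Nondegenerate := traceForm_nondegenerate (ZMod 3) F
    refine ⟨((Algebra.traceForm (ZMod 3) F).toDual nd).symm l, fun x => ?_⟩
    rw [← Algebra.traceForm_apply, LinearMap.BilinForm.apply_toDual_symm_apply]
  obtain ⟨a, ha⟩ := rep (f ∘ₗ LinearMap.inl _ _ _)
  obtain ⟨b, hb⟩ := rep (f ∘ₗ LinearMap.inr _ _ _)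
  have dec : ∀ x y, f (x, y) = Algebra.trace (ZMod 3) F (a * x) + Algebra.trace (ZMod 3) F (b * y) := by
    intro x y
    rw [← ha, ← hb]
    simp [← map_add]
  obtain ⟨rfl, rfl⟩ := aux_indep hm hF hfr α hord v hv1 hv2 a b (fun g => by
    rw [← dec]
    have := Submodule.mem_map_of_mem (f := f) (hW g)
    rw [hf] at this
    simpa using this)
  apply f0
  ext x <;> simp [dec]

set_option maxHeartbeats 2000000 in
theorem stmt14 {m : ℕ} (hm : 0 < m)
    {F : Type*} [Field F] [Fintype F] [Algebra (ZMod 3) F]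
    (hF : Fintype.card F = 3 ^ m)
    (α : Fˣ) (hα : ∀ x : Fˣ, x ∈ Subgroup.zpowers α)
    (v : ℕ) (hv : v ≤ 3 ^ m - 2)
    (hv1 : ∀ j : ℕ, ¬ v ≡ 3 ^ j [MOD 3 ^ m - 1])
    (hv2 : ∀ j k : ℕ, j < m → k < m → v * 3 ^ j ≡ v * 3 ^ k [MOD 3 ^ m - 1] → j = k)
    (D : Submodule (ZMod 3) (Fin (3 ^ m - 1) → ZMod 3))
    (hD : (D : Set (Fin (3 ^ m - 1) → ZMod 3)) =
        {c | (∑ i : Fin (3 ^ m - 1), algebraMap (ZMod 3) F (c i) * (α : F) ^ (i : ℕ) = 0) ∧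
             (∑ i : Fin (3 ^ m - 1), algebraMap (ZMod 3) F (c i) * (α : F) ^ ((i : ℕ) * v) = 0)}) :
    (Module.finrank (ZMod 3) D = (3 ^ m - 1) - 2 * m ∧
      (∀ c, c ∈ D → c ≠ 0 → 4 ≤ hammingNorm c) ∧
      (∃ c, c ∈ D ∧ c ≠ 0 ∧ hammingNorm c = 4)) ↔
    (Even v ∧
      (∀ x : F, x ≠ 0 → ((-x - 1) ^ v + x ^ v + 1 = 0 ↔ x = 1)) ∧
      (∀ x : F, ((x + 1) ^ v - x ^ v - 1 = 0 ↔ x = 0))) := by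
  classical
  have h3 : (3 : F) = 0 := by
    have : (3 : ZMod 3) = 0 := by decide
    rw [← map_ofNat (algebraMap (ZMod 3) F) 3, this, map_zero]
  have h1n : (1 : F) ≠ -1 := by
    intro h
    exact one_ne_zero (α := F) (by linear_combination h3 - h)
  have hfr : Module.finrank (ZMod 3) F = m := by
    have := Module.card_eq_pow_finrank (K := ZMod 3) (V := F)
    rw [hF, ZMod.card] at this
    exact (Nat.pow_right_injective (by norm_num : 2 ≤ 3) this).symm
  have hord : orderOf α = 3 ^ m - 1 := by
    rw [orderOf_eq_card_of_forall_mem_zpowers hα, Nat.card_eq_fintype_card, Fintype.card_units, hF]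
  have hpos : 0 < 3 ^ m - 1 := by
    rw [← hord]; exact orderOf_pos α
  let β : Fin (3 ^ m - 1) → F := fun i => (α : F) ^ (i : ℕ)
  have hβ0 : ∀ i, β i ≠ 0 := fun i => pow_ne_zero _ α.ne_zero
  have hβ : Function.Injective β := by
    intro i j h
    have h' : α ^ (i : ℕ) = α ^ (j : ℕ) := Units.ext (by simpa [β] using h)
    exact Fin.ext (pow_injOn_Iio_orderOf (by simp [hord]) (by simp [hord]) h')
  have hsurj : ∀ x : F, x ≠ 0 → ∃ i, β i = x := by
    intro x hx
    have hmp : Units.mk0 x hx ∈ Submonoid.powers α :=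
      mem_powers_iff_mem_zpowers.2 (hα (Units.mk0 x hx))
    obtain ⟨k, hk⟩ := Submonoid.mem_powers_iff _ _ |>.1 hmp
    refine ⟨⟨k % (3 ^ m - 1), Nat.mod_lt _ hpos⟩, ?_⟩
    have hk2 : α ^ (k % (3 ^ m - 1)) = Units.mk0 x hx := by
      rw [← hord, pow_mod_orderOf, hk]
    simpa [β] using congrArg Units.val hk2
  let φ : (Fin (3 ^ m - 1) → ZMod 3) →ₗ[ZMod 3] F × F :=
    (Fintype.linearCombination (ZMod 3) β).prod (Fintype.linearCombination (ZMod 3) (fun i => β i ^ v))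
  have hφ1 : ∀ c, (φ c).1 = ∑ i, algebraMap (ZMod 3) F (c i) * β i := by
    intro c
    simp [φ, Fintype.linearCombination_apply, Algebra.smul_def]
  have hφ2 : ∀ c, (φ c).2 = ∑ i, algebraMap (ZMod 3) F (c i) * β i ^ v := by
    intro c
    simp [φ, Fintype.linearCombination_apply, Algebra.smul_def]
  have hmem0 : ∀ c, c ∈ D ↔ φ c = 0 := by
    intro c
    rw [← SetLike.mem_coe, hD, Set.mem_setOf_eq, Prod.ext_iff, hφ1, hφ2]
    simp only [β, pow_mul, Prod.fst_zero, Prod.snd_zero]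
  have hφs : ∀ i s, φ (Pi.single i s) = (algebraMap (ZMod 3) F s * β i, algebraMap (ZMod 3) F s * β i ^ v) := by
    intro i s
    simp [φ, Algebra.smul_def]
  have hDφ : D = LinearMap.ker φ := by
    ext c; rw [hmem0, LinearMap.mem_ker]
  have hrange : LinearMap.range φ = ⊤ := by
    apply aux_surj hm hF hfr α hord v hv1 hv2
    intro g
    obtain ⟨i, hi⟩ := hsurj g g.ne_zero
    exact ⟨Pi.single i 1, by rw [hφs, hi]; simp⟩
  have hdim : Module.finrank (ZMod 3) D = (3 ^ m - 1) - 2 * m := by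
    have := LinearMap.finrank_range_add_finrank_ker φ
    rw [hrange, finrank_top, Module.finrank_prod, hfr, ← hDφ, Module.finrank_fin_fun] at this
    omega
  -- `m = 1` forces `v = 0`
  have hm1 : m = 1 → v = 0 := by
    rintro rfl
    have := hv1 0
    by_contra h0
    have : v = 1 := by norm_num at hv; omega
    exact hv1 0 (by subst this; rfl)
  have hv0 : v = 0 → m = 1 := by
    rintro rfl
    by_contra h
    have := hv2 0 1 hm (by omega) (by simp [Nat.ModEq])
    omega
  constructor
  · rintro ⟨-, hmin, c₄, -, -, hc4⟩
    have hv00 : v ≠ 0 := by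
      intro h
      have := hv0 h
      subst this
      have := hammingNorm_le_card_fintype (x := c₄)
      rw [hc4] at this
      norm_num at this
    have hev : Even v := by
      by_contra hodd
      rw [Nat.not_even_iff_odd] at hodd
      obtain ⟨i, hi⟩ := hsurj 1 one_ne_zero
      obtain ⟨j, hj⟩ := hsurj (-1) (by simp)
      have hij : i ≠ j := by
        rintro rfl; exact h1n (hi.symm.trans hj)
      have := hmin (Pi.single i 1 + Pi.single j 1)
        (by rw [hmem0, map_add, hφs, hφs, hi, hj]; simp [hodd.neg_pow])
        (by
          intro h
          have := congrFun h i
          simp [Pi.single_apply, hij] at this)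
      have hle : hammingNorm (Pi.single i 1 + Pi.single j 1 : Fin (3 ^ m - 1) → ZMod 3) ≤ 2 := by
        refine (Finset.card_le_card (t := {i, j}) ?_).trans Finset.card_le_two
        intro k hk
        simp only [Finset.mem_filter] at hk
        by_contra hk'
        simp only [Finset.mem_insert, Finset.mem_singleton, not_or] at hk'
        exact hk.2 (by simp [Pi.single_apply, hk'.1, hk'.2])
      omega
    -- no weight-three words
    have three : ∀ (x y z : F) (s : ZMod 3), x ≠ 0 → y ≠ 0 → z ≠ 0 → x ≠ y → x ≠ z → 
        x + y + algebraMap (ZMod 3) F s * z = 0 →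
        x ^ v + y ^ v + algebraMap (ZMod 3) F s * z ^ v = 0 → False := by
      intro x y z s hx hy hz hxy hxz e1 e2
      obtain ⟨i, hi⟩ := hsurj x hx
      obtain ⟨j, hj⟩ := hsurj y hy
      obtain ⟨k, hk⟩ := hsurj z hz
      have hij : i ≠ j := by
        rintro rfl; exact hxy (hi.symm.trans hj)
      have hik : i ≠ k := by
        rintro rfl; exact hxz (hi.symm.trans hk)
      have := hmin (Pi.single i 1 + Pi.single j 1 + Pi.single k s)
        (by rw [hmem0, map_add, map_add, hφs, hφs, hφs, hi, hj, hk]; simp [e1, e2])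
        (by
          intro h
          have := congrFun h i
          simp [Pi.single_apply, hij, hik] at this)
      have hle : hammingNorm (Pi.single i 1 + Pi.single j 1 + Pi.single k s :
          Fin (3 ^ m - 1) → ZMod 3) ≤ 3 := by
        refine (Finset.card_le_card (t := {i, j, k}) ?_).trans Finset.card_le_three
        intro l hl
        simp only [Finset.mem_filter] at hl
        by_contra hl'
        simp only [Finset.mem_insert, Finset.mem_singleton, not_or] at hl'
        exact hl.2 (by simp [Pi.single_apply, hl'.1, hl'.2.1, hl'.2.2])
      omega
    refine ⟨hev, fun x hx => ⟨fun h => ?_, ?_⟩, fun x => ⟨fun h => ?_, ?_⟩⟩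
    · by_contra hx1
      by_cases hxm : x = -1
      · subst hxm
        rw [hev.neg_pow] at h
        simp [hv00] at h
        exact h1n (by linear_combination h)
      refine three x 1 (-x - 1) 1 hx one_ne_zero ?_ hx1 ?_ (by simp) ?_
      · intro h'; exact hxm (by linear_combination -h')
      · intro h'; exact hx1 (by linear_combination -h' + x * h3)
      · simp; linear_combination h
    · rintro rfl
      have : (-1 - 1 : F) = 1 := by linear_combination -h3
      rw [this]; simp; linear_combination h3
    · by_contra hx0
      by_cases hxm : x = -1
      · subst hxm
        rw [hev.neg_pow] at h
        simp [hv00] at h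
        exact h1n (by linear_combination -h)
      by_cases hx1 : x = 1
      · subst hx1
        have : (1 + 1 : F) = -1 := by linear_combination h3
        rw [this, hev.neg_pow] at h
        simp at h
      refine three x 1 (x + 1) (-1) hx0 one_ne_zero ?_ hx1 ?_ (by simp) ?_
      · intro h'; exact hxm (by linear_combination h')
      · intro h'; exact one_ne_zero (α := F) (by linear_combination -h')
      · simp; linear_combination -h
    · rintro rfl
      simp [hv00]
  · rintro ⟨hev, h2, hh3⟩
    have hm2 : 2 ≤ m := by
      by_contra hlt
      have hv00 := hm1 (by omega)
      subst hv00
      exact h1n ((h2 (-1) (by simp)).1 (by simp; linear_combination h3)).symm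
    have hmin : ∀ c, c ∈ D → c ≠ 0 → 4 ≤ hammingNorm c := by
      intro c hc hc0
      rw [hmem0, Prod.ext_iff, hφ1, hφ2] at hc
      exact aux_min β hβ hβ0 v hev h2 hh3 h3 c hc0 hc.1 hc.2
    refine ⟨hdim, hmin, ?_⟩
    obtain ⟨c, hc, hc0, hle⟩ := aux_exists φ.toAddMonoidHom (by
      rw [Fintype.card_prod, hF]
      have h9 : 3 ^ 2 ≤ 3 ^ m := Nat.pow_le_pow_right (by norm_num) hm2
      obtain ⟨k, hk⟩ := Nat.exists_eq_add_of_le h9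
      rw [hk]
      have : 3 ^ 2 + k - 1 = 8 + k := by omega
      rw [this]
      nlinarith)
    have hcD : c ∈ D := (hmem0 c).2 hc
    exact ⟨c, hcD, hc0, le_antisymm hle (hmin c hcD hc0)⟩
end
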